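/- There exists a function β' : ℕ × ℕ → ℕ (independent of the prime p) with the following property: for every prime p and every n×n m-sparse polynomial system G over ℂ_p, the number of isolated roots x = (x_1,…,x_n) ∈ ℂ_p^n of G satisfying |x_i − 1|_p ≤ 1/p for all i is at most β'(n,m). -/

import Mathlib

/-!
Write `x = 1 + p u`, with `u` in the unit polydisc. Since `(1 + p u) ^ a = ∑ a (a-1) ⋯ (a-j+1) / j! *
p ^ j u ^ j`, a monomial of a sparse system is the value at `s = p` of a power series in `s` whose
`j`-th coefficient is a polynomial in `u` and in the exponent `a`, of degree `O(j)`, with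
denominator `j!`. The exponents, being integers, lie in the unit ball, and the coefficients of the
system may be scaled into it. Replacing both by indeterminates, one obtains a single finite family
of power series over a ring `B`, of which all `m`-sparse systems are specializations `B → ℂ_p`
mapping a noetherian subring `B₀` to the unit ball. The theorem thus follows from a uniform
finiteness statement for such families, `claim`.

The coefficients of the series are controlled by the ring `Lat`: the coefficient of `s ^ k` is a
polynomial of degree `O(k + 1)` with denominators dividing `den ε C k`. For `ε = 1` this is
`(C k)!`. By Legendre's formula `v_p((C k)!) ≤ C k / (p - 1)`, so evaluation at `s = p` converges for
`p > 2 C` (`good_of_large`), and one bound serves all large primes. For each of the finitely many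
remaining primes the base ring is `ℚ_p` with subring `ℤ_p`, and no denominators are allowed
(`ε = 0`). There `(1 + p u) ^ p = 1 + p² Y(u)` and `a = r + p q` with `r < p` are used, because
`p ^ j / j!` is a `p`-adic integer.

Uniform finiteness is proved by induction on the number of variables.

* Noetherianity of `B₀` implies that the coefficients (power series in `s`) of all monomials `X ^ ν`
  are combinations, with controlled denominators, of those with `ν` of degree at most some `d`
  (`exists_div`).
* For a specialization of the parameters, either all coefficients vanish, and there are no isolated
  zeros, or, after one of finitely many rescalings of the variables by powers of a root of `s`, one
  of the coefficients of degree at most `d` strictly dominates the others (`exists_gap`). Dividing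
  by it and replacing the small quotients by new indeterminates gives a new family, one of whose
  members has a monomial as constant term in `s` (`hasBound_of_dominant`).
* A linear change of variables makes this monomial monic in `X 0` (`hasBound_of_monomial`), and
  Weierstrass division (`weierstrass`) reduces to series that are polynomials in `X 0`.
* Then `X 0` is eliminated (`Iso.elim`, `hasBound_of_monic`): near an isolated zero a suitable minor
  of the matrix whose rank computes the degree of the gcd in `X 0` does not vanish, and its bordered
  minors, which are series in the other variables, define a set in which the projection of the zero
  is isolated. Each fibre of the projection has at most as many points as the degree in `X 0`.
-/

open MvPolynomial Filter Topology

/-- The zero set in `F^n` of a `k`-tuple of `n`-variate polynomials. -/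
def zeroSet {F : Type*} [CommSemiring F] {k n : ℕ}
    (G : Fin k → MvPolynomial (Fin n) F) : Set (Fin n → F) :=
  {x | ∀ i, MvPolynomial.eval x (G i) = 0}

/-- `ζ` is an isolated root of the system `G`: it is a root, and an isolated point of the
zero set of `G` in the metric topology. -/
def IsIsolatedRoot {F : Type*} [NormedField F] {k n : ℕ}
    (G : Fin k → MvPolynomial (Fin n) F) (ζ : Fin n → F) : Prop :=
  ζ ∈ zeroSet G ∧ 𝓝[zeroSet G \ {ζ}] ζ = ⊥

/-- A `k × n` `m`-sparse polynomial system: all the `gᵢ` are nonzero and the union of their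
supports has exactly `m` elements. -/
def IsSparseSystem {F : Type*} [CommSemiring F] {k n : ℕ}
    (G : Fin k → MvPolynomial (Fin n) F) (m : ℕ) : Prop :=
  (∀ i, G i ≠ 0) ∧ (Finset.univ.biUnion fun i => (G i).support).card = m

/-- The property that `β' : ℕ × ℕ → ℕ` bounds (independently of the prime `p`) the number of
isolated roots `x ∈ ℂ_pⁿ` of an `n × n` `m`-sparse polynomial system over `ℂ_p` satisfying
`|xᵢ - 1|_p ≤ 1/p` for all `i`.  Here `Cp` ranges over all fields satisfying the
characterizing axioms of `ℂ_p`. -/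
def LipshitzBound (β' : ℕ × ℕ → ℕ) : Prop :=
  ∀ (p : ℕ) (_ : Fact p.Prime)
    (Cp : Type) (_ : NormedField Cp) (_ : IsUltrametricDist Cp)
    (_ : CompleteSpace Cp) (_ : IsAlgClosed Cp) (_ : Algebra ℚ_[p] Cp)
    (_ : Isometry (algebraMap ℚ_[p] Cp))
    (_ : Dense {x : Cp | IsAlgebraic ℚ_[p] x})
    (n m : ℕ) (G : Fin n → MvPolynomial (Fin n) Cp), IsSparseSystem G m →
      {x : Fin n → Cp | IsIsolatedRoot G x ∧ ∀ i, ‖x i - 1‖ ≤ 1 / (p : ℝ)}.Finite ∧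
      ({x : Fin n → Cp | IsIsolatedRoot G x ∧ ∀ i, ‖x i - 1‖ ≤ 1 / (p : ℝ)}.ncard : ℝ) ≤
        β' (n, m)

set_option linter.unusedSectionVars false
set_option linter.style.haveILetI false

namespace Lipshitz

/-! ### Denominators and integrality -/

/-- The denominators allowed in degree `k`: `(C k)!` when `ε = 1`, and `1` when `ε = 0`. -/
def den (ε C k : ℕ) : ℕ := ((C * k).factorial) ^ ε

lemma den_zero (ε C : ℕ) : den ε C 0 = 1 := by simp [den]

lemma den_ne_zero (ε C k : ℕ) : den ε C k ≠ 0 := pow_ne_zero _ (Nat.factorial_ne_zero _)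

lemma den_mul_dvd (ε C i j : ℕ) : den ε C i * den ε C j ∣ den ε C (i + j) := by
  unfold den
  rw [← mul_pow, Nat.mul_add]
  exact pow_dvd_pow_of_dvd (Nat.factorial_mul_factorial_dvd_factorial_add _ _) _

lemma den_dvd (ε : ℕ) {C C' k k' : ℕ} (hC : C ≤ C') (hk : k ≤ k') :
    den ε C k ∣ den ε C' k' :=
  pow_dvd_pow_of_dvd (Nat.factorial_dvd_factorial (Nat.mul_le_mul hC hk)) _

lemma den_scale (ε C c k : ℕ) : den ε C (c * k) = den ε (C * c) k := by
  simp [den, mul_assoc]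

lemma den_pow_dvd (ε C k L : ℕ) : den ε C k ^ L ∣ den ε (C * L) k := by
  rw [← den_scale]
  induction L with
  | zero => simp
  | succ L ih =>
    rw [pow_succ, Nat.succ_mul]
    exact (Nat.mul_dvd_mul_right ih _).trans (den_mul_dvd _ _ _ _)

section Integrality

variable {B : Type*} [CommRing B] (B₀ : Subring B) (ε : ℕ)

/-- `b` has denominator dividing `den ε C k` with respect to the subring `B₀`. -/
def DI (C k : ℕ) (b : B) : Prop := (den ε C k : B) * b ∈ B₀

variable {B₀ ε}

lemma DI.mono {C C' k k' : ℕ} {b : B} (h : DI B₀ ε C k b) (hC : C ≤ C') (hk : k ≤ k') :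
    DI B₀ ε C' k' b := by
  obtain ⟨c, hc⟩ := den_dvd ε hC hk
  unfold DI at *
  rw [hc, Nat.cast_mul, mul_comm _ (c : B), mul_assoc]
  exact B₀.mul_mem (natCast_mem _ _) h

lemma DI.zero (C k : ℕ) : DI B₀ ε C k (0 : B) := by simp [DI]

lemma DI.add {C k : ℕ} {a b : B} (ha : DI B₀ ε C k a) (hb : DI B₀ ε C k b) :
    DI B₀ ε C k (a + b) := by
  unfold DI at *; rw [mul_add]; exact B₀.add_mem ha hb

lemma DI.neg {C k : ℕ} {a : B} (ha : DI B₀ ε C k a) : DI B₀ ε C k (-a) := by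
  unfold DI at *; rw [mul_neg]; exact B₀.neg_mem ha

lemma DI.sub {C k : ℕ} {a b : B} (ha : DI B₀ ε C k a) (hb : DI B₀ ε C k b) :
    DI B₀ ε C k (a - b) := by
  rw [sub_eq_add_neg]; exact ha.add hb.neg

lemma DI.mul {C i j : ℕ} {a b : B} (ha : DI B₀ ε C i a) (hb : DI B₀ ε C j b) :
    DI B₀ ε C (i + j) (a * b) := by
  obtain ⟨c, hc⟩ := den_mul_dvd ε C i j
  unfold DI at *
  have : ((den ε C (i + j) : ℕ) : B) * (a * b)
      = (c : B) * (((den ε C i : ℕ) : B) * a * (((den ε C j : ℕ) : B) * b)) := by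
    rw [hc]; push_cast; ring
  rw [this]
  exact B₀.mul_mem (natCast_mem _ _) (B₀.mul_mem ha hb)

lemma DI.sum {C k : ℕ} {ι : Type*} {s : Finset ι} {f : ι → B}
    (h : ∀ i ∈ s, DI B₀ ε C k (f i)) : DI B₀ ε C k (∑ i ∈ s, f i) := by
  unfold DI at *; rw [Finset.mul_sum]; exact B₀.sum_mem h

lemma DI.of_mem {C k : ℕ} {b : B} (h : b ∈ B₀) : DI B₀ ε C k b :=
  B₀.mul_mem (natCast_mem _ _) h

lemma DI_zero_iff {C : ℕ} {b : B} : DI B₀ ε C 0 b ↔ b ∈ B₀ := by simp [DI, den_zero]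

variable (B₀ ε) in
/-- The polynomial `q` has degree at most `m` and coefficients with denominator `den ε C k`. -/
def PI {σ : Type*} (C k m : ℕ) (q : MvPolynomial σ B) : Prop :=
  ∀ ν, DI B₀ ε C k (coeff ν q) ∧ (coeff ν q ≠ 0 → ν.degree ≤ m)

variable {σ : Type*}

lemma PI.mono {C C' k k' m m' : ℕ} {q : MvPolynomial σ B} (h : PI B₀ ε C k m q) (hC : C ≤ C')
    (hk : k ≤ k') (hm : m ≤ m') : PI B₀ ε C' k' m' q :=
  fun ν => ⟨(h ν).1.mono hC hk, fun h0 => ((h ν).2 h0).trans hm⟩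

lemma PI.zero (C k m : ℕ) : PI B₀ ε C k m (0 : MvPolynomial σ B) :=
  fun ν => ⟨by simpa using DI.zero C k, by simp⟩

lemma PI.add {C k m : ℕ} {p q : MvPolynomial σ B} (hp : PI B₀ ε C k m p)
    (hq : PI B₀ ε C k m q) : PI B₀ ε C k m (p + q) := by
  intro ν
  rw [coeff_add]
  refine ⟨(hp ν).1.add (hq ν).1, fun h => ?_⟩
  by_cases h1 : coeff ν p = 0
  · exact (hq ν).2 (by simpa [h1] using h)
  · exact (hp ν).2 h1

lemma PI.neg {C k m : ℕ} {p : MvPolynomial σ B} (hp : PI B₀ ε C k m p) :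
    PI B₀ ε C k m (-p) := by
  intro ν
  rw [coeff_neg]
  exact ⟨(hp ν).1.neg, fun h => (hp ν).2 (by simpa using h)⟩

lemma PI.sub {C k m : ℕ} {p q : MvPolynomial σ B} (hp : PI B₀ ε C k m p)
    (hq : PI B₀ ε C k m q) : PI B₀ ε C k m (p - q) := by
  rw [sub_eq_add_neg]; exact hp.add hq.neg

lemma PI.sum {C k m : ℕ} {ι : Type*} {s : Finset ι} {f : ι → MvPolynomial σ B}
    (h : ∀ i ∈ s, PI B₀ ε C k m (f i)) : PI B₀ ε C k m (∑ i ∈ s, f i) := by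
  classical
  induction s using Finset.induction_on with
  | empty => simpa using PI.zero C k m
  | insert a s ha ih =>
    rw [Finset.sum_insert ha]
    exact (h a (by simp)).add (ih fun i hi => h i (by simp [hi]))

lemma PI.mul {C k k' m m' : ℕ} {p q : MvPolynomial σ B} (hp : PI B₀ ε C k m p)
    (hq : PI B₀ ε C k' m' q) : PI B₀ ε C (k + k') (m + m') (p * q) := by
  classical
  intro ν
  rw [coeff_mul]
  refine ⟨DI.sum fun x _ => (hp _).1.mul (hq _).1, fun h => ?_⟩
  obtain ⟨x, hx, hne⟩ := Finset.exists_ne_zero_of_sum_ne_zero h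
  rw [Finset.HasAntidiagonal.mem_antidiagonal] at hx
  rw [← hx, map_add]
  exact add_le_add ((hp _).2 (left_ne_zero_of_mul hne)) ((hq _).2 (right_ne_zero_of_mul hne))

lemma PI.monomial {C k m : ℕ} {ν : σ →₀ ℕ} {b : B} (hb : DI B₀ ε C k b)
    (hν : b ≠ 0 → ν.degree ≤ m) : PI B₀ ε C k m (MvPolynomial.monomial ν b) := by
  classical
  intro μ
  rw [coeff_monomial]
  split_ifs with h
  · subst h; exact ⟨hb, hν⟩
  · exact ⟨DI.zero _ _, by simp⟩

lemma PI.C {C k m : ℕ} {b : B} (hb : DI B₀ ε C k b) :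
    PI B₀ ε C k m (MvPolynomial.C b : MvPolynomial σ B) :=
  PI.monomial hb (by simp)

lemma PI.one (C k m : ℕ) : PI B₀ ε C k m (1 : MvPolynomial σ B) := by
  rw [← MvPolynomial.C_1]; exact PI.C (DI.of_mem B₀.one_mem)

lemma PI.X (C k : ℕ) (i : σ) : PI B₀ ε C k 1 (MvPolynomial.X i : MvPolynomial σ B) :=
  PI.monomial (DI.of_mem B₀.one_mem) (by simp)

lemma PI.pow {C m : ℕ} {p : MvPolynomial σ B} (hp : PI B₀ ε C 0 m p) (r : ℕ) :
    PI B₀ ε C 0 (r * m) (p ^ r) := by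
  induction r with
  | zero => simpa using PI.one C 0 (0 * m)
  | succ r ih => rw [pow_succ, Nat.succ_mul]; exact ih.mul hp

lemma PI.prod {C : ℕ} {ι : Type*} {s : Finset ι} {m : ι → ℕ} {f : ι → MvPolynomial σ B}
    (h : ∀ i ∈ s, PI B₀ ε C 0 (m i) (f i)) :
    PI B₀ ε C 0 (∑ i ∈ s, m i) (∏ i ∈ s, f i) := by
  classical
  induction s using Finset.induction_on with
  | empty => simpa using PI.one C 0 0
  | insert a s ha ih =>
    rw [Finset.prod_insert ha, Finset.sum_insert ha]
    exact (h a (by simp)).mul (ih fun i hi => h i (by simp [hi]))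

variable (B₀ ε) in
/-- The ring of power series `∑ q_k s^k` whose coefficients `q_k` are polynomials of degree
`O(k + 1)` with denominators dividing `den ε C k`. -/
def Lat (C : ℕ) (σ : Type*) : Subring (PowerSeries (MvPolynomial σ B)) where
  carrier := {f | ∃ E, ∀ k, PI B₀ ε C k (E * (k + 1)) (PowerSeries.coeff k f)}
  zero_mem' := ⟨0, fun k => by simpa using PI.zero C k _⟩
  one_mem' := ⟨0, fun k => by
    classical
    rw [PowerSeries.coeff_one]
    split_ifs
    · exact PI.one _ _ _
    · exact PI.zero _ _ _⟩
  add_mem' := by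
    rintro f g ⟨E, hE⟩ ⟨E', hE'⟩
    refine ⟨E + E', fun k => ?_⟩
    rw [map_add]
    exact ((hE k).mono le_rfl le_rfl (by gcongr; omega)).add
      ((hE' k).mono le_rfl le_rfl (by gcongr; omega))
  neg_mem' := by
    rintro f ⟨E, hE⟩
    exact ⟨E, fun k => by rw [map_neg]; exact (hE k).neg⟩
  mul_mem' := by
    classical
    rintro f g ⟨E, hE⟩ ⟨E', hE'⟩
    refine ⟨E + E', fun k => ?_⟩
    rw [PowerSeries.coeff_mul]
    refine PI.sum fun x hx => ?_
    rw [Finset.HasAntidiagonal.mem_antidiagonal] at hx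
    refine ((hE x.1).mul (hE' x.2)).mono le_rfl hx.le ?_
    rw [add_mul]
    gcongr <;> omega

lemma mem_Lat {C : ℕ} {f : PowerSeries (MvPolynomial σ B)} :
    f ∈ Lat B₀ ε C σ ↔ ∃ E, ∀ k, PI B₀ ε C k (E * (k + 1)) (PowerSeries.coeff k f) := Iff.rfl

lemma Lat_mono {C C' : ℕ} (h : C ≤ C') : Lat B₀ ε C σ ≤ Lat B₀ ε C' σ := by
  rintro f ⟨E, hE⟩
  exact ⟨E, fun k => (hE k).mono h le_rfl le_rfl⟩

end Integrality

/-! ### Evaluation of power series -/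

section Eval

variable {K : Type*} [NormedField K] {A : Type*} [CommRing A]

/-- The value at `s` of the power series obtained from `f` by applying `E` to its
coefficients. -/
noncomputable def pev (E : A →+* K) (s : K) (f : PowerSeries A) : K :=
  ∑' k, E (PowerSeries.coeff k f) * s ^ k

/-- Absolute convergence of `pev E s f`. -/
def NS (E : A →+* K) (s : K) (f : PowerSeries A) : Prop :=
  Summable fun k => ‖E (PowerSeries.coeff k f) * s ^ k‖

/-- The terms of `pev E s f` decay geometrically. -/
def NB (E : A →+* K) (s : K) (f : PowerSeries A) : Prop :=
  ∀ k, ‖E (PowerSeries.coeff k f) * s ^ k‖ ≤ (√‖s‖) ^ k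

lemma sqrt_lt_one {x : ℝ} (h : x < 1) : √x < 1 := by
  rw [Real.sqrt_lt' one_pos]; simpa using h

lemma NB.ns {E : A →+* K} {s : K} {f : PowerSeries A} (hs : ‖s‖ < 1) (h : NB E s f) :
    NS E s f :=
  Summable.of_nonneg_of_le (fun _ => norm_nonneg _) h
    (summable_geometric_of_lt_one (Real.sqrt_nonneg _) (sqrt_lt_one hs))

lemma pev_C (E : A →+* K) (s : K) (a : A) : pev E s (PowerSeries.C a) = E a := by
  unfold pev
  rw [tsum_eq_single 0]
  · simp
  · intro k hk
    simp [PowerSeries.coeff_C, hk]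

lemma pev_zero (E : A →+* K) (s : K) : pev E s 0 = 0 := by simp [pev]

lemma pev_one (E : A →+* K) (s : K) : pev E s 1 = 1 := by
  have := pev_C E s 1
  simpa using this

lemma pev_X_pow_mul (E : A →+* K) (s : K) (a : ℕ) (f : PowerSeries A) :
    pev E s (PowerSeries.X ^ a * f) = s ^ a * pev E s f := by
  unfold pev
  rw [← tsum_mul_left, ← (add_left_injective a).tsum_eq]
  · congr 1; ext k
    simp only [PowerSeries.coeff_X_pow_mul]
    rw [pow_add]; ring
  · intro k hk
    rw [Function.mem_support, PowerSeries.coeff_X_pow_mul'] at hk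
    by_cases h : a ≤ k
    · exact ⟨k - a, Nat.sub_add_cancel h⟩
    · simp [h] at hk

lemma pev_expand (E : A →+* K) (s : K) (L : ℕ) (hL : L ≠ 0) (f : PowerSeries A) :
    pev E s (PowerSeries.expand L hL f) = pev E (s ^ L) f := by
  unfold pev
  rw [← (mul_right_injective₀ hL).tsum_eq]
  · congr 1; ext k
    simp only [PowerSeries.coeff_expand_mul]
    rw [← pow_mul]
  · intro k hk
    rw [Function.mem_support, PowerSeries.coeff_expand] at hk
    by_cases h : L ∣ k
    · obtain ⟨c, rfl⟩ := h
      exact ⟨c, rfl⟩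
    · simp [h] at hk

lemma pev_map {A' : Type*} [CommRing A'] (E : A' →+* K) (ψ : A →+* A') (s : K)
    (f : PowerSeries A) : pev E s (PowerSeries.map ψ f) = pev (E.comp ψ) s f := by
  simp [pev]

section Complete

variable [CompleteSpace K]

lemma pev_add {E : A →+* K} {s : K} {f g : PowerSeries A} (hf : NS E s f) (hg : NS E s g) :
    pev E s (f + g) = pev E s f + pev E s g := by
  unfold pev
  rw [← hf.of_norm.tsum_add hg.of_norm]
  congr 1; ext k
  rw [map_add, map_add, add_mul]

lemma pev_mul {E : A →+* K} {s : K} {f g : PowerSeries A} (hf : NS E s f) (hg : NS E s g) :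
    pev E s (f * g) = pev E s f * pev E s g := by
  unfold pev
  rw [tsum_mul_tsum_eq_tsum_sum_antidiagonal_of_summable_norm hf hg]
  congr 1; ext k
  rw [PowerSeries.coeff_mul, map_sum, Finset.sum_mul]
  refine Finset.sum_congr rfl fun x hx => ?_
  rw [Finset.HasAntidiagonal.mem_antidiagonal] at hx
  rw [map_mul, ← hx, pow_add]; ring

lemma pev_sum {E : A →+* K} {s : K} {ι : Type*} {t : Finset ι} {f : ι → PowerSeries A}
    (hf : ∀ i ∈ t, NS E s (f i)) : pev E s (∑ i ∈ t, f i) = ∑ i ∈ t, pev E s (f i) := by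
  unfold pev
  rw [← Summable.tsum_finsetSum fun i hi => (hf i hi).of_norm]
  congr 1; ext k
  rw [map_sum, map_sum, Finset.sum_mul]

end Complete

section Ultrametric

variable [IsUltrametricDist K]

lemma NB.norm_le_one {E : A →+* K} {s : K} {f : PowerSeries A} (hs : ‖s‖ < 1)
    (h : NB E s f) : ‖pev E s f‖ ≤ 1 := by
  refine IsUltrametricDist.norm_tsum_le_of_forall_le_of_nonneg zero_le_one fun k => ?_
  exact (h k).trans (pow_le_one₀ (Real.sqrt_nonneg _) (sqrt_lt_one hs).le)

end Ultrametric

end Eval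

/-! ### The evaluation homomorphisms of `Lat` -/

section Good

variable {K : Type*} [NormedField K]

/-- The element `s` is small enough to absorb the denominators `den ε C k`. Because of the square,
half of the factor `s ^ k` is left over for convergence. -/
structure Good (ε C : ℕ) (s : K) : Prop where
  pos : 0 < ‖s‖
  lt_one : ‖s‖ < 1
  den_le : ∀ k, ‖s‖ ^ k ≤ ‖(den ε C k : K)‖ ^ 2

variable [IsUltrametricDist K]

lemma norm_natCast_le_of_dvd {a b : ℕ} (h : a ∣ b) : ‖(b : K)‖ ≤ ‖(a : K)‖ := by
  obtain ⟨c, rfl⟩ := h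
  rw [Nat.cast_mul, norm_mul]
  exact mul_le_of_le_one_right (norm_nonneg _) (IsUltrametricDist.norm_natCast_le_one K c)

lemma Good.mono {ε C C' : ℕ} {s : K} (h : Good ε C' s) (hC : C ≤ C') : Good ε C s :=
  ⟨h.pos, h.lt_one, fun k => (h.den_le k).trans
    (by gcongr; exact norm_natCast_le_of_dvd (den_dvd ε hC le_rfl))⟩

lemma Good.root {ε C L : ℕ} {s ϖ : K} (hL : L ≠ 0) (hϖ : ϖ ^ L = s) (h : Good ε (C * L) s) :
    Good ε C ϖ := by
  subst hϖ
  have hp := h.pos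
  have hl := h.lt_one
  rw [norm_pow] at hp hl
  refine ⟨?_, ?_, fun k => ?_⟩
  · by_contra h0
    have : ‖ϖ‖ = 0 := le_antisymm (not_lt.mp h0) (norm_nonneg _)
    simp [this, hL] at hp
  · exact (pow_lt_one_iff_of_nonneg (norm_nonneg _) hL).mp hl
  · have h1 := h.den_le k
    have h2 : ‖((den ε (C * L) k : ℕ) : K)‖ ≤ ‖((den ε C k : ℕ) : K)‖ ^ L := by
      have := norm_natCast_le_of_dvd (K := K) (den_pow_dvd ε C k L)
      simpa using this
    have h3 : (‖ϖ‖ ^ k) ^ L ≤ (‖((den ε C k : ℕ) : K)‖ ^ 2) ^ L := by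
      calc (‖ϖ‖ ^ k) ^ L = ‖ϖ ^ L‖ ^ k := by rw [norm_pow, ← pow_mul, ← pow_mul, mul_comm]
        _ ≤ ‖((den ε (C * L) k : ℕ) : K)‖ ^ 2 := h1
        _ ≤ (‖((den ε C k : ℕ) : K)‖ ^ L) ^ 2 := by gcongr
        _ = _ := by rw [← pow_mul, ← pow_mul, mul_comm]
    exact (pow_le_pow_iff_left₀ (by positivity) (by positivity) hL).mp h3

/-- Terms with denominator `den ε C k` decay geometrically. -/
lemma Good.term_le {ε C k : ℕ} {s x : K} (h : Good ε C s)
    (hx : ‖(den ε C k : K)‖ * ‖x‖ ≤ 1) : ‖x * s ^ k‖ ≤ (√‖s‖) ^ k := by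
  set D := ‖(den ε C k : K)‖ with hD
  have hpos : 0 < √‖s‖ ^ k := pow_pos (Real.sqrt_pos.mpr h.pos) _
  have h1 : (√‖s‖ ^ k) ^ 2 ≤ D ^ 2 := by
    rw [← pow_mul, mul_comm, pow_mul, Real.sq_sqrt h.pos.le]
    exact h.den_le k
  have h2 : √‖s‖ ^ k ≤ D := (pow_le_pow_iff_left₀ hpos.le (norm_nonneg _) two_ne_zero).mp h1
  have h3 : ‖s‖ ^ k = √‖s‖ ^ k * √‖s‖ ^ k := by
    rw [← mul_pow, Real.mul_self_sqrt h.pos.le]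
  rw [norm_mul, norm_pow, h3, ← mul_assoc]
  refine mul_le_of_le_one_left hpos.le ?_
  calc ‖x‖ * √‖s‖ ^ k ≤ ‖x‖ * D := by gcongr
    _ ≤ 1 := by rw [mul_comm]; exact hx

variable {B : Type*} [CommRing B] {B₀ : Subring B} {ε : ℕ} {φ : B →+* K}

lemma DI.norm_le {C k : ℕ} {b : B} (hφ : ∀ b ∈ B₀, ‖φ b‖ ≤ 1) (h : DI B₀ ε C k b) :
    ‖(den ε C k : K)‖ * ‖φ b‖ ≤ 1 := by
  have := hφ _ h
  simpa using this

lemma PI.norm_le {σ : Type*} {C k m : ℕ} {q : MvPolynomial σ B} {v : σ → K}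
    (hφ : ∀ b ∈ B₀, ‖φ b‖ ≤ 1) (hv : ∀ i, ‖v i‖ ≤ 1) (h : PI B₀ ε C k m q) :
    ‖(den ε C k : K)‖ * ‖eval₂Hom φ v q‖ ≤ 1 := by
  rw [← norm_mul, coe_eval₂Hom, eval₂_eq, Finset.mul_sum]
  refine IsUltrametricDist.norm_sum_le_of_forall_le_of_nonneg zero_le_one fun ν _ => ?_
  rw [← mul_assoc, norm_mul, norm_mul]
  refine mul_le_one₀ ((h ν).1.norm_le hφ) (norm_nonneg _) ?_
  rw [norm_prod]
  refine Finset.prod_le_one (fun _ _ => norm_nonneg _) fun i _ => ?_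
  rw [norm_pow]
  exact pow_le_one₀ (norm_nonneg _) (hv i)

lemma Lat.nb {σ : Type*} {C : ℕ} {s : K} {v : σ → K} {f : PowerSeries (MvPolynomial σ B)}
    (hs : Good ε C s) (hφ : ∀ b ∈ B₀, ‖φ b‖ ≤ 1) (hv : ∀ i, ‖v i‖ ≤ 1)
    (hf : f ∈ Lat B₀ ε C σ) : NB (eval₂Hom φ v) s f := by
  obtain ⟨E, hE⟩ := hf
  exact fun k => hs.term_le ((hE k).norm_le hφ hv)

variable [CompleteSpace K]

/-- Evaluation at `s`, `v` as a ring homomorphism on `Lat`. -/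
noncomputable def evHom {σ : Type*} {C : ℕ} {s : K} {v : σ → K}
    (hs : Good ε C s) (hφ : ∀ b ∈ B₀, ‖φ b‖ ≤ 1) (hv : ∀ i, ‖v i‖ ≤ 1) :
    Lat B₀ ε C σ →+* K where
  toFun f := pev (eval₂Hom φ v) s f
  map_one' := pev_one _ _
  map_zero' := pev_zero _ _
  map_add' f g := pev_add ((Lat.nb hs hφ hv f.2).ns hs.lt_one) ((Lat.nb hs hφ hv g.2).ns hs.lt_one)
  map_mul' f g := pev_mul ((Lat.nb hs hφ hv f.2).ns hs.lt_one) ((Lat.nb hs hφ hv g.2).ns hs.lt_one)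

lemma continuousOn_pev {σ : Type*} [Fintype σ] {C : ℕ} {s : K}
    {f : PowerSeries (MvPolynomial σ B)}
    (hs : Good ε C s) (hφ : ∀ b ∈ B₀, ‖φ b‖ ≤ 1) (hf : f ∈ Lat B₀ ε C σ) :
    ContinuousOn (fun v : σ → K => pev (eval₂Hom φ v) s f) {v | ∀ i, ‖v i‖ ≤ 1} := by
  refine continuousOn_tsum (u := fun k => (√‖s‖) ^ k) ?_
    (summable_geometric_of_lt_one (Real.sqrt_nonneg _) (sqrt_lt_one hs.lt_one))
    fun k v hv => Lat.nb hs hφ hv hf k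
  intro k
  refine Continuous.continuousOn ?_
  simp only [coe_eval₂Hom, eval₂_eq]
  fun_prop

end Good

/-! ### Isolated points -/

section Isolated

/-- `z` is an isolated point of `Z`. -/
def Iso {X : Type*} [TopologicalSpace X] (Z : Set X) (z : X) : Prop :=
  z ∈ Z ∧ ∀ᶠ w in 𝓝 z, w ∈ Z → w = z

/-- Isolated points are transported along a map which is injective and continuous in the
inverse direction. -/
lemma Iso.transfer {X Y : Type*} [TopologicalSpace X] [TopologicalSpace Y] {Z : Set X}
    {Z' : Set Y} {z' : Y} {ψ : Y → X} (hψ : Function.Injective ψ) (hc : ContinuousAt ψ z')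
    (hz' : z' ∈ Z') (hZ : ∀ᶠ w in 𝓝 z', w ∈ Z' → ψ w ∈ Z) (h : Iso Z (ψ z')) : Iso Z' z' := by
  refine ⟨hz', ?_⟩
  filter_upwards [hc.eventually h.2, hZ] with w h1 h2 hw
  exact hψ (h1 (h2 hw))

variable {K : Type*} [NormedField K]

/-- The common zeros, in the unit polydisc, of a family of power series. -/
def Zset {B : Type*} [CommRing B] {ι σ : Type*} (s : K) (φ : B →+* K)
    (f : ι → PowerSeries (MvPolynomial σ B)) : Set (σ → K) :=
  {u | (∀ i, ‖u i‖ ≤ 1) ∧ ∀ i, pev (eval₂Hom φ u) s (f i) = 0}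

/-- The unit polydisc is open. -/
lemma eventually_polydisc [IsUltrametricDist K] {σ : Type*} [Finite σ] {u : σ → K}
    (hu : ∀ i, ‖u i‖ ≤ 1) : ∀ᶠ w in 𝓝 u, ∀ i, ‖w i‖ ≤ 1 := by
  rw [Filter.eventually_all]
  intro i
  have h1 : ∀ᶠ x in 𝓝 (u i), ‖x‖ ≤ 1 := by
    filter_upwards [Metric.ball_mem_nhds (u i) one_pos] with x hx
    have h2 : ‖x - u i‖ ≤ 1 := by rw [← dist_eq_norm]; exact (Metric.mem_ball.mp hx).le
    have := IsUltrametricDist.norm_add_le_max (x - u i) (u i)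
    rw [sub_add_cancel] at this
    exact this.trans (max_le h2 (hu i))
  exact (continuous_apply i).continuousAt.eventually h1

end Isolated

/-! ### Common roots and bordered minors -/

section LinearAlgebra

variable {F : Type*} [Field F]

/-- If the bordered minors of an invertible minor vanish, the columns of the minor span all
columns. -/
lemma bordered {α β : Type*} {ρ : ℕ} (M : α → β → F) (rows : Fin ρ → α) (cols : Fin ρ → β)
    (hA : (Matrix.of fun a b => M (rows a) (cols b)).det ≠ 0) (r : α) (c : β)
    (h : (Matrix.of fun a b : Fin ρ ⊕ Unit =>
      M (Sum.elim rows (fun _ => r) a) (Sum.elim cols (fun _ => c) b)).det = 0) :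
    M r c = ∑ a, (∑ b, M r (cols b) * (Matrix.of fun a b => M (rows a) (cols b)).adjugate b a) /
      (Matrix.of fun a b => M (rows a) (cols b)).det * M (rows a) c := by
  set A : Matrix (Fin ρ) (Fin ρ) F := Matrix.of fun a b => M (rows a) (cols b) with hAdef
  have hu : IsUnit A.det := isUnit_iff_ne_zero.mpr hA
  letI := A.invertibleOfIsUnitDet hu
  have h1 : (Matrix.of fun a b : Fin ρ ⊕ Unit =>
      M (Sum.elim rows (fun _ => r) a) (Sum.elim cols (fun _ => c) b)) =
      Matrix.fromBlocks A (Matrix.of fun a (_ : Unit) => M (rows a) c)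
        (Matrix.of fun (_ : Unit) b => M r (cols b)) (Matrix.of fun _ _ => M r c) := by
    ext (a | a) (b | b) <;> simp [A]
  rw [h1, Matrix.det_fromBlocks₁₁] at h
  have h2 := (mul_eq_zero.mp h).resolve_left hA
  rw [Matrix.det_unique, Matrix.sub_apply, sub_eq_zero, Matrix.invOf_eq_nonsing_inv,
    Matrix.inv_def, Ring.inverse_eq_inv'] at h2
  simp only [Matrix.of_apply, Matrix.mul_apply, Matrix.smul_apply, smul_eq_mul] at h2
  rw [h2]
  refine Finset.sum_congr rfl fun a _ => ?_
  congr 1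
  rw [div_eq_mul_inv, Finset.sum_mul]
  exact Finset.sum_congr rfl fun b _ => by ring

/-- The same relation for every vector in the span of the columns. -/
lemma bordered_span {α β : Type*} {ρ : ℕ} (M : α → β → F) (rows : Fin ρ → α) (t : α → Fin ρ → F)
    (h : ∀ r c, M r c = ∑ a, t r a * M (rows a) c) {v : α → F}
    (hv : v ∈ Submodule.span F (Set.range fun c r => M r c)) (r : α) :
    v r = ∑ a, t r a * v (rows a) := by
  induction hv using Submodule.span_induction with
  | mem x hx => obtain ⟨c, rfl⟩ := hx; exact h r c
  | zero => simp
  | add x y _ _ hx hy => simp only [Pi.add_apply, hx, hy, mul_add, Finset.sum_add_distrib]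
  | smul a x _ hx =>
    simp only [Pi.smul_apply, smul_eq_mul]
    rw [hx, Finset.mul_sum]
    exact Finset.sum_congr rfl fun b _ => by ring

/-- Modulo a monic polynomial `P` of degree `e`, the ideal generated by `P` and the `f i` is
spanned by the remainders of `X ^ j * f i` with `j < e`. -/
lemma mem_span_columns {ι : Type*} {P : Polynomial F} {e : ℕ} (hP : P.Monic)
    (he : P.natDegree = e) (f : ι → Polynomial F) {q : Polynomial F}
    (hq : q ∈ Ideal.span (insert P (Set.range f))) :
    (fun k : Fin e => (q %ₘ P).coeff k) ∈ Submodule.span F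
      (Set.range fun (c : ι × Fin e) (k : Fin e) =>
        ((Polynomial.X ^ (c.2 : ℕ) * f c.1) %ₘ P).coeff k) := by
  set V := Submodule.span F
      (Set.range fun (c : ι × Fin e) (k : Fin e) =>
        ((Polynomial.X ^ (c.2 : ℕ) * f c.1) %ₘ P).coeff k) with hV
  let T : Polynomial F →ₗ[F] (Fin e → F) :=
    (LinearMap.pi fun k : Fin e => Polynomial.lcoeff F k) ∘ₗ Polynomial.modByMonicHom P
  have hT : ∀ q, T q = fun k : Fin e => (q %ₘ P).coeff k := fun q => rfl
  have key : ∀ a, T (a * q) ∈ V := by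
    induction hq using Submodule.span_induction with
    | mem x hx =>
      intro a
      rcases hx with rfl | ⟨i, rfl⟩
      · have : T (a * x) = 0 := by
          rw [hT]; ext k
          rw [(Polynomial.modByMonic_eq_zero_iff_dvd hP).mpr (Dvd.intro_left a rfl)]; simp
        rw [this]; exact V.zero_mem
      · have h1 : T (a * f i) = T ((a %ₘ P) * f i) := by
          rw [hT, hT]
          have : (a * f i) %ₘ P = ((a %ₘ P) * f i) %ₘ P := by
            rw [← sub_eq_zero, ← Polynomial.sub_modByMonic,
              Polynomial.modByMonic_eq_zero_iff_dvd hP, ← sub_mul]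
            refine Dvd.dvd.mul_right ⟨a /ₘ P, ?_⟩ _
            rw [sub_eq_iff_eq_add, add_comm]
            exact (Polynomial.modByMonic_add_div a P).symm
          rw [this]
        have h2 : a %ₘ P = ∑ j ∈ Finset.range e, Polynomial.C ((a %ₘ P).coeff j) *
            Polynomial.X ^ j := by
          rcases eq_or_ne e 0 with h0 | h0
          · have : P = 1 := by
              rw [← hP.natDegree_eq_zero]; omega
            simp [this, h0]
          · refine Polynomial.as_sum_range_C_mul_X_pow' _ ?_
            rw [← he]
            refine Polynomial.natDegree_modByMonic_lt _ hP ?_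
            rintro rfl; simp at he; omega
        rw [h1, h2, Finset.sum_mul, map_sum]
        refine V.sum_mem fun j hj => ?_
        rw [mul_assoc, ← Polynomial.smul_eq_C_mul, map_smul]
        refine V.smul_mem _ (Submodule.subset_span ⟨(i, ⟨j, Finset.mem_range.mp hj⟩), ?_⟩)
        rw [hT]
    | zero => intro a; simp
    | add x y _ _ hx hy => intro a; rw [mul_add, map_add]; exact V.add_mem (hx a) (hy a)
    | smul b x _ hx => intro a; rw [smul_eq_mul, ← mul_assoc]; exact hx _
  simpa [hT] using key 1

end LinearAlgebra

section Norms

variable {K : Type*} [NormedField K] [IsUltrametricDist K]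

/-- Roots of a monic polynomial with coefficients in the unit disc lie in the unit disc. -/
lemma norm_root_le_one {P : Polynomial K} (hP : P.Monic) (hc : ∀ k, ‖P.coeff k‖ ≤ 1) {x : K}
    (hx : P.eval x = 0) : ‖x‖ ≤ 1 := by
  by_contra h
  push Not at h
  rw [Polynomial.eval_eq_sum_range, Finset.sum_range_succ, hP.coeff_natDegree, one_mul,
    add_comm, add_eq_zero_iff_eq_neg] at hx
  have h1 : ‖x‖ ^ P.natDegree = ‖∑ i ∈ Finset.range P.natDegree, P.coeff i * x ^ i‖ := by
    rw [← norm_pow, hx, norm_neg]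
  rcases Nat.eq_zero_or_pos P.natDegree with h0 | h0
  · simp [h0] at h1
  · have h2 : ‖∑ i ∈ Finset.range P.natDegree, P.coeff i * x ^ i‖ ≤ ‖x‖ ^ (P.natDegree - 1) := by
      refine IsUltrametricDist.norm_sum_le_of_forall_le_of_nonneg (by positivity) fun i hi => ?_
      rw [norm_mul, norm_pow]
      have hi' := Finset.mem_range.mp hi
      calc ‖P.coeff i‖ * ‖x‖ ^ i ≤ 1 * ‖x‖ ^ (P.natDegree - 1) := by
            gcongr
            · exact hc i
            · exact h.le
            · omega
        _ = _ := one_mul _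
    rw [← h1] at h2
    have := pow_lt_pow_right₀ h (Nat.sub_lt h0 one_pos)
    linarith

lemma norm_coeff_mul_le {p q : Polynomial K} (hp : ∀ k, ‖p.coeff k‖ ≤ 1)
    (hq : ∀ k, ‖q.coeff k‖ ≤ 1) (k : ℕ) : ‖(p * q).coeff k‖ ≤ 1 := by
  rw [Polynomial.coeff_mul]
  refine IsUltrametricDist.norm_sum_le_of_forall_le_of_nonneg zero_le_one fun x _ => ?_
  rw [norm_mul]
  exact mul_le_one₀ (hp _) (norm_nonneg _) (hq _)

lemma norm_coeff_prod_le (s : Multiset K) (hs : ∀ x ∈ s, ‖x‖ ≤ 1) (k : ℕ) :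
    ‖(s.map fun x => Polynomial.X - Polynomial.C x).prod.coeff k‖ ≤ 1 := by
  induction s using Multiset.induction_on generalizing k with
  | empty =>
    simp only [Multiset.map_zero, Multiset.prod_zero, Polynomial.coeff_one]
    split_ifs <;> simp
  | cons a s ih =>
    rw [Multiset.map_cons, Multiset.prod_cons]
    refine norm_coeff_mul_le (fun j => ?_) (ih fun x hx => hs x (by simp [hx])) k
    rw [sub_eq_add_neg, Polynomial.coeff_add, Polynomial.coeff_neg, Polynomial.coeff_X,
      Polynomial.coeff_C]
    have ha := hs a (by simp)
    refine (IsUltrametricDist.norm_add_le_max _ _).trans (max_le ?_ ?_)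
    · split_ifs <;> simp
    · rw [norm_neg]; split_ifs <;> simp [ha]

/-- If no root is within `η` of `r`, the value at `r` is bounded below. -/
lemma pow_le_norm_prod (s : Multiset K) {r : K} {η : ℝ} (h0 : 0 ≤ η)
    (h : ∀ x ∈ s, η ≤ ‖x - r‖) :
    η ^ Multiset.card s ≤ ‖((s.map fun x => Polynomial.X - Polynomial.C x).prod).eval r‖ := by
  induction s using Multiset.induction_on with
  | empty => simp
  | cons a s ih =>
    rw [Multiset.map_cons, Multiset.prod_cons, Polynomial.eval_mul, norm_mul,
      Multiset.card_cons, pow_succ, mul_comm]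
    gcongr
    · simpa [norm_sub_rev] using h a (by simp)
    · exact ih fun x hx => h x (by simp [hx])

end Norms

section Elim

variable {R : Type*} [CommRing R] {ι : Type*}

/-- The matrix of the remainders of `X ^ j * f i` modulo `P`. -/
noncomputable def colMat (P : Polynomial R) (e : ℕ) (f : ι → Polynomial R) (k : Fin e)
    (c : ι × Fin e) : R :=
  ((Polynomial.X ^ (c.2 : ℕ) * f c.1) %ₘ P).coeff k

/-- The choice of a square submatrix of `colMat`. -/
abbrev Choice (ι : Type*) (e : ℕ) : Type _ :=
  (ρ : Fin (e + 1)) × (Fin ρ → Fin e) × (Fin ρ → ι × Fin e)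

/-- The bordered minors of the square submatrix `c` of `colMat`. -/
noncomputable def bminor (P : Polynomial R) (e : ℕ) (f : ι → Polynomial R) (c : Choice ι e)
    (j : Fin e × (ι × Fin e)) : R :=
  (Matrix.of fun a b : Fin c.1 ⊕ Unit =>
    colMat P e f (Sum.elim c.2.1 (fun _ => j.1) a) (Sum.elim c.2.2 (fun _ => j.2) b)).det

variable {K : Type*} [NormedField K] [IsUltrametricDist K] [IsAlgClosed K]

lemma map_colMat (φ : R →+* K) {P : Polynomial R} (hP : P.Monic) (e : ℕ)
    (f : ι → Polynomial R) (k : Fin e) (c : ι × Fin e) :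
    φ (colMat P e f k c) = colMat (P.map φ) e (fun i => (f i).map φ) k c := by
  unfold colMat
  rw [← Polynomial.coeff_map, Polynomial.map_modByMonic _ hP]
  simp

lemma map_det_of {α : Type*} [Fintype α] [DecidableEq α] (φ : R →+* K) (M : α → α → R) :
    φ (Matrix.of M).det = (Matrix.of fun a b => φ (M a b)).det := by
  rw [RingHom.map_det]; rfl

/-- Suppose that all rows of `colMat P e f` are combinations, with coefficients `t`, of the rows
with indices `rows`. If the values at `r` of `P` and of the polynomials with coefficients `t · a` are
small, then `P` and the `f i` have a common root near `r`. -/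
lemma exists_root_near {P : Polynomial K} {e : ℕ} (hP : P.Monic) (he : P.natDegree = e)
    (hPc : ∀ k, ‖P.coeff k‖ ≤ 1) (f : ι → Polynomial K) {r : K} {η : ℝ} (hη : 0 < η)
    (hη1 : η ≤ 1) {ρ : ℕ} (rows : Fin ρ → Fin e) (t : Fin e → Fin ρ → K)
    (h : ∀ k c, colMat P e f k c = ∑ a, t k a * colMat P e f (rows a) c)
    (ht : ∀ a, ‖∑ k : Fin e, r ^ (k : ℕ) * t k a‖ < η ^ e) (hPr : ‖P.eval r‖ < η ^ e) :
    ∃ ξ, ‖ξ‖ ≤ 1 ∧ ‖ξ - r‖ < η ∧ P.eval ξ = 0 ∧ ∀ i, (f i).eval ξ = 0 := by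
  classical
  -- The roots of the monic gcd `D` of `P` and the `f i` are their common roots, so if none of them
  -- were near `r`, then `D.eval r` could not be small.
  set I := Ideal.span (insert P (Set.range f)) with hI
  set D := normalize (Submodule.IsPrincipal.generator I) with hD
  have hPI : P ∈ I := Ideal.subset_span (by simp)
  have hg0 : Submodule.IsPrincipal.generator I ≠ 0 := by
    intro h0
    rw [← Submodule.IsPrincipal.eq_bot_iff_generator_eq_zero] at h0
    rw [h0] at hPI
    exact hP.ne_zero (by simpa using hPI)
  have hDm : D.Monic := Polynomial.monic_normalize hg0
  have hDI : D ∈ I := by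
    rw [hD, normalize_apply]
    exact I.mul_mem_right _ (Submodule.IsPrincipal.generator_mem I)
  have hdvd : ∀ q ∈ I, D ∣ q := fun q hq => by
    rw [hD, normalize_dvd_iff]
    exact (Submodule.IsPrincipal.mem_iff_generator_dvd I).mp hq
  have hroot : ∀ x ∈ D.roots, P.eval x = 0 ∧ ∀ i, (f i).eval x = 0 := by
    intro x hx
    have hx0 : D.eval x = 0 := (Polynomial.mem_roots'.mp hx).2
    refine ⟨?_, fun i => ?_⟩
    · exact Polynomial.eval_eq_zero_of_dvd_of_eval_eq_zero (hdvd P hPI) hx0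
    · exact Polynomial.eval_eq_zero_of_dvd_of_eval_eq_zero
        (hdvd _ (Ideal.subset_span (by simp))) hx0
  have hsplit : D = (D.roots.map fun x => Polynomial.X - Polynomial.C x).prod :=
    (IsAlgClosed.splits D).eq_prod_roots_of_monic hDm
  have hle : ∀ x ∈ D.roots, ‖x‖ ≤ 1 := fun x hx => norm_root_le_one hP hPc (hroot x hx).1
  have hDc : ∀ k, ‖D.coeff k‖ ≤ 1 := fun k => by
    rw [hsplit]; exact norm_coeff_prod_le _ hle k
  have hDe : D.natDegree ≤ e := by
    rw [← he]; exact Polynomial.natDegree_le_of_dvd (hdvd P hPI) hP.ne_zero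
  have hDr : ‖D.eval r‖ < η ^ e := by
    rcases hDe.lt_or_eq with hlt | heq
    · have hdeg : D.degree < P.degree := by
        rw [Polynomial.degree_eq_natDegree hDm.ne_zero,
          Polynomial.degree_eq_natDegree hP.ne_zero, he]
        exact_mod_cast hlt
      have hmem := mem_span_columns hP he f hDI
      rw [(Polynomial.modByMonic_eq_self_iff hP).mpr hdeg] at hmem
      have hv := bordered_span (fun k c => colMat P e f k c) rows t h hmem
      have h1 : D.eval r = ∑ a, (∑ k : Fin e, r ^ (k : ℕ) * t k a) * D.coeff (rows a) := by
        rw [Polynomial.eval_eq_sum_range' hlt, ← Fin.sum_univ_eq_sum_range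
          (fun k => D.coeff k * r ^ k)]
        simp_rw [Finset.sum_mul]
        rw [Finset.sum_comm]
        refine Finset.sum_congr rfl fun k _ => ?_
        have := hv k
        rw [this, Finset.sum_mul]
        exact Finset.sum_congr rfl fun a _ => by ring
      rw [h1]
      rcases Nat.eq_zero_or_pos ρ with h0 | h0
      · subst h0; simp; positivity
      · haveI : Nonempty (Fin ρ) := ⟨⟨0, h0⟩⟩
        obtain ⟨a, -, ha⟩ := IsUltrametricDist.exists_norm_finsetSum_le_of_nonempty
          (Finset.univ_nonempty (α := Fin ρ))
          (fun a => (∑ k : Fin e, r ^ (k : ℕ) * t k a) * D.coeff (rows a))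
        refine ha.trans_lt ?_
        rw [norm_mul]
        exact (mul_le_of_le_one_right (norm_nonneg _) (hDc _)).trans_lt (ht a)
    · have : D = P := Polynomial.eq_of_monic_of_dvd_of_natDegree_le hDm hP (hdvd P hPI)
        (by omega) |>.symm
      rw [this]; exact hPr
  by_contra hcon
  push Not at hcon
  have h1 : ∀ x ∈ D.roots, η ≤ ‖x - r‖ := by
    intro x hx
    by_contra hlt
    obtain ⟨i, hi⟩ := hcon x (hle x hx) (not_le.mp hlt) (hroot x hx).1
    exact hi ((hroot x hx).2 i)
  have h2 := pow_le_norm_prod D.roots hη.le h1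
  rw [← hsplit] at h2
  have h3 : η ^ e ≤ η ^ Multiset.card D.roots :=
    pow_le_pow_of_le_one hη.le hη1 ((Polynomial.card_roots' D).trans hDe)
  linarith

/-- A nonvanishing minor of maximal size; all its bordered minors vanish. -/
lemma exists_choice (φ : R →+* K) (P : Polynomial R) (e : ℕ) (f : ι → Polynomial R) :
    ∃ c : Choice ι e,
      (Matrix.of fun a b => φ (colMat P e f (c.2.1 a) (c.2.2 b))).det ≠ 0 ∧
      ∀ j, φ (bminor P e f c j) = 0 := by
  classical
  let Q : ℕ → Prop := fun ρ => ∃ (rows : Fin ρ → Fin e) (cols : Fin ρ → ι × Fin e),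
    (Matrix.of fun a b => φ (colMat P e f (rows a) (cols b))).det ≠ 0
  have hQ0 : Q 0 := ⟨Fin.elim0, Fin.elim0, by simp⟩
  have hQe : ∀ ρ, Q ρ → ρ ≤ e := by
    rintro ρ ⟨rows, cols, h⟩
    have hinj : Function.Injective rows := by
      intro a b hab
      by_contra hne
      exact h (Matrix.det_zero_of_row_eq hne (by ext k; simp [hab]))
    simpa using Fintype.card_le_of_injective rows hinj
  have hex : ∃ ρ, Q ρ ∧ ¬ Q (ρ + 1) := by
    by_contra hcon
    push Not at hcon
    have : ∀ ρ, Q ρ := fun ρ => by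
      induction ρ with
      | zero => exact hQ0
      | succ ρ ih => exact hcon ρ ih
    have := hQe _ (this (e + 1))
    omega
  obtain ⟨ρ, ⟨rows, cols, h⟩, hρ⟩ := hex
  refine ⟨⟨⟨ρ, Nat.lt_succ_of_le (hQe ρ ⟨rows, cols, h⟩)⟩, rows, cols⟩, h, fun j => ?_⟩
  by_contra hne
  apply hρ
  unfold bminor at hne
  rw [map_det_of] at hne
  let ee : Fin (ρ + 1) ≃ Fin ρ ⊕ Unit := Fintype.equivOfCardEq (by simp)
  refine ⟨fun a => Sum.elim rows (fun _ => j.1) (ee a), fun a => Sum.elim cols (fun _ => j.2) (ee a),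
    ?_⟩
  rw [← Matrix.det_submatrix_equiv_self ee] at hne
  exact hne

/-- If `(r, y₀)` is an isolated common zero of `P` and the `f i`, then `y₀` is isolated among
the common zeros of the bordered minors of a suitable minor. -/
lemma Iso.elim {Y : Type*} [TopologicalSpace Y] (ev : Y → (R →+* K))
    (hc : ∀ x, Continuous fun y => ev y x) (hb : ∀ y x, ‖ev y x‖ ≤ 1) {P : Polynomial R}
    {e : ℕ} (hP : P.Monic) (he : P.natDegree = e) (f : ι → Polynomial R) {r : K} {y₀ : Y}
    (h : Iso {z : K × Y | ‖z.1‖ ≤ 1 ∧ (P.map (ev z.2)).eval z.1 = 0 ∧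
      ∀ i, ((f i).map (ev z.2)).eval z.1 = 0} (r, y₀)) :
    ∃ c : Choice ι e, Iso {y | ∀ j, ev y (bminor P e f c j) = 0} y₀ := by
  classical
  obtain ⟨c, hdet, hbm⟩ := exists_choice (ev y₀) P e f
  refine ⟨c, hbm, ?_⟩
  obtain ⟨⟨hr1, hPr, hfr⟩, hiso⟩ := h
  simp only at hr1 hPr hfr
  obtain ⟨U, hU, V, hV, hUV⟩ := mem_nhds_prod_iff.mp hiso
  obtain ⟨η', hη', hball⟩ := Metric.mem_nhds_iff.mp hU
  set η := min η' 1 with hηdef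
  have hη : 0 < η := lt_min hη' one_pos
  have hmonic : ∀ y, (P.map (ev y)).Monic := fun y => hP.map _
  have hdeg : ∀ y, (P.map (ev y)).natDegree = e := fun y => by
    rw [hP.natDegree_map, he]
  -- the coefficients expressing all rows through the chosen rows
  set A : Matrix (Fin c.1) (Fin c.1) R :=
    Matrix.of fun a b => colMat P e f (c.2.1 a) (c.2.2 b) with hA
  let t : Y → Fin e → Fin c.1 → K := fun y k a =>
    (∑ b, ev y (colMat P e f k (c.2.2 b)) * ev y (A.adjugate b a)) / ev y A.det
  have hAy : ∀ y, (Matrix.of fun a b => ev y (colMat P e f (c.2.1 a) (c.2.2 b))) =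
      (ev y).mapMatrix A := fun y => by ext a b; simp [A]
  have hdet0 : ev y₀ A.det ≠ 0 := by
    rw [RingHom.map_det, ← hAy]; exact hdet
  have hcdet : ContinuousAt (fun y => ev y A.det) y₀ := (hc _).continuousAt
  have ht : ∀ k a, ContinuousAt (fun y => t y k a) y₀ := by
    intro k a
    refine ContinuousAt.div ?_ hcdet hdet0
    exact (continuous_finsetSum _ fun b _ => (hc _).mul (hc _)).continuousAt
  have hcol : ∀ b, ∑ k : Fin e, r ^ (k : ℕ) * ev y₀ (colMat P e f k b) = 0 := by
    intro b
    have h1 : ∀ k : Fin e, r ^ (k : ℕ) * ev y₀ (colMat P e f k b) =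
        (((Polynomial.X ^ (b.2 : ℕ) * (f b.1).map (ev y₀)) %ₘ P.map (ev y₀))).coeff k *
          r ^ (k : ℕ) := fun k => by
      rw [map_colMat _ hP, mul_comm]; rfl
    rw [Finset.sum_congr rfl fun k _ => h1 k, Fin.sum_univ_eq_sum_range
      (fun k => (((Polynomial.X ^ (b.2 : ℕ) * (f b.1).map (ev y₀)) %ₘ P.map (ev y₀))).coeff k *
          r ^ k)]
    have hlt : (((Polynomial.X ^ (b.2 : ℕ) * (f b.1).map (ev y₀)) %ₘ P.map (ev y₀))).natDegree
        < e := by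
      refine lt_of_lt_of_eq ?_ (hdeg y₀)
      refine Polynomial.natDegree_modByMonic_lt _ (hmonic y₀) fun h1 => ?_
      have := hdeg y₀
      rw [h1] at this
      have h2 := b.2.2
      simp at this
      omega
    rw [← Polynomial.eval_eq_sum_range' hlt,
      Polynomial.modByMonic_eq_sub_mul_div _ (P.map (ev y₀))]
    simp [hPr, hfr]
  have ht0 : ∀ a, ∑ k : Fin e, r ^ (k : ℕ) * t y₀ k a = 0 := by
    intro a
    have h1 : ∀ k : Fin e, r ^ (k : ℕ) * t y₀ k a = ∑ b, (r ^ (k : ℕ) *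
        ev y₀ (colMat P e f k (c.2.2 b))) * (ev y₀ (A.adjugate b a) / ev y₀ A.det) := fun k => by
      simp only [t]
      rw [Finset.sum_div, Finset.mul_sum]
      exact Finset.sum_congr rfl fun b _ => by ring
    rw [Finset.sum_congr rfl fun k _ => h1 k, Finset.sum_comm]
    refine Finset.sum_eq_zero fun b _ => ?_
    rw [← Finset.sum_mul, hcol, zero_mul]
  have hsmall : ∀ᶠ y in 𝓝 y₀, ∀ a, ‖∑ k : Fin e, r ^ (k : ℕ) * t y k a‖ < η ^ e := by
    rw [Filter.eventually_all]
    intro a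
    have h1 : ContinuousAt (fun y => ‖∑ k : Fin e, r ^ (k : ℕ) * t y k a‖) y₀ := by
      refine ContinuousAt.norm ?_
      exact tendsto_finsetSum _ fun k _ => (continuousAt_const.mul (ht k a))
    refine h1.eventually_lt continuousAt_const ?_
    rw [ht0, norm_zero]; positivity
  have hPsmall : ∀ᶠ y in 𝓝 y₀, ‖(P.map (ev y)).eval r‖ < η ^ e := by
    have h1 : Continuous fun y => ‖(P.map (ev y)).eval r‖ := by
      simp only [Polynomial.eval_map, Polynomial.eval₂_eq_sum_range]
      exact (continuous_finsetSum _ fun b _ => (hc _).mul continuous_const).norm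
    refine h1.continuousAt.eventually_lt continuousAt_const ?_
    rw [hPr, norm_zero]; positivity
  filter_upwards [hsmall, hPsmall, hcdet.eventually_ne hdet0, hV] with y h1 h2 h3 h4 hy
  obtain ⟨ξ, hξ1, hξr, hξP, hξf⟩ := exists_root_near (hmonic y) (hdeg y)
    (fun k => by rw [Polynomial.coeff_map]; exact hb y _) (fun i => (f i).map (ev y)) hη
    (min_le_right _ _) c.2.1 (t y) (fun k b => by
      have hb := bordered (fun k b => ev y (colMat P e f k b)) c.2.1 c.2.2
        (by rw [hAy, ← RingHom.map_det]; exact h3) k b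
        (by
          have := hy (k, b)
          unfold bminor at this
          rw [map_det_of] at this
          exact this)
      simp only [← map_colMat _ hP]
      rw [hb]
      refine Finset.sum_congr rfl fun a _ => ?_
      congr 1
      simp only [t]
      rw [hAy, ← RingHom.map_det, ← RingHom.map_adjugate]
      simp) h1 h2
  have hmem : (ξ, y) ∈ U ×ˢ V := by
    refine ⟨hball ?_, h4⟩
    rw [Metric.mem_ball, dist_eq_norm]
    exact hξr.trans_le (min_le_left _ _)
  have := hUV hmem ⟨hξ1, hξP, hξf⟩
  exact (Prod.mk.inj this).2

end Elim

/-! ### Weierstrass division -/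

section Weierstrass

variable {B : Type*} [CommRing B] [Nontrivial B] {B₀ : Subring B} {ε : ℕ} {n : ℕ}

variable (B₀ ε) in
/-- The analogue of `PI` for `B[x₁, …, xₙ][X]`, with the total degree in all variables. -/
def PPI (C k m : ℕ) (q : Polynomial (MvPolynomial (Fin n) B)) : Prop :=
  PI B₀ ε C k m ((MvPolynomial.finSuccEquiv B n).symm q)

lemma degree_cons (i : ℕ) (ν : Fin n →₀ ℕ) : (ν.cons i).degree = i + ν.degree := by
  simp [Finsupp.degree_eq_sum, Fin.sum_univ_succ]

lemma PPI_iff {C k m : ℕ} {q : Polynomial (MvPolynomial (Fin n) B)} :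
    PPI B₀ ε C k m q ↔ ∀ i ν, DI B₀ ε C k (coeff ν (q.coeff i)) ∧
      (coeff ν (q.coeff i) ≠ 0 → i + ν.degree ≤ m) := by
  have key : ∀ i ν, coeff ν (q.coeff i) = coeff (ν.cons i) ((MvPolynomial.finSuccEquiv B n).symm q) := by
    intro i ν
    rw [← finSuccEquiv_coeff_coeff, AlgEquiv.apply_symm_apply]
  constructor
  · intro h i ν
    rw [key, ← degree_cons]
    exact h _
  · intro h ν
    rw [← Finsupp.cons_tail ν, ← key, degree_cons]
    exact h _ _

/-- Division by a monic polynomial preserves denominators and degree bounds. -/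
lemma PPI.divMod {C k m e : ℕ} {M : Polynomial (MvPolynomial (Fin n) B)} (hM : M.Monic)
    (he : M.natDegree = e) (hMI : PPI B₀ ε C 0 e M) (N : ℕ) :
    ∀ q : Polynomial (MvPolynomial (Fin n) B), q.natDegree < N → PPI B₀ ε C k m q →
      ∃ Q R, R + M * Q = q ∧ R.degree < M.degree ∧ PPI B₀ ε C k m Q ∧ PPI B₀ ε C k m R := by
  induction N with
  | zero => intro q hq; omega
  | succ N ih =>
    intro q hq hqI
    by_cases hlt : q.degree < M.degree
    · refine ⟨0, q, by simp, hlt, ?_, hqI⟩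
      unfold PPI; rw [map_zero]; exact PI.zero _ _ _
    · have hq0 : q ≠ 0 := by
        rintro rfl
        exact hlt (by simpa [bot_lt_iff_ne_bot] using hM.ne_zero)
      have hle : M.degree ≤ q.degree := not_lt.mp hlt
      have hnat : M.natDegree ≤ q.natDegree := Polynomial.natDegree_le_natDegree hle
      set T : Polynomial (MvPolynomial (Fin n) B) :=
        Polynomial.C q.leadingCoeff * Polynomial.X ^ (q.natDegree - M.natDegree) with hT
      have hwf := Polynomial.div_wf_lemma ⟨hle, hq0⟩ hM
      have hlc : ∃ ν, coeff ν (q.coeff q.natDegree) ≠ 0 := by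
        have : q.coeff q.natDegree ≠ 0 := by simpa using hq0
        exact MvPolynomial.ne_zero_iff.mp this
      have hNm : q.natDegree ≤ m := by
        obtain ⟨ν, hν⟩ := hlc
        have := (PPI_iff.mp hqI _ ν).2 hν
        omega
      have hTI : PPI B₀ ε C k (m - e) T := by
        rw [PPI_iff]
        intro i ν
        rw [hT, Polynomial.coeff_C_mul_X_pow]
        split_ifs with hi
        · have := PPI_iff.mp hqI q.natDegree ν
          refine ⟨this.1, fun h => ?_⟩
          have := this.2 h
          omega
        · exact ⟨by simpa using DI.zero _ _, by simp⟩
      have hMT : PPI B₀ ε C k m (M * T) := by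
        unfold PPI at *
        rw [map_mul]
        exact (hMI.mul hTI).mono le_rfl (by omega) (by omega)
      have hq'I : PPI B₀ ε C k m (q - M * T) := by
        unfold PPI at *
        rw [map_sub]
        exact hqI.sub hMT
      by_cases hz : q - M * T = 0
      · refine ⟨T, 0, ?_, ?_, ?_, ?_⟩
        · rw [zero_add]; exact (sub_eq_zero.mp hz).symm
        · simpa [bot_lt_iff_ne_bot] using hM.ne_zero
        · exact hTI.mono le_rfl le_rfl (Nat.sub_le _ _)
        · unfold PPI; rw [map_zero]; exact PI.zero _ _ _
      · have hlt' : (q - M * T).natDegree < N := by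
          have := (Polynomial.natDegree_lt_natDegree_iff hz).mpr hwf
          omega
        obtain ⟨Q, R, h1, h2, h3, h4⟩ := ih _ hlt' hq'I
        refine ⟨Q + T, R, ?_, h2, ?_, h4⟩
        · rw [mul_add, ← add_assoc, h1]; ring
        · unfold PPI at *
          rw [map_add]
          exact h3.add (hTI.mono le_rfl le_rfl (Nat.sub_le _ _))

lemma PPI.div_mod {C k m e : ℕ} {M q : Polynomial (MvPolynomial (Fin n) B)} (hM : M.Monic)
    (he : M.natDegree = e) (hMI : PPI B₀ ε C 0 e M) (hq : PPI B₀ ε C k m q) :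
    PPI B₀ ε C k m (q /ₘ M) ∧ PPI B₀ ε C k m (q %ₘ M) := by
  obtain ⟨Q, R, h1, h2, h3, h4⟩ := PPI.divMod hM he hMI _ q (Nat.lt_succ_self _) hq
  have := Polynomial.div_modByMonic_unique Q R hM ⟨h1, h2⟩
  rw [this.1, this.2]
  exact ⟨h3, h4⟩

/-- The coefficients of the quotient in Weierstrass division of `g` by `Φ`, whose constant
term `Φ 0` is monic. -/
noncomputable def wq {D : Type*} [CommRing D] (Φ g : ℕ → Polynomial D) : ℕ → Polynomial D
  | k => (g k - ∑ i : Fin k, Φ (k - i) * wq Φ g i) /ₘ Φ 0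
decreasing_by exact i.2

lemma finSuccEquiv_rename_succ (a : MvPolynomial (Fin n) B) :
    MvPolynomial.finSuccEquiv B n (rename Fin.succ a) = Polynomial.C a := by
  induction a using MvPolynomial.induction_on with
  | C b => simp [finSuccEquiv_apply]
  | add p q hp hq => simp [hp, hq]
  | mul_X p i hp => rw [map_mul, map_mul, hp, rename_X, finSuccEquiv_X_succ, map_mul]

/-- Weierstrass division in `Lat`. -/
lemma weierstrass {C e : ℕ} {Φ g : PowerSeries (MvPolynomial (Fin (n + 1)) B)}
    (hΦ : Φ ∈ Lat B₀ ε C (Fin (n + 1))) (hg : g ∈ Lat B₀ ε C (Fin (n + 1)))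
    (hM : (MvPolynomial.finSuccEquiv B n (PowerSeries.coeff 0 Φ)).Monic)
    (he : (MvPolynomial.finSuccEquiv B n (PowerSeries.coeff 0 Φ)).natDegree = e)
    (hMI : PI B₀ ε C 0 e (PowerSeries.coeff 0 Φ)) :
    ∃ Q ∈ Lat B₀ ε C (Fin (n + 1)), ∃ r : ℕ → PowerSeries (MvPolynomial (Fin n) B),
      (∀ j, r j ∈ Lat B₀ ε C (Fin n)) ∧
      g = Φ * Q + ∑ j ∈ Finset.range e, PowerSeries.map (rename Fin.succ : _ →ₐ[B] _).toRingHom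
        (r j) * PowerSeries.C (X 0 ^ j) ∧
      PowerSeries.coeff 0 Q = (MvPolynomial.finSuccEquiv B n).symm (MvPolynomial.finSuccEquiv B n (PowerSeries.coeff 0 g) /ₘ
        MvPolynomial.finSuccEquiv B n (PowerSeries.coeff 0 Φ)) := by
  classical
  set Φ' : ℕ → Polynomial (MvPolynomial (Fin n) B) :=
    fun k => MvPolynomial.finSuccEquiv B n (PowerSeries.coeff k Φ) with hΦ'
  set g' : ℕ → Polynomial (MvPolynomial (Fin n) B) :=
    fun k => MvPolynomial.finSuccEquiv B n (PowerSeries.coeff k g) with hg'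
  have hwq : ∀ k, wq Φ' g' k =
      (g' k - ∑ i : Fin k, Φ' (k - i) * wq Φ' g' i) /ₘ Φ' 0 := fun k => by rw [wq]
  set rem : ℕ → Polynomial (MvPolynomial (Fin n) B) := fun k =>
    (g' k - ∑ i : Fin k, Φ' (k - i) * wq Φ' g' i) %ₘ Φ' 0 with hrem
  obtain ⟨E₁, hE₁⟩ := hΦ
  obtain ⟨E₂, hE₂⟩ := hg
  set E := max E₁ E₂ with hE
  have hM' : PPI B₀ ε C 0 e (Φ' 0) := by
    unfold PPI; simp only [Φ', AlgEquiv.symm_apply_apply]; exact hMI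
  have hΦI : ∀ k, PPI B₀ ε C k (E * (k + 1)) (Φ' k) := fun k => by
    unfold PPI; simp only [Φ', AlgEquiv.symm_apply_apply]
    exact (hE₁ k).mono le_rfl le_rfl (by gcongr; exact le_max_left _ _)
  have hgI : ∀ k, PPI B₀ ε C k (2 * E * (k + 1)) (g' k) := fun k => by
    unfold PPI; simp only [g', AlgEquiv.symm_apply_apply]
    refine (hE₂ k).mono le_rfl le_rfl ?_
    have : E₂ ≤ 2 * E := by omega
    gcongr
  have hnum : ∀ k, (∀ i < k, PPI B₀ ε C i (2 * E * (i + 1)) (wq Φ' g' i)) →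
      PPI B₀ ε C k (2 * E * (k + 1)) (g' k - ∑ i : Fin k, Φ' (k - i) * wq Φ' g' i) := by
    intro k ih
    have h1 := hgI k
    unfold PPI at *
    rw [map_sub, map_sum]
    refine h1.sub (PI.sum fun i _ => ?_)
    rw [map_mul]
    refine ((hΦI (k - i)).mul (ih i i.2)).mono le_rfl (by omega) ?_
    obtain ⟨d, hd⟩ := Nat.exists_eq_add_of_lt i.2
    have : k - (i : ℕ) = d + 1 := by omega
    rw [this]
    have h2 : k + 1 = (i : ℕ) + 1 + (d + 1) := by omega
    calc E * (d + 1 + 1) + 2 * E * ((i : ℕ) + 1) ≤ 2 * E * (d + 1) + 2 * E * ((i : ℕ) + 1) := by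
          exact Nat.add_le_add_right (by nlinarith [Nat.zero_le (E * d)]) _
      _ = 2 * E * (k + 1) := by rw [h2]; ring
  have hwI : ∀ k, PPI B₀ ε C k (2 * E * (k + 1)) (wq Φ' g' k) := by
    intro k
    induction k using Nat.strong_induction_on with
    | _ k ih =>
      rw [hwq]
      exact (PPI.div_mod hM he hM' (hnum k ih)).1
  have hrI : ∀ k, PPI B₀ ε C k (2 * E * (k + 1)) (rem k) := fun k =>
    (PPI.div_mod hM he hM' (hnum k fun i _ => hwI i)).2
  have hdiv : ∀ k, g' k = ∑ x ∈ Finset.HasAntidiagonal.antidiagonal k,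
      Φ' x.1 * wq Φ' g' x.2 + rem k := by
    intro k
    have h1 := Polynomial.modByMonic_add_div
      (g' k - ∑ i : Fin k, Φ' (k - i) * wq Φ' g' i) (Φ' 0)
    rw [← hwq] at h1
    rw [Finset.Nat.sum_antidiagonal_eq_sum_range_succ_mk, ← Finset.sum_range_reflect,
      Finset.sum_range_succ]
    have h2 : ∑ i : Fin k, Φ' (k - i) * wq Φ' g' i =
        ∑ j ∈ Finset.range k, Φ' (k + 1 - 1 - j) * wq Φ' g' (k - (k + 1 - 1 - j)) := by
      rw [← Fin.sum_univ_eq_sum_range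
        (fun j => Φ' (k + 1 - 1 - j) * wq Φ' g' (k - (k + 1 - 1 - j)))]
      refine Finset.sum_congr rfl fun i _ => ?_
      have := i.2
      congr 2
      omega
    simp only [← h2]
    have h3 : k + 1 - 1 - k = 0 := by omega
    rw [h3, Nat.sub_zero]
    have h4 : rem k = (g' k - ∑ i : Fin k, Φ' (k - i) * wq Φ' g' i) %ₘ Φ' 0 := rfl
    rw [h4]
    linear_combination -h1
  have hremdeg : ∀ k, rem k = ∑ j ∈ Finset.range e,
      Polynomial.C ((rem k).coeff j) * Polynomial.X ^ j := by
    intro k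
    rcases eq_or_ne e 0 with h0 | h0
    · have : Φ' 0 = 1 := by rw [← hM.natDegree_eq_zero]; omega
      simp [rem, this, h0]
    · refine Polynomial.as_sum_range_C_mul_X_pow' _ ?_
      refine lt_of_lt_of_eq (Polynomial.natDegree_modByMonic_lt _ hM ?_) he
      intro h1; change (Φ' 0).natDegree = e at he; rw [h1] at he; simp at he; omega
  refine ⟨PowerSeries.mk fun k => (MvPolynomial.finSuccEquiv B n).symm (wq Φ' g' k), ⟨2 * E, fun k => ?_⟩,
    fun j => PowerSeries.mk fun k => (rem k).coeff j, fun j => ⟨2 * E, fun k => ?_⟩, ?_, ?_⟩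
  · rw [PowerSeries.coeff_mk]; exact hwI k
  · rw [PowerSeries.coeff_mk]
    intro ν
    have := PPI_iff.mp (hrI k) j ν
    exact ⟨this.1, fun h => by have := this.2 h; omega⟩
  · ext1 k
    apply (MvPolynomial.finSuccEquiv B n).injective
    rw [map_add, map_add, PowerSeries.coeff_mul, map_sum (PowerSeries.coeff k)]
    simp only [PowerSeries.coeff_mul_C, PowerSeries.coeff_map, PowerSeries.coeff_mk]
    simp only [map_sum, map_mul, AlgEquiv.apply_symm_apply, map_pow, finSuccEquiv_X_zero]
    have h1 : ∀ a, MvPolynomial.finSuccEquiv B n ((rename Fin.succ : _ →ₐ[B] _).toRingHom a) = Polynomial.C a :=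
      fun a => finSuccEquiv_rename_succ a
    simp only [h1]
    rw [← hremdeg]
    exact hdiv k
  · rw [PowerSeries.coeff_mk, hwq]
    simp [g', Φ']

end Weierstrass

/-! ### Uniform bounds and the elimination step -/

section Bound

variable {B : Type} [CommRing B]

/-- The number of isolated points of the zero sets in the unit polydisc of all the
specializations `φ : B →+* K` of the family `f` with `B₀` mapped to the unit ball, at all small
enough `s`, is bounded. -/
def HasBound (B₀ : Subring B) (ε : ℕ) {n : ℕ} {ι : Type}
    (f : ι → PowerSeries (MvPolynomial (Fin n) B)) : Prop :=
  ∃ N C' : ℕ, ∀ (K : Type) [NormedField K] [IsUltrametricDist K] [CompleteSpace K]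
    [IsAlgClosed K] (s : K) (φ : B →+* K), Good ε C' s → (∀ b ∈ B₀, ‖φ b‖ ≤ 1) →
    ∀ S : Finset (Fin n → K), (∀ z ∈ S, Iso (Zset s φ f) z) → S.card ≤ N

end Bound

/-- Uniform finiteness in `n` variables. -/
def Claim (ε n : ℕ) : Prop :=
  ∀ (B : Type) [CommRing B] [Nontrivial B] [Algebra ℚ B] (B₀ : Subring B) [IsNoetherianRing B₀]
    (C : ℕ) (ι : Type) [Fintype ι] (f : ι → PowerSeries (MvPolynomial (Fin n) B)),
    (∀ i, f i ∈ Lat B₀ ε C (Fin n)) → HasBound B₀ ε f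

lemma claim_zero (ε : ℕ) : Claim ε 0 := by
  intro B _ _ _ B₀ _ C ι _ f hf
  refine ⟨1, 0, fun K _ _ _ _ s φ _ _ S _ => ?_⟩
  exact Finset.card_le_one.mpr fun a _ b _ => Subsingleton.elim a b

section NSlemmas

variable {K : Type*} [NormedField K] {A : Type*} [CommRing A]

lemma NS_map {A' : Type*} [CommRing A'] (E : A' →+* K) (ψ : A →+* A') (s : K)
    (f : PowerSeries A) : NS E s (PowerSeries.map ψ f) ↔ NS (E.comp ψ) s f := by
  simp [NS]

lemma NS.mul_C {E : A →+* K} {s : K} {f : PowerSeries A} (h : NS E s f) (a : A) :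
    NS E s (f * PowerSeries.C a) := by
  unfold NS at *
  refine (h.mul_right ‖E a‖).congr fun k => ?_
  rw [PowerSeries.coeff_mul_C, map_mul, ← norm_mul]
  congr 1; ring

lemma NS_C (E : A →+* K) (s : K) (a : A) : NS E s (PowerSeries.C a) := by
  refine summable_of_ne_finset_zero (s := {0}) fun k hk => ?_
  have : k ≠ 0 := by simpa using hk
  simp [PowerSeries.coeff_C, this]

lemma pev_mul_C (E : A →+* K) (s : K) (f : PowerSeries A) (a : A) :
    pev E s (f * PowerSeries.C a) = pev E s f * E a := by
  unfold pev
  rw [← tsum_mul_right]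
  congr 1; ext k
  rw [PowerSeries.coeff_mul_C, map_mul]; ring

end NSlemmas

section Elim

variable {B : Type} [CommRing B] [Nontrivial B] {B₀ : Subring B} {ε : ℕ} {n : ℕ}

lemma C_mem_Lat {σ : Type*} {C m : ℕ} {q : MvPolynomial σ B} (h : PI B₀ ε C 0 m q) :
    PowerSeries.C q ∈ Lat B₀ ε C σ := by
  classical
  refine ⟨m, fun k => ?_⟩
  rw [PowerSeries.coeff_C]
  split_ifs with hk
  · subst hk; exact h.mono le_rfl le_rfl (by simp)
  · exact PI.zero _ _ _

section Field

variable {K : Type*} [NormedField K] [IsUltrametricDist K] [CompleteSpace K]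

lemma eval₂Hom_comp_rename_succ (φ : B →+* K) (x : K) (y : Fin n → K) :
    (eval₂Hom φ (Fin.cons x y : Fin (n + 1) → K)).comp
      (rename Fin.succ : MvPolynomial (Fin n) B →ₐ[B] _).toRingHom = eval₂Hom φ y := by
  ext i <;> simp

lemma pev_remainder {C : ℕ} {s : K} {φ : B →+* K} (hs : Good ε C s)
    (hφ : ∀ b ∈ B₀, ‖φ b‖ ≤ 1) {y : Fin n → K} (hy : ∀ i, ‖y i‖ ≤ 1) (x : K)
    {r : ℕ → PowerSeries (MvPolynomial (Fin n) B)} (hr : ∀ j, r j ∈ Lat B₀ ε C (Fin n))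
    (e : ℕ) :
    NS (eval₂Hom φ (Fin.cons x y : Fin (n + 1) → K)) s (∑ j ∈ Finset.range e,
        PowerSeries.map (rename Fin.succ : _ →ₐ[B] _).toRingHom
        (r j) * PowerSeries.C (X 0 ^ j)) ∧
    pev (eval₂Hom φ (Fin.cons x y : Fin (n + 1) → K)) s (∑ j ∈ Finset.range e,
        PowerSeries.map (rename Fin.succ : _ →ₐ[B] _).toRingHom
        (r j) * PowerSeries.C (X 0 ^ j)) =
      ∑ j : Fin e, pev (eval₂Hom φ y) s (r j) * x ^ (j : ℕ) := by
  have h1 : ∀ j, NS (eval₂Hom φ (Fin.cons x y : Fin (n + 1) → K)) s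
      (PowerSeries.map (rename Fin.succ : _ →ₐ[B] _).toRingHom
        (r j) * PowerSeries.C (X 0 ^ j)) := fun j => by
    refine NS.mul_C ?_ _
    rw [NS_map, eval₂Hom_comp_rename_succ]
    exact (Lat.nb hs hφ hy (hr j)).ns hs.lt_one
  constructor
  · unfold NS
    refine (summable_sum (s := Finset.range e) fun j _ => h1 j).of_nonneg_of_le
      (fun _ => norm_nonneg _) fun k => ?_
    rw [map_sum, map_sum, Finset.sum_mul]
    exact norm_sum_le _ _
  · rw [pev_sum fun j _ => h1 j, Finset.sum_range]
    refine Finset.sum_congr rfl fun j _ => ?_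
    rw [pev_mul_C, pev_map, eval₂Hom_comp_rename_succ]
    simp

lemma pev_ne_zero {C : ℕ} {s : K} {φ : B →+* K} {σ : Type*} (hs : Good ε C s)
    (hφ : ∀ b ∈ B₀, ‖φ b‖ ≤ 1) {v : σ → K} (hv : ∀ i, ‖v i‖ ≤ 1)
    {Q : PowerSeries (MvPolynomial σ B)} (hQ : Q ∈ Lat B₀ ε C σ)
    (h0 : PowerSeries.coeff 0 Q = 1) : pev (eval₂Hom φ v) s Q ≠ 0 := by
  intro h
  have h1 : Q - 1 ∈ Lat B₀ ε C σ := sub_mem hQ (one_mem _)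
  have h2 := Lat.nb hs hφ hv h1
  have h3 : pev (eval₂Hom φ v) s (Q - 1) = -1 := by
    have := pev_add (h2.ns hs.lt_one) ((Lat.nb hs hφ hv (one_mem (Lat B₀ ε C σ))).ns hs.lt_one)
    rw [sub_add_cancel, h, pev_one] at this
    linear_combination -this
  have h4 : ‖pev (eval₂Hom φ v) s (Q - 1)‖ ≤ √‖s‖ := by
    refine IsUltrametricDist.norm_tsum_le_of_forall_le_of_nonneg (Real.sqrt_nonneg _) fun k => ?_
    rcases Nat.eq_zero_or_pos k with rfl | hk
    · rw [map_sub, h0]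
      simp
    · exact (h2 k).trans (pow_le_of_le_one (Real.sqrt_nonneg _) (sqrt_lt_one hs.lt_one).le
        hk.ne')
  rw [h3, norm_neg, norm_one] at h4
  exact absurd h4 (not_le.mpr (sqrt_lt_one hs.lt_one))

lemma Iso.of_subtype {s : K} {φ : B →+* K} {ι : Type*} {f : ι → PowerSeries (MvPolynomial (Fin n) B)}
    {y : {y : Fin n → K // ∀ i, ‖y i‖ ≤ 1}}
    (h : Iso {y : {y : Fin n → K // ∀ i, ‖y i‖ ≤ 1} |
      ∀ i, pev (eval₂Hom φ y.1) s (f i) = 0} y) : Iso (Zset s φ f) y.1 := by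
  refine ⟨⟨y.2, h.1⟩, ?_⟩
  have h1 := h.2
  have h2 : ∀ᶠ w : {y : Fin n → K // ∀ i, ‖y i‖ ≤ 1} in 𝓝 y,
      (∀ i, pev (eval₂Hom φ w.1) s (f i) = 0) → w.1 = y.1 := by
    filter_upwards [h1] with w hw h3
    exact congrArg _ (hw h3)
  have h3 := (eventually_nhds_subtype_iff {y : Fin n → K | ∀ i, ‖y i‖ ≤ 1} y
    (fun w => (∀ i, pev (eval₂Hom φ w) s (f i) = 0) → w = y.1)).mp h2
  rw [nhdsWithin_eq_nhds.mpr (eventually_polydisc y.2)] at h3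
  filter_upwards [h3] with w hw hwZ
  exact hw hwZ.2

end Field

set_option maxHeartbeats 1000000 in
/-- If the constant term of some `f i₀` is monic in the variable `X 0`, Weierstrass division
replaces the `f i` by polynomials in `X 0`, and `X 0` is eliminated by bordered minors. -/
lemma hasBound_of_monic [Algebra ℚ B] [IsNoetherianRing B₀] (H : Claim ε n) {C e : ℕ} {ι : Type}
    [Fintype ι] {f : ι → PowerSeries (MvPolynomial (Fin (n + 1)) B)}
    (hf : ∀ i, f i ∈ Lat B₀ ε C (Fin (n + 1))) (i₀ : ι)
    (hM : (MvPolynomial.finSuccEquiv B n (PowerSeries.coeff 0 (f i₀))).Monic)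
    (he : (MvPolynomial.finSuccEquiv B n (PowerSeries.coeff 0 (f i₀))).natDegree = e)
    (hMI : PI B₀ ε C 0 e (PowerSeries.coeff 0 (f i₀))) : HasBound B₀ ε f := by
  classical
  have hX : PI B₀ ε C 0 (1 * e) (X 0 ^ e : MvPolynomial (Fin (n + 1)) B) := by
    have := (PI.X (B₀ := B₀) (ε := ε) C 0 (0 : Fin (n + 1))).pow e
    simpa [mul_comm] using this
  obtain ⟨Q, hQ, r, hr, hdiv, hQ0⟩ := weierstrass (hf i₀) (C_mem_Lat hX) hM he hMI
  have hQ1 : PowerSeries.coeff 0 Q = 1 := by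
    rw [hQ0]
    have h1 : PowerSeries.coeff 0 (PowerSeries.C (X 0 ^ e : MvPolynomial (Fin (n + 1)) B)) =
      X 0 ^ e := by simp
    rw [h1, map_pow, finSuccEquiv_X_zero]
    set M := MvPolynomial.finSuccEquiv B n (PowerSeries.coeff 0 (f i₀)) with hMdef
    have h2 : (Polynomial.X ^ e : Polynomial (MvPolynomial (Fin n) B)) /ₘ M = 1 := by
      refine (Polynomial.div_modByMonic_unique 1 (Polynomial.X ^ e - M) hM ⟨by ring, ?_⟩).1
      have h3 : M.degree = (e : ℕ) := by
        rw [Polynomial.degree_eq_natDegree hM.ne_zero, he]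
      have h4 := Polynomial.degree_sub_lt_left (p := Polynomial.X ^ e) (q := M)
        (by rw [h3, Polynomial.degree_X_pow]) (Polynomial.monic_X_pow e).ne_zero
        (by rw [hM.leadingCoeff, (Polynomial.monic_X_pow e).leadingCoeff])
      rwa [Polynomial.degree_X_pow, ← h3] at h4
    rw [h2, map_one]
  choose Qf hQf rf hrf hdivf _ using fun i => weierstrass (hf i₀) (hf i) hM he hMI
  set R := Lat B₀ ε C (Fin n) with hR
  set P : Polynomial R := Polynomial.X ^ e +
    -∑ j : Fin e, Polynomial.C (⟨r j, hr j⟩ : R) * Polynomial.X ^ (j : ℕ) with hPdef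
  have hdeg : (-∑ j : Fin e, Polynomial.C (⟨r j, hr j⟩ : R) * Polynomial.X ^ (j : ℕ)).degree
      < ((e : ℕ) : WithBot ℕ) := by
    rw [Polynomial.degree_neg]; exact Polynomial.degree_sum_fin_lt _
  have hP : P.Monic := Polynomial.monic_X_pow_add hdeg
  have hPe : P.natDegree = e := by
    refine Polynomial.natDegree_eq_of_degree_eq_some ?_
    rw [hPdef, Polynomial.degree_add_eq_left_of_degree_lt] <;> rw [Polynomial.degree_X_pow]
    exact hdeg
  set F : ι → Polynomial R := fun i =>
    ∑ j : Fin e, Polynomial.C (⟨rf i j, hrf i j⟩ : R) * Polynomial.X ^ (j : ℕ) with hF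
  choose N C' hN using fun c : Choice ι e => H B B₀ C (Fin e × (ι × Fin e))
    (fun j => (bminor P e F c j).1)
    (fun j => (bminor P e F c j).2)
  refine ⟨e * ∑ c, N c, C + ∑ c, C' c, fun K _ _ _ _ s φ hs hφ S hS => ?_⟩
  have hsC : Good ε C s := hs.mono (by omega)
  have hsC' : ∀ c, Good ε (C' c) s := fun c => hs.mono
    ((Finset.single_le_sum (fun _ _ => Nat.zero_le _) (Finset.mem_univ c)).trans (by omega))
  let Y := {y : Fin n → K // ∀ i, ‖y i‖ ≤ 1}
  let ev : Y → (R →+* K) := fun y => evHom hsC hφ y.2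
  have hev : ∀ (y : Y) (x : R), ev y x = pev (eval₂Hom φ y.1) s x.1 := fun y x => rfl
  have hc : ∀ x, Continuous fun y => ev y x := fun x =>
    continuousOn_iff_continuous_domRestrict.mp (continuousOn_pev hsC hφ x.2)
  have hb : ∀ y x, ‖ev y x‖ ≤ 1 := fun y x =>
    (Lat.nb hsC hφ y.2 x.2).norm_le_one hsC.lt_one
  have hcons : ∀ (x : K) (y : Y), ‖x‖ ≤ 1 →
      ∀ i, ‖(Fin.cons x y.1 : Fin (n + 1) → K) i‖ ≤ 1 := fun x y hx i => by
    refine Fin.cases ?_ (fun i => ?_) i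
    · simpa using hx
    · simpa using y.2 i
  -- `P = f i₀ * Q`, where `Q` has no zeros, and `F i ≡ f i` modulo `f i₀`
  have hPev : ∀ (x : K) (y : Y), ‖x‖ ≤ 1 → (P.map (ev y)).eval x =
      pev (eval₂Hom φ (Fin.cons x y.1 : Fin (n + 1) → K)) s (f i₀) *
      pev (eval₂Hom φ (Fin.cons x y.1 : Fin (n + 1) → K)) s Q := by
    intro x y hx
    have hv := hcons x y hx
    have h1 := congrArg (pev (eval₂Hom φ (Fin.cons x y.1 : Fin (n + 1) → K)) s) hdiv
    obtain ⟨h2, h3⟩ := pev_remainder hsC hφ y.2 x hr e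
    rw [pev_add ((Lat.nb hsC hφ hv (mul_mem (hf i₀) hQ)).ns hsC.lt_one) h2, h3,
      pev_mul ((Lat.nb hsC hφ hv (hf i₀)).ns hsC.lt_one)
      ((Lat.nb hsC hφ hv hQ).ns hsC.lt_one), pev_C] at h1
    simp only [map_pow, coe_eval₂Hom, eval₂_X, Fin.cons_zero] at h1
    simp only [hPdef, Polynomial.map_add, Polynomial.map_pow, Polynomial.map_X,
      Polynomial.map_neg, Polynomial.map_sum, Polynomial.map_mul, Polynomial.map_C,
      Polynomial.eval_add, Polynomial.eval_pow, Polynomial.eval_X, Polynomial.eval_neg,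
      Polynomial.eval_finsetSum, Polynomial.eval_mul, Polynomial.eval_C, hev]
    linear_combination h1
  have hFev : ∀ i (x : K) (y : Y), ‖x‖ ≤ 1 →
      pev (eval₂Hom φ (Fin.cons x y.1 : Fin (n + 1) → K)) s (f i) =
      pev (eval₂Hom φ (Fin.cons x y.1 : Fin (n + 1) → K)) s (f i₀) *
      pev (eval₂Hom φ (Fin.cons x y.1 : Fin (n + 1) → K)) s (Qf i) +
      ((F i).map (ev y)).eval x := by
    intro i x y hx
    have hv := hcons x y hx
    have h1 := congrArg (pev (eval₂Hom φ (Fin.cons x y.1 : Fin (n + 1) → K)) s) (hdivf i)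
    obtain ⟨h2, h3⟩ := pev_remainder hsC hφ y.2 x (hrf i) e
    rw [pev_add ((Lat.nb hsC hφ hv (mul_mem (hf i₀) (hQf i))).ns hsC.lt_one) h2, h3,
      pev_mul ((Lat.nb hsC hφ hv (hf i₀)).ns hsC.lt_one)
      ((Lat.nb hsC hφ hv (hQf i)).ns hsC.lt_one)] at h1
    simp only [hF, Polynomial.map_pow, Polynomial.map_X,
      Polynomial.map_sum, Polynomial.map_mul, Polynomial.map_C,
      Polynomial.eval_pow, Polynomial.eval_X,
      Polynomial.eval_finsetSum, Polynomial.eval_mul, Polynomial.eval_C, hev]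
    exact h1
  have hzero : ∀ (x : K) (y : Y), (‖x‖ ≤ 1 ∧ (P.map (ev y)).eval x = 0 ∧
      ∀ i, ((F i).map (ev y)).eval x = 0) ↔ (Fin.cons x y.1 : Fin (n + 1) → K) ∈ Zset s φ f := by
    intro x y
    constructor
    · rintro ⟨hx, h1, h2⟩
      refine ⟨hcons x y hx, ?_⟩
      rw [hPev x y hx] at h1
      have h3 := (mul_eq_zero.mp h1).resolve_right (pev_ne_zero hsC hφ (hcons x y hx) hQ hQ1)
      intro i
      rw [hFev i x y hx, h3, h2, zero_mul, zero_add]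
    · rintro ⟨h1, h2⟩
      have hx : ‖x‖ ≤ 1 := by simpa using h1 0
      refine ⟨hx, by rw [hPev x y hx, h2, zero_mul], fun i => ?_⟩
      have := hFev i x y hx
      rw [h2, h2, zero_mul, zero_add] at this
      exact this.symm
  have htail : ∀ z ∈ S, ∃ c, Iso (Zset s φ fun j =>
      (bminor P e F c j).1) (Fin.tail z) := by
    intro z hz
    have hzi := hS z hz
    have hz1 : ∀ i, ‖Fin.tail z i‖ ≤ 1 := fun i => hzi.1.1 _
    have h1 : Iso {w : K × Y | ‖w.1‖ ≤ 1 ∧ (P.map (ev w.2)).eval w.1 = 0 ∧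
      ∀ i, ((F i).map (ev w.2)).eval w.1 = 0} (z 0, ⟨Fin.tail z, hz1⟩) := by
      refine Iso.transfer (ψ := fun w : K × Y => (Fin.cons w.1 w.2.1 : Fin (n + 1) → K))
        (Z := Zset s φ f) ?_ ?_ ?_ ?_ ?_
      · rintro ⟨a, b⟩ ⟨a', b'⟩ h
        have := Fin.cons_inj.mp h
        exact Prod.ext this.1 (Subtype.ext this.2)
      · refine Continuous.continuousAt ?_
        refine continuous_pi fun i => ?_
        refine Fin.cases ?_ (fun i => ?_) i
        · simpa using continuous_fst
        · simp only [Fin.cons_succ]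
          exact (continuous_apply i).comp (continuous_subtype_val.comp continuous_snd)
      · refine (hzero _ _).mpr ?_
        simpa using hzi.1
      · exact Filter.Eventually.of_forall fun w hw => (hzero _ _).mp hw
      · simpa using hzi
    obtain ⟨c, hc⟩ := Iso.elim ev hc hb hP hPe F h1
    exact ⟨c, Iso.of_subtype hc⟩
  have hfib : S.card ≤ e * (S.image Fin.tail).card := by
    refine Finset.card_le_mul_card_image _ _ fun y hy => ?_
    obtain ⟨z, hz, rfl⟩ := Finset.mem_image.mp hy
    have hz1 : ∀ i, ‖Fin.tail z i‖ ≤ 1 := fun i => (hS z hz).1.1 _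
    set Py := P.map (ev ⟨Fin.tail z, hz1⟩) with hPy
    have h1 : Finset.card ({w ∈ S | Fin.tail w = Fin.tail z}) ≤ Py.roots.toFinset.card := by
      refine Finset.card_le_card_of_injOn (fun w => w 0) ?_ ?_
      · intro w hw
        obtain ⟨hwS, hwt⟩ := Finset.mem_filter.mp hw
        have h2 := (hS w hwS).1
        rw [← Fin.cons_self_tail w, hwt] at h2
        have h3 := ((hzero (w 0) ⟨Fin.tail z, hz1⟩).mpr h2).2.1
        simp only [Finset.mem_coe, Multiset.mem_toFinset]
        rw [Polynomial.mem_roots (hP.map _).ne_zero]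
        exact h3
      · intro w hw w' hw' h
        obtain ⟨_, hwt⟩ := Finset.mem_filter.mp hw
        obtain ⟨_, hwt'⟩ := Finset.mem_filter.mp hw'
        rw [← Fin.cons_self_tail w, ← Fin.cons_self_tail w', hwt, hwt', show w 0 = w' 0 from h]
    refine h1.trans ((Multiset.toFinset_card_le _).trans ((Polynomial.card_roots' _).trans ?_))
    exact (hP.natDegree_map _).le.trans hPe.le
  refine hfib.trans (Nat.mul_le_mul_left _ ?_)
  have hsub : S.image Fin.tail ⊆ Finset.univ.biUnion fun c => (S.image Fin.tail).filter
      (fun y => Iso (Zset s φ fun j =>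
        (bminor P e F c j).1) y) := by
    intro y hy
    obtain ⟨z, hz, rfl⟩ := Finset.mem_image.mp hy
    obtain ⟨c, hc⟩ := htail z hz
    exact Finset.mem_biUnion.mpr ⟨c, Finset.mem_univ _, Finset.mem_filter.mpr ⟨hy, hc⟩⟩
  refine (Finset.card_le_card hsub).trans (Finset.card_biUnion_le.trans ?_)
  exact Finset.sum_le_sum fun c _ => hN c K s φ (hsC' c) hφ _
    fun z hz => (Finset.mem_filter.mp hz).2

end Elim

/-! ### Reduction of a monomial constant term to the monic case -/

section Shear

variable {B : Type} [CommRing B] {B₀ : Subring B} {ε : ℕ} {n : ℕ}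

lemma PI.aeval_monomial {σ τ : Type*} [Fintype σ] {C k m : ℕ} {g : σ → MvPolynomial τ B}
    (hg : ∀ i, PI B₀ ε C 0 1 (g i)) {ν : σ →₀ ℕ} {b : B} (hb : DI B₀ ε C k b)
    (hν : ν.degree ≤ m) : PI B₀ ε C k m (MvPolynomial.C b * ∏ i, g i ^ ν i) := by
  have h1 : PI B₀ ε C 0 (∑ i, ν i * 1) (∏ i, g i ^ ν i) := PI.prod fun i _ => (hg i).pow _
  have h2 : ∑ i, ν i * 1 = ν.degree := by simp [Finsupp.degree_eq_sum]
  rw [h2] at h1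
  exact ((PI.C (m := 0) hb).mul h1).mono le_rfl (by simp) (by omega)

lemma PI.aeval {σ τ : Type*} [Fintype σ] {C k m : ℕ} {g : σ → MvPolynomial τ B}
    (hg : ∀ i, PI B₀ ε C 0 1 (g i)) {q : MvPolynomial σ B} (hq : PI B₀ ε C k m q) :
    PI B₀ ε C k m (MvPolynomial.aeval g q) := by
  rw [aeval_def, eval₂_eq']
  refine PI.sum fun ν hν => ?_
  exact PI.aeval_monomial hg (hq ν).1 ((hq ν).2 (mem_support_iff.mp hν))

/-- The linear forms `X 0` and `X j + X 0`, `j > 0`. -/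
noncomputable def shear (B : Type) [CommRing B] (n : ℕ) : Fin (n + 1) → MvPolynomial (Fin (n + 1)) B :=
  Fin.cases (X 0) fun j => X j.succ + X 0

lemma shear_PI (C : ℕ) (i : Fin (n + 1)) : PI B₀ ε C 0 1 (shear B n i) := by
  refine Fin.cases ?_ (fun j => ?_) i
  · exact PI.X _ _ _
  · exact (PI.X _ _ _).add (PI.X _ _ _)

variable [Nontrivial B]

/-- If the constant term of some `f i₀` is a monomial, a shear makes it monic in `X 0`. -/
lemma hasBound_of_monomial [Algebra ℚ B] [IsNoetherianRing B₀] (H : Claim ε n) {C : ℕ} {ι : Type}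
    [Fintype ι] {f : ι → PowerSeries (MvPolynomial (Fin (n + 1)) B)}
    (hf : ∀ i, f i ∈ Lat B₀ ε C (Fin (n + 1))) (i₀ : ι) (μ : Fin (n + 1) →₀ ℕ)
    (h0 : PowerSeries.coeff 0 (f i₀) = monomial μ 1) : HasBound B₀ ε f := by
  classical
  set τ := MvPolynomial.aeval (R := B) (shear B n) with hτ
  set g : ι → PowerSeries (MvPolynomial (Fin (n + 1)) B) :=
    fun i => PowerSeries.map τ.toRingHom (f i) with hg
  have hgL : ∀ i, g i ∈ Lat B₀ ε C (Fin (n + 1)) := by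
    intro i
    obtain ⟨E, hE⟩ := hf i
    refine ⟨E, fun k => ?_⟩
    rw [hg, PowerSeries.coeff_map]
    exact PI.aeval (shear_PI C) (hE k)
  have hg0 : PowerSeries.coeff 0 (g i₀) = MvPolynomial.C 1 * ∏ i, shear B n i ^ μ i := by
    rw [hg, PowerSeries.coeff_map, h0]
    change τ _ = _
    rw [hτ, MvPolynomial.aeval_monomial, Finsupp.prod_fintype _ _ (by simp)]
    rfl
  have hsm : ∀ i, (MvPolynomial.finSuccEquiv B n (shear B n i)).Monic ∧
      (MvPolynomial.finSuccEquiv B n (shear B n i)).natDegree = 1 := by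
    intro i
    refine Fin.cases ?_ (fun j => ?_) i
    · simp only [shear, Fin.cases_zero, finSuccEquiv_X_zero]
      exact ⟨Polynomial.monic_X, Polynomial.natDegree_X⟩
    · simp only [shear, Fin.cases_succ, map_add, finSuccEquiv_X_zero, finSuccEquiv_X_succ]
      rw [add_comm]
      exact ⟨Polynomial.monic_X_add_C _, Polynomial.natDegree_X_add_C _⟩
  have hg1 : MvPolynomial.finSuccEquiv B n (PowerSeries.coeff 0 (g i₀)) =
      ∏ i, MvPolynomial.finSuccEquiv B n (shear B n i) ^ μ i := by
    rw [hg0, C_1, one_mul, map_prod]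
    simp only [map_pow]
  obtain ⟨N, C', hN⟩ := hasBound_of_monic H hgL i₀ (e := μ.degree)
    (by rw [hg1]; exact Polynomial.monic_prod_of_monic _ _ fun i _ => (hsm i).1.pow _)
    (by
      rw [hg1, Polynomial.natDegree_prod_of_monic _ _ fun i _ => (hsm i).1.pow _,
        Finsupp.degree_eq_sum]
      refine Finset.sum_congr rfl fun i _ => ?_
      rw [(hsm i).1.natDegree_pow, (hsm i).2, mul_one])
    (by
      rw [hg0]
      exact PI.aeval_monomial (shear_PI C) (DI.of_mem B₀.one_mem) le_rfl)
  refine ⟨N, C', fun K _ _ _ _ s φ hs hφ S hS => ?_⟩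
  let T : (Fin (n + 1) → K) → (Fin (n + 1) → K) :=
    fun v => Fin.cases (v 0) fun j => v j.succ + v 0
  let T' : (Fin (n + 1) → K) → (Fin (n + 1) → K) :=
    fun v => Fin.cases (v 0) fun j => v j.succ - v 0
  have hTT' : ∀ v, T (T' v) = v := by
    intro v; funext i
    refine Fin.cases ?_ (fun j => ?_) i <;> simp [T, T']
  have hT'T : ∀ v, T' (T v) = v := by
    intro v; funext i
    refine Fin.cases ?_ (fun j => ?_) i <;> simp [T, T']
  have hT : ∀ v : Fin (n + 1) → K, (∀ i, ‖v i‖ ≤ 1) → ∀ i, ‖T v i‖ ≤ 1 := by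
    intro v hv i
    refine Fin.cases ?_ (fun j => ?_) i
    · exact hv 0
    · exact (IsUltrametricDist.norm_add_le_max _ _).trans (max_le (hv _) (hv _))
  have hT' : ∀ v : Fin (n + 1) → K, (∀ i, ‖v i‖ ≤ 1) → ∀ i, ‖T' v i‖ ≤ 1 := by
    intro v hv i
    refine Fin.cases ?_ (fun j => ?_) i
    · exact hv 0
    · change ‖v j.succ - v 0‖ ≤ 1
      rw [sub_eq_add_neg]
      exact (IsUltrametricDist.norm_add_le_max _ _).trans
        (max_le (hv _) (by rw [norm_neg]; exact hv _))
  have hev : ∀ v i, pev (eval₂Hom φ v) s (g i) = pev (eval₂Hom φ (T v)) s (f i) := by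
    intro v i
    rw [hg, pev_map]
    congr 1
    ext j
    · simp [hτ]
    · refine Fin.cases ?_ (fun j => ?_) j <;> simp [hτ, shear, T]
  have hcT : Continuous T := by
    refine continuous_pi fun i => ?_
    refine Fin.cases ?_ (fun j => ?_) i
    · exact continuous_apply 0
    · exact (continuous_apply _).add (continuous_apply _)
  have h1 := hN K s φ hs hφ (S.image T') (by
    intro z hz
    obtain ⟨w, hw, rfl⟩ := Finset.mem_image.mp hz
    have hwi := hS w hw
    refine Iso.transfer (ψ := T) (Z := Zset s φ f) (Function.LeftInverse.injective hT'T)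
      hcT.continuousAt ⟨hT' _ hwi.1.1, fun i => ?_⟩ (Eventually.of_forall fun v hv =>
        ⟨hT _ hv.1, fun i => ?_⟩) (by rwa [hTT'])
    · rw [hev, hTT']; exact hwi.1.2 i
    · rw [← hev]; exact hv.2 i)
  rwa [Finset.card_image_of_injective _ (Function.LeftInverse.injective hTT')] at h1

end Shear

/-! ### Uniform division of power series in one variable -/

section Div

variable {B : Type*} [CommRing B] {B₀ : Subring B} {ε : ℕ}

lemma DI.scale {C C' k k' : ℕ} {b : B} (h : DI B₀ ε C k b) (hk : C * k ≤ C' * k') :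
    DI B₀ ε C' k' b := by
  obtain ⟨c, hc⟩ : den ε C k ∣ den ε C' k' := pow_dvd_pow_of_dvd (Nat.factorial_dvd_factorial hk) ε
  unfold DI at *
  rw [hc, Nat.cast_mul, mul_comm _ (c : B), mul_assoc]
  exact B₀.mul_mem (natCast_mem _ _) h

/-- Power series with coefficients in `B₀`. -/
def intPS (B₀ : Subring B) : Subring (PowerSeries B) where
  carrier := {f | ∀ k, PowerSeries.coeff k f ∈ B₀}
  zero_mem' := fun k => by simp
  one_mem' := fun k => by
    rw [PowerSeries.coeff_one]; split_ifs
    · exact B₀.one_mem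
    · exact B₀.zero_mem
  add_mem' := fun ha hb k => by rw [map_add]; exact B₀.add_mem (ha k) (hb k)
  neg_mem' := fun ha k => by rw [map_neg]; exact B₀.neg_mem (ha k)
  mul_mem' := fun ha hb k => by
    rw [PowerSeries.coeff_mul]; exact B₀.sum_mem fun x _ => B₀.mul_mem (ha _) (hb _)

lemma C_mem_intPS {b : B} (hb : b ∈ B₀) : PowerSeries.C b ∈ intPS B₀ := fun k => by
  rw [PowerSeries.coeff_C]; split_ifs
  · exact hb
  · exact B₀.zero_mem

lemma X_pow_mem_intPS (a : ℕ) : (PowerSeries.X : PowerSeries B) ^ a ∈ intPS B₀ := fun k => by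
  rw [PowerSeries.coeff_X_pow]; split_ifs
  · exact B₀.one_mem
  · exact B₀.zero_mem

/-- Multiplication by an integral series inside an `intPS B₀`-submodule. -/
lemma mul_mem_of_intPS {N : Submodule (intPS B₀) (PowerSeries B)} {a y : PowerSeries B}
    (ha : a ∈ intPS B₀) (hy : y ∈ N) : a * y ∈ N :=
  N.smul_mem (⟨a, ha⟩ : intPS B₀) hy

/-- The ideal of initial coefficients of the members of `N`: the polynomials `P` such that, for each
`k`, the coefficient `P.coeff k` is also the coefficient of `X ^ k` of a member of `N` of order at
least `k`. -/
def initIdeal (N : Submodule (intPS B₀) (PowerSeries B)) : Ideal (Polynomial B₀) where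
  carrier := {P | ∀ k, ∃ y ∈ N, (∀ i < k, PowerSeries.coeff i y = 0) ∧
    PowerSeries.coeff k y = (P.coeff k : B)}
  zero_mem' := fun k => ⟨0, N.zero_mem, by simp, by simp⟩
  add_mem' := fun {P Q} hP hQ k => by
    obtain ⟨y, hy, h1, h2⟩ := hP k
    obtain ⟨z, hz, h3, h4⟩ := hQ k
    refine ⟨y + z, N.add_mem hy hz, fun i hi => ?_, ?_⟩
    · rw [map_add, h1 i hi, h3 i hi, add_zero]
    · rw [map_add, h2, h4]; simp
  smul_mem' := fun Q P hP k => by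
    choose y hy h1 h2 using hP
    refine ⟨∑ x ∈ Finset.HasAntidiagonal.antidiagonal k,
      PowerSeries.C (Q.coeff x.1 : B) * (PowerSeries.X ^ x.1 * y x.2), ?_, fun i hi => ?_, ?_⟩
    · exact N.sum_mem fun x _ => mul_mem_of_intPS (C_mem_intPS (Q.coeff x.1).2)
        (mul_mem_of_intPS (X_pow_mem_intPS _) (hy _))
    · rw [map_sum]
      refine Finset.sum_eq_zero fun x hx => ?_
      have := Finset.HasAntidiagonal.mem_antidiagonal.mp hx
      rw [PowerSeries.coeff_C_mul, PowerSeries.coeff_X_pow_mul']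
      split_ifs with h
      · rw [h1 _ _ (by omega), mul_zero]
      · rw [mul_zero]
    · rw [map_sum, smul_eq_mul, Polynomial.coeff_mul]
      push_cast
      refine Finset.sum_congr rfl fun x hx => ?_
      have := Finset.HasAntidiagonal.mem_antidiagonal.mp hx
      rw [PowerSeries.coeff_C_mul, PowerSeries.coeff_X_pow_mul', if_pos (by omega),
        ← h2]
      congr 3; omega

/-- Finitely many members of `N` generate all initial coefficients, because `initIdeal N` is finitely
generated by Hilbert's basis theorem. -/
lemma exists_initial [IsNoetherianRing B₀] (N : Submodule (intPS B₀) (PowerSeries B)) :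
    ∃ (m : ℕ) (l : Fin m → ℕ) (G : Fin m → PowerSeries B),
      (∀ t, PowerSeries.X ^ l t * G t ∈ N) ∧
      ∀ k, ∀ y ∈ N, (∀ i < k, PowerSeries.coeff i y = 0) → PowerSeries.coeff k y ∈ B₀ →
        ∃ c : Fin m → B, (∀ t, c t ∈ B₀) ∧ (∀ t, k < l t → c t = 0) ∧
          PowerSeries.coeff k y = ∑ t, c t * PowerSeries.coeff 0 (G t) := by
  classical
  obtain ⟨s, hs⟩ := (isNoetherianRing_iff_ideal_fg _).mp inferInstance (initIdeal N)
  set M := s.sup Polynomial.natDegree with hM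
  let T := s × Fin (M + 1)
  have hsJ : ∀ P ∈ s, P ∈ initIdeal N := fun P hP => hs ▸ Ideal.subset_span hP
  have hG : ∀ t : T, ∃ G, PowerSeries.X ^ (t.2 : ℕ) * G ∈ N ∧
      PowerSeries.coeff 0 G = ((t.1 : Polynomial B₀).coeff t.2 : B) := by
    intro t
    obtain ⟨y, hy, h1, h2⟩ := hsJ t.1 t.1.2 t.2
    obtain ⟨G, hG⟩ := PowerSeries.X_pow_dvd_iff.mpr h1
    refine ⟨G, hG ▸ hy, ?_⟩
    rw [← h2, hG, PowerSeries.coeff_X_pow_mul']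
    simp
  choose G hGN hG0 using hG
  let eT := Fintype.equivFin T
  refine ⟨Fintype.card T, fun t => ((eT.symm t).2 : ℕ), fun t => G (eT.symm t),
    fun t => hGN _, fun k y hy h0 hk => ?_⟩
  have hP : Polynomial.monomial k (⟨_, hk⟩ : B₀) ∈ initIdeal N := by
    intro j
    rcases eq_or_ne k j with rfl | hj
    · exact ⟨y, hy, h0, by simp⟩
    · exact ⟨0, N.zero_mem, by simp, by simp [Polynomial.coeff_monomial, hj]⟩
  rw [← hs, Ideal.span, Submodule.mem_span_finset] at hP
  obtain ⟨q, -, hq⟩ := hP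
  have h1 := congrArg (fun P => (P.coeff k : B)) hq
  simp only [Polynomial.finsetSum_coeff, smul_eq_mul, Polynomial.coeff_monomial, if_true] at h1
  have h2 : ∀ P ∈ s, (((q P * P).coeff k : B₀) : B) = ∑ j : Fin (M + 1),
      (if (j : ℕ) ≤ k then ((q P).coeff (k - j) : B) else 0) * (P.coeff j : B) := by
    intro P hP
    rw [mul_comm, Polynomial.coeff_mul, Finset.Nat.sum_antidiagonal_eq_sum_range_succ_mk,
      Fin.sum_univ_eq_sum_range
        (fun j => (if j ≤ k then ((q P).coeff (k - j) : B) else 0) * (P.coeff j : B))]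
    push_cast
    have hPM : P.natDegree ≤ M := Finset.le_sup hP
    have e1 : ∑ j ∈ Finset.range (k + 1), (P.coeff j : B) * ((q P).coeff (k - j) : B) =
        ∑ j ∈ Finset.range (k + 1 + (M + 1)),
          (if j ≤ k then ((q P).coeff (k - j) : B) else 0) * (P.coeff j : B) := by
      rw [← Finset.sum_subset (s₁ := Finset.range (k + 1)) (s₂ := Finset.range (k + 1 + (M + 1)))
        (f := fun j => (if j ≤ k then ((q P).coeff (k - j) : B) else 0) * (P.coeff j : B))]
      · refine Finset.sum_congr rfl fun j hj => ?_
        rw [if_pos (by have := Finset.mem_range.mp hj; omega), mul_comm]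
      · exact Finset.range_subset_range.mpr (by omega)
      · intro j _ hj
        rw [if_neg (by rw [Finset.mem_range] at hj; omega), zero_mul]
    rw [e1]
    symm
    refine Finset.sum_subset (Finset.range_subset_range.mpr (by omega)) fun j _ hj => ?_
    rw [Polynomial.coeff_eq_zero_of_natDegree_lt (p := P) (by rw [Finset.mem_range] at hj; omega)]
    simp
  refine ⟨fun t => if ((eT.symm t).2 : ℕ) ≤ k then
    ((q (eT.symm t).1).coeff (k - (eT.symm t).2) : B) else 0, fun t => ?_, fun t ht => ?_, ?_⟩
  · dsimp only
    split_ifs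
    · exact ((q _).coeff _).2
    · exact B₀.zero_mem
  · exact if_neg (not_le.mpr ht)
  · rw [Equiv.sum_comp eT.symm (fun t : T => (if (t.2 : ℕ) ≤ k then
      ((q t.1).coeff (k - t.2) : B) else 0) * PowerSeries.coeff 0 (G t)), Fintype.sum_prod_type,
      ← h1]
    push_cast
    rw [← Finset.sum_coe_sort s]
    refine Finset.sum_congr rfl fun P _ => ?_
    rw [h2 P P.2]
    refine Finset.sum_congr rfl fun j _ => ?_
    rw [hG0]

end Div

section Div

variable {B : Type*} [CommRing B] [Algebra ℚ B] {B₀ : Subring B} {ε : ℕ}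

/-- All members of a family of power series with controlled denominators are combinations, with
controlled denominators, of finitely many of them. -/
lemma exists_div [IsNoetherianRing B₀] {C : ℕ} {ι : Type*} (a : ι → ℕ) (g : ι → PowerSeries B)
    (hg : ∀ ν k, DI B₀ ε C (a ν + k) (PowerSeries.coeff k (g ν))) :
    ∃ (S : Finset ι) (C' : ℕ) (h : ι → ι → PowerSeries B), C ≤ C' ∧ ∀ ν, 1 ≤ a ν →
      g ν = ∑ μ ∈ S, h ν μ * g μ ∧ ∀ μ k, DI B₀ ε C' (a ν + k) (PowerSeries.coeff k (h ν μ)) := by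
  classical
  -- The initial coefficients of the `intPS B₀`-module `N` generated by the family come from finitely
  -- many members `X ^ l t * G t`, and these involve only finitely many of the `g μ`.
  set N : Submodule (intPS B₀) (PowerSeries B) := Submodule.span (intPS B₀) (Set.range g) with hN
  obtain ⟨m, l, G, hGN, hinit⟩ := exists_initial N
  have hA : ∀ t, ∃ c : ι →₀ intPS B₀, c.sum (fun i x => x • g i) = PowerSeries.X ^ l t * G t :=
    fun t => Finsupp.mem_span_range_iff_exists_finsupp.mp (hGN t)
  choose A hA using hA
  set S : Finset ι := Finset.univ.biUnion fun t => (A t).support with hS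
  have hAS : ∀ t, PowerSeries.X ^ l t * G t = ∑ μ ∈ S, (A t μ : PowerSeries B) * g μ := by
    intro t
    rw [← hA, Finsupp.sum]
    refine Finset.sum_subset (Finset.subset_biUnion_of_mem (fun t => (A t).support)
      (Finset.mem_univ t)) fun μ _ hμ => ?_
    rw [Finsupp.notMem_support_iff.mp hμ, zero_smul]
  set M := S.sup a + Finset.univ.sup l with hM
  have hlM : ∀ t, l t ≤ M := fun t => (Finset.le_sup (Finset.mem_univ t)).trans (by omega)
  set C₁ := C * (1 + M) with hC₁
  have hGDI : ∀ t k, 1 ≤ k → DI B₀ ε C₁ k (PowerSeries.coeff k (G t)) := by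
    intro t k hk
    have h1 : PowerSeries.coeff k (G t) = PowerSeries.coeff (k + l t) (PowerSeries.X ^ l t * G t) := by
      rw [PowerSeries.coeff_X_pow_mul]
    rw [h1, hAS, map_sum]
    refine DI.sum fun μ hμ => ?_
    rw [PowerSeries.coeff_mul]
    refine DI.sum fun x hx => ?_
    have hx' := Finset.HasAntidiagonal.mem_antidiagonal.mp hx
    have h2 : DI B₀ ε C (0 + (a μ + x.2))
      (PowerSeries.coeff x.1 (A t μ : PowerSeries B) * PowerSeries.coeff x.2 (g μ)) :=
      (DI.of_mem ((A t μ).2 _)).mul (hg μ x.2)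
    refine h2.scale ?_
    rw [hC₁, mul_assoc]
    refine Nat.mul_le_mul_left _ ?_
    have h3 : a μ ≤ S.sup a := Finset.le_sup hμ
    have h4 : l t ≤ Finset.univ.sup l := Finset.le_sup (Finset.mem_univ t)
    have h5 : M ≤ M * k := Nat.le_mul_of_pos_right _ hk
    rw [add_mul, one_mul]
    omega
  -- one step of the division: kill the coefficient of index `k`
  let Inv : ℕ → ℕ → PowerSeries B → Prop := fun a k r =>
    (∀ i < k, PowerSeries.coeff i r = 0) ∧ (∀ i, DI B₀ ε C₁ (a + i) (PowerSeries.coeff i r)) ∧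
      PowerSeries.C ((den ε C₁ (a + k) : ℕ) : B) * r ∈ N
  have step : ∀ a k r, Inv a k r → ∃ c : Fin m → B, (∀ t, DI B₀ ε C₁ (a + k) (c t)) ∧
      (∀ t, k < l t → c t = 0) ∧
      Inv a (k + 1) (r - ∑ t, PowerSeries.C (c t) * (PowerSeries.X ^ k * G t)) := by
    intro a k r ⟨h1, h2, h3⟩
    set D : B := ((den ε C₁ (a + k) : ℕ) : B) with hD
    obtain ⟨c, hc1, hc2, hc3⟩ := hinit k _ h3 (fun i hi => by
      rw [PowerSeries.coeff_C_mul, h1 i hi, mul_zero]) (by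
      rw [PowerSeries.coeff_C_mul]; exact h2 k)
    rw [PowerSeries.coeff_C_mul] at hc3
    set D' : B := algebraMap ℚ B (1 / (den ε C₁ (a + k) : ℕ)) with hD'
    have hDD' : D * D' = 1 := by
      have h5 : D = algebraMap ℚ B ((den ε C₁ (a + k) : ℕ) : ℚ) := by simp [hD]
      rw [h5, hD', ← map_mul, mul_one_div_cancel (by exact_mod_cast den_ne_zero _ _ _), map_one]
    have hcDI : ∀ t, DI B₀ ε C₁ (a + k) (D' * c t) := fun t => by
      change D * (D' * c t) ∈ B₀
      rw [← mul_assoc, hDD', one_mul]; exact hc1 t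
    have hzero : ∀ i < k + 1, PowerSeries.coeff i
        (r - ∑ t, PowerSeries.C (D' * c t) * (PowerSeries.X ^ k * G t)) = 0 := by
      intro i hi
      rw [map_sub, map_sum]
      simp only [PowerSeries.coeff_C_mul, PowerSeries.coeff_X_pow_mul']
      rcases Nat.lt_succ_iff_lt_or_eq.mp hi with hik | rfl
      · simp [h1 i hik, hik]
      · simp only [le_refl, if_true, Nat.sub_self, mul_assoc, ← Finset.mul_sum]
        rw [← hc3, ← mul_assoc, mul_comm D', hDD', one_mul, sub_self]
    refine ⟨fun t => D' * c t, hcDI, fun t ht => by simp only [hc2 t ht, mul_zero], hzero, ?_, ?_⟩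
    · intro i
      by_cases hi : i < k + 1
      · rw [hzero i hi]; exact DI.zero _ _
      · rw [map_sub, map_sum]
        refine (h2 i).sub (DI.sum fun t _ => ?_)
        rw [PowerSeries.coeff_C_mul, PowerSeries.coeff_X_pow_mul', if_pos (by omega)]
        exact ((hcDI t).mul (hGDI t (i - k) (by omega))).mono le_rfl (by omega)
    · obtain ⟨q, hq⟩ := den_dvd ε (le_refl C₁) (show a + k ≤ a + (k + 1) by omega)
      rw [hq, Nat.cast_mul, mul_comm _ (q : B), map_mul, mul_assoc]
      refine mul_mem_of_intPS (C_mem_intPS (natCast_mem _ _)) ?_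
      rw [mul_sub, Finset.mul_sum]
      refine N.sub_mem h3 (N.sum_mem fun t _ => ?_)
      have hcc : PowerSeries.C D * (PowerSeries.C (D' * c t) * (PowerSeries.X ^ k * G t)) =
          PowerSeries.C (c t) * (PowerSeries.X ^ k * G t) := by
        rw [← mul_assoc, ← map_mul, ← mul_assoc D, hDD', one_mul]
      rw [hcc]
      by_cases hlt : l t ≤ k
      · have : PowerSeries.X ^ k * G t = PowerSeries.X ^ (k - l t) * (PowerSeries.X ^ l t * G t) := by
          rw [← mul_assoc, ← pow_add, Nat.sub_add_cancel hlt]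
        rw [this]
        exact mul_mem_of_intPS (C_mem_intPS (hc1 t))
          (mul_mem_of_intPS (X_pow_mem_intPS _) (hGN t))
      · rw [hc2 t (by omega), map_zero, zero_mul]; exact N.zero_mem
  -- iteration of the step; the constants `c t` of step `k` are the coefficients of the quotients
  have main : ∀ ν, 1 ≤ a ν → ∃ w : Fin m → PowerSeries B,
      g ν = ∑ t, w t * (PowerSeries.X ^ l t * G t) ∧
      ∀ t k, DI B₀ ε (C₁ * (1 + M)) (a ν + k) (PowerSeries.coeff k (w t)) := by
    intro ν hν
    choose c hc1 hc2 hc3 using step (a ν)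
    let seq : (k : ℕ) → {r // Inv (a ν) k r} := fun k => Nat.rec
      ⟨g ν, fun i hi => absurd hi (Nat.not_lt_zero i), fun i => (hg ν i).scale
        (Nat.mul_le_mul_right _ (Nat.le_mul_of_pos_right _ (by omega))),
        mul_mem_of_intPS (C_mem_intPS (natCast_mem _ _)) (Submodule.subset_span ⟨ν, rfl⟩)⟩
      (fun k r => ⟨_, hc3 k r.1 r.2⟩) k
    let d : ℕ → Fin m → B := fun k => c k (seq k).1 (seq k).2
    have hseq : ∀ K, g ν = ∑ t, (∑ k ∈ Finset.range K, PowerSeries.C (d k t) *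
        PowerSeries.X ^ k) * G t + (seq K).1 := by
      intro K
      induction K with
      | zero => simp [seq]
      | succ K ih =>
        have h1 : (seq (K + 1)).1 = (seq K).1 - ∑ t, PowerSeries.C (d K t) *
          (PowerSeries.X ^ K * G t) := rfl
        rw [h1]
        simp only [Finset.sum_range_succ, add_mul, Finset.sum_add_distrib, mul_assoc]
        simp only [Finset.sum_mul, mul_assoc] at ih ⊢
        rw [add_add_sub_cancel]
        exact ih
    refine ⟨fun t => PowerSeries.mk fun k => d (k + l t) t, ?_, fun t k => ?_⟩
    · have hW : ∀ t, (PowerSeries.mk fun k => d (k + l t) t) * (PowerSeries.X ^ l t * G t) =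
          (PowerSeries.mk fun k => d k t) * G t := by
        intro t
        rw [← mul_assoc]
        congr 1
        ext k
        rw [PowerSeries.coeff_mul_X_pow']
        split_ifs with h
        · rw [PowerSeries.coeff_mk, PowerSeries.coeff_mk, Nat.sub_add_cancel h]
        · rw [PowerSeries.coeff_mk]; exact (hc2 k _ _ t (by omega)).symm
      rw [Finset.sum_congr rfl fun t _ => hW t]
      ext i
      conv_lhs => rw [hseq (i + 1)]
      rw [map_add, (seq (i + 1)).2.1 i (by omega), add_zero, map_sum, map_sum]
      refine Finset.sum_congr rfl fun t _ => ?_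
      rw [PowerSeries.coeff_mul, PowerSeries.coeff_mul]
      refine Finset.sum_congr rfl fun x hx => ?_
      have hx' := Finset.HasAntidiagonal.mem_antidiagonal.mp hx
      congr 1
      rw [map_sum, PowerSeries.coeff_mk, Finset.sum_eq_single x.1]
      · simp
      · intro k _ hk
        simp [PowerSeries.coeff_X_pow, hk.symm]
      · intro h
        exact absurd (Finset.mem_range.mpr (by omega)) h
    · rw [PowerSeries.coeff_mk]
      refine (hc1 (k + l t) _ _ t).scale ?_
      rw [mul_assoc C₁]
      refine Nat.mul_le_mul_left _ ?_
      have h1 := hlM t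
      have h2 : M ≤ M * (a ν + k) := Nat.le_mul_of_pos_right _ (by omega)
      rw [add_mul, one_mul]; omega
  choose! w hw1 hw2 using main
  refine ⟨S, C₁ * (1 + M), fun ν μ => ∑ t, w ν t * (A t μ : PowerSeries B), ?_, fun ν hν => ⟨?_, ?_⟩⟩
  · rw [hC₁, mul_assoc]
    exact Nat.le_mul_of_pos_right _ (by positivity)
  · conv_lhs => rw [hw1 ν hν]
    simp only [hAS, Finset.mul_sum, Finset.sum_mul]
    rw [Finset.sum_comm]
    refine Finset.sum_congr rfl fun μ _ => Finset.sum_congr rfl fun t _ => ?_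
    ring
  · intro μ k
    rw [map_sum]
    refine DI.sum fun t _ => ?_
    rw [PowerSeries.coeff_mul]
    refine DI.sum fun x hx => ?_
    have hx' := Finset.HasAntidiagonal.mem_antidiagonal.mp hx
    exact ((hw2 ν hν t x.1).mul (DI.of_mem (k := 0) ((A t μ).2 x.2))).mono le_rfl (by omega)

end Div

/-! ### Choice of weights -/

/-- For some bounded weight `x` a single one of the quantities `γ μ * Q ^ (x * N μ)` dominates all
the others by a factor `Q`. -/
lemma exists_gap {T : Type*} [Fintype T] (N : T → ℕ) (hN : Function.Injective N) (M : ℕ)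
    (hM : ∀ μ, N μ ≤ M) (γ : T → ℝ) (hγ : ∀ μ, 0 ≤ γ μ) (h0 : ∃ μ, γ μ ≠ 0) {Q : ℝ} (hQ : 1 < Q) :
    ∃ x : ℕ, x ≤ 2 * M + 3 ∧ ∃ μ₀, 0 < γ μ₀ ∧
      ∀ μ, μ ≠ μ₀ → Q * (γ μ * Q ^ (x * N μ)) ≤ γ μ₀ * Q ^ (x * N μ₀) := by
  classical
  obtain ⟨μ₁, hμ₁⟩ := h0
  have hQ0 : 0 < Q := by linarith
  have hmax : ∀ t : ℕ, ∃ m, ∀ μ, γ μ * Q ^ (2 * t * N μ) ≤ γ m * Q ^ (2 * t * N m) := fun t => by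
    obtain ⟨m, -, hm⟩ := Finset.exists_max_image Finset.univ (fun μ => γ μ * Q ^ (2 * t * N μ))
      ⟨μ₁, Finset.mem_univ _⟩
    exact ⟨m, fun μ => hm μ (Finset.mem_univ _)⟩
  -- Let `m t` be a maximizer for the weight `2 t`. As `N (m t)` is nondecreasing in `t` and bounded by
  -- `M`, it is stationary at some `t ≤ M`, and for the weight `2 t + 1` there is a gap.
  choose m hm using hmax
  have hpos : ∀ t, 0 < γ (m t) := by
    intro t
    have h1 : 0 < γ μ₁ * Q ^ (2 * t * N μ₁) :=
      mul_pos (lt_of_le_of_ne (hγ _) (Ne.symm hμ₁)) (pow_pos hQ0 _)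
    exact pos_of_mul_pos_left (h1.trans_le (hm t μ₁)) (pow_nonneg hQ0.le _)
  have hmono : ∀ t, N (m t) ≤ N (m (t + 1)) := by
    intro t
    by_contra hlt
    push Not at hlt
    have h1 := hm t (m (t + 1))
    have h2 := hm (t + 1) (m t)
    have h3 := mul_le_mul h1 h2 (by have := hγ (m t); positivity) (by have := hγ (m t); positivity)
    have h4 : Q ^ (2 * t * N (m (t + 1)) + 2 * (t + 1) * N (m t)) ≤
        Q ^ (2 * t * N (m t) + 2 * (t + 1) * N (m (t + 1))) := by
      have h5 : 0 < γ (m t) * γ (m (t + 1)) := mul_pos (hpos _) (hpos _)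
      refine le_of_mul_le_mul_left ?_ h5
      rw [pow_add, pow_add]
      linarith
    have h5 := (pow_le_pow_iff_right₀ hQ).mp h4
    nlinarith
  obtain ⟨t, ht, hteq⟩ : ∃ t ≤ M, N (m t) = N (m (t + 1)) := by
    by_contra hne
    push Not at hne
    have : ∀ t ≤ M + 1, t ≤ N (m t) := by
      intro t
      induction t with
      | zero => intro _; omega
      | succ t ih =>
        intro h
        have h1 := ih (by omega)
        have h2 := hmono t
        have h3 := hne t (by omega)
        omega
    have h1 := this (M + 1) le_rfl
    have h2 := hM (m (M + 1))
    omega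
  have hmm := hN hteq
  refine ⟨2 * t + 1, by omega, m t, hpos t, fun μ hμ => ?_⟩
  rcases lt_trichotomy (N μ) (N (m t)) with h | h | h
  · calc Q * (γ μ * Q ^ ((2 * t + 1) * N μ))
        = γ μ * Q ^ (2 * t * N μ) * Q ^ (N μ + 1) := by ring
      _ ≤ γ (m t) * Q ^ (2 * t * N (m t)) * Q ^ (N μ + 1) := by
          exact mul_le_mul_of_nonneg_right (hm t μ) (pow_nonneg hQ0.le _)
      _ ≤ γ (m t) * Q ^ (2 * t * N (m t)) * Q ^ (N (m t)) := by
          have := hpos t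
          gcongr
          · exact hQ.le
          · exact h
      _ = _ := by ring
  · exact absurd (hN h) hμ
  · have h1 := hm (t + 1) μ
    rw [← hmm] at h1
    refine le_of_mul_le_mul_right ?_ (pow_pos hQ0 (N μ))
    calc Q * (γ μ * Q ^ ((2 * t + 1) * N μ)) * Q ^ N μ
        = γ μ * Q ^ (2 * (t + 1) * N μ) * Q := by ring
      _ ≤ γ (m t) * Q ^ (2 * (t + 1) * N (m t)) * Q := by gcongr
      _ = γ (m t) * Q ^ ((2 * t + 1) * N (m t)) * Q ^ (N (m t) + 1) := by ring
      _ ≤ γ (m t) * Q ^ ((2 * t + 1) * N (m t)) * Q ^ (N μ) := by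
          have := hpos t
          gcongr
          · exact hQ.le
          · exact h

/-- Exponents of degree at most `d` are separated by their expansion in base `d + 1`. -/
lemma base_injective {n d : ℕ} {μ ν : Fin n →₀ ℕ} (hμ : μ.degree ≤ d) (hν : ν.degree ≤ d)
    (h : ∑ i, μ i * (d + 1) ^ (i : ℕ) = ∑ i, ν i * (d + 1) ^ (i : ℕ)) : μ = ν := by
  induction n with
  | zero => exact Subsingleton.elim _ _
  | succ n ih =>
    have hle : ∀ (μ : Fin (n + 1) →₀ ℕ), μ.degree = μ 0 + μ.tail.degree := fun μ => by
      simp only [Finsupp.degree_eq_sum, Fin.sum_univ_succ]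
      rfl
    have hs : ∀ (μ : Fin (n + 1) →₀ ℕ), ∑ i, μ i * (d + 1) ^ (i : ℕ) =
        μ 0 + (d + 1) * ∑ i, μ.tail i * (d + 1) ^ (i : ℕ) := fun μ => by
      rw [Fin.sum_univ_succ, Finset.mul_sum]
      congr 1
      · simp
      · refine Finset.sum_congr rfl fun i _ => ?_
        rw [Finsupp.tail_apply, Fin.val_succ, pow_succ]; ring
    rw [hs, hs] at h
    rw [hle] at hμ hν
    have h0 : μ 0 = ν 0 := by
      have := congrArg (· % (d + 1)) h
      simpa [Nat.add_mul_mod_self_left, Nat.mod_eq_of_lt (show μ 0 < d + 1 by omega),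
        Nat.mod_eq_of_lt (show ν 0 < d + 1 by omega)] using this
    have h1 : μ.tail = ν.tail := ih (by omega) (by omega) (by
      rw [h0] at h
      exact Nat.eq_of_mul_eq_mul_left (Nat.succ_pos d) (Nat.add_left_cancel h))
    rw [← Finsupp.cons_tail μ, ← Finsupp.cons_tail ν, h0, h1]

/-! ### Power series given by families of one-variable series -/

section Fam

variable {B : Type*} [CommRing B] {B₀ : Subring B} {ε : ℕ} {n : ℕ}

variable (B₀ ε) in
/-- The condition for `∑ F ν X ^ ν` to define a member of `Lat`. -/
def FamOK (C d : ℕ) (F : (Fin n →₀ ℕ) → PowerSeries B) : Prop :=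
  ∀ ν k, DI B₀ ε C k (PowerSeries.coeff k (F ν)) ∧
    (PowerSeries.coeff k (F ν) ≠ 0 → ν.degree ≤ k + d)

/-- The exponents of degree at most `d`. -/
noncomputable def expFinset (n d : ℕ) : Finset (Fin n →₀ ℕ) := (Finsupp.finite_of_degree_le d).toFinset

lemma mem_expFinset {n d : ℕ} {ν : Fin n →₀ ℕ} : ν ∈ expFinset n d ↔ ν.degree ≤ d := by
  simp [expFinset]

/-- The power series `∑ F ν X ^ ν`. -/
noncomputable def ofFam (d : ℕ) (F : (Fin n →₀ ℕ) → PowerSeries B) :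
    PowerSeries (MvPolynomial (Fin n) B) :=
  PowerSeries.mk fun k => ∑ ν ∈ expFinset n (k + d), monomial ν (PowerSeries.coeff k (F ν))

lemma ofFam_mem_Lat {C d : ℕ} {F : (Fin n →₀ ℕ) → PowerSeries B} (h : FamOK B₀ ε C d F) :
    ofFam d F ∈ Lat B₀ ε C (Fin n) := by
  refine ⟨d + 1, fun k => ?_⟩
  rw [ofFam, PowerSeries.coeff_mk]
  refine PI.sum fun ν hν => PI.monomial (h ν k).1 fun _ => (mem_expFinset.mp hν).trans ?_
  nlinarith

variable {K : Type*} [NormedField K] [IsUltrametricDist K] [CompleteSpace K]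

lemma pev_ofFam {C d : ℕ} {F : (Fin n →₀ ℕ) → PowerSeries B} (h : FamOK B₀ ε C d F) {s : K}
    {φ : B →+* K} (hs : Good ε C s) (hφ : ∀ b ∈ B₀, ‖φ b‖ ≤ 1) {v : Fin n → K}
    (hv : ∀ i, ‖v i‖ ≤ 1) :
    pev (eval₂Hom φ v) s (ofFam d F) = ∑' ν, pev φ s (F ν) * ∏ i, v i ^ ν i := by
  set t : ℕ → (Fin n →₀ ℕ) → K :=
    fun k ν => φ (PowerSeries.coeff k (F ν)) * s ^ k * ∏ i, v i ^ ν i with ht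
  have hprod : ∀ ν : Fin n →₀ ℕ, ‖∏ i, v i ^ ν i‖ ≤ 1 := fun ν => by
    rw [norm_prod]
    exact Finset.prod_le_one (fun _ _ => norm_nonneg _) fun i _ => by
      rw [norm_pow]; exact pow_le_one₀ (norm_nonneg _) (hv i)
  have hbd : ∀ k ν, ‖t k ν‖ ≤ (√‖s‖) ^ k := fun k ν => by
    rw [ht, norm_mul]
    exact (mul_le_of_le_one_right (norm_nonneg _) (hprod ν)).trans
      (hs.term_le ((h ν k).1.norm_le hφ))
  have hsum : Summable (Function.uncurry t) := by
    refine NonarchimedeanAddGroup.summable_of_tendsto_cofinite_zero ?_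
    rw [NormedAddGroup.tendsto_nhds_zero]
    intro δ hδ
    obtain ⟨k₀, hk₀⟩ := exists_pow_lt_of_lt_one hδ (sqrt_lt_one hs.lt_one)
    refine Set.Finite.subset (s := (Finset.range k₀ ×ˢ expFinset n (k₀ + d) : Finset _))
      (Finset.finite_toSet _) ?_
    rintro ⟨k, ν⟩ hkν
    simp only [Set.mem_compl_iff, Set.mem_ofPred_eq, not_lt, Function.uncurry] at hkν
    have hk : k < k₀ := by
      by_contra hle
      push Not at hle
      have := (hkν.trans (hbd k ν)).trans
        (pow_le_pow_of_le_one (Real.sqrt_nonneg _) (sqrt_lt_one hs.lt_one).le hle)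
      linarith
    have hne : PowerSeries.coeff k (F ν) ≠ 0 := by
      intro h0
      rw [ht] at hkν
      simp only [h0, map_zero, zero_mul, norm_zero] at hkν
      linarith
    simp only [Finset.coe_product, Set.mem_prod, Finset.mem_coe, Finset.mem_range, mem_expFinset]
    exact ⟨hk, ((h ν k).2 hne).trans (by omega)⟩
  have h1 : ∀ ν, pev φ s (F ν) * ∏ i, v i ^ ν i = ∑' k, t k ν := fun ν => by
    unfold pev; rw [← tsum_mul_right]
  have h2 : pev (eval₂Hom φ v) s (ofFam d F) = ∑' k, ∑' ν, t k ν := by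
    unfold pev
    congr 1; ext k
    rw [tsum_eq_sum (s := expFinset n (k + d)), ofFam, PowerSeries.coeff_mk, map_sum,
      Finset.sum_mul]
    · refine Finset.sum_congr rfl fun ν _ => ?_
      rw [coe_eval₂Hom, eval₂_monomial, Finsupp.prod_fintype _ _ (by simp)]
      simp only [ht]; ring
    · intro ν hν
      have : PowerSeries.coeff k (F ν) = 0 := by
        by_contra h0
        exact hν (mem_expFinset.mpr ((h ν k).2 h0))
      simp [ht, this]
  rw [h2, ← hsum.tsum_comm]
  exact tsum_congr fun ν => (h1 ν).symm

end Fam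

/-! ### Adjoining coefficients -/

section Adjoin

variable {B : Type*} [CommRing B] {B₀ : Subring B} {ε : ℕ} {τ : Type*}

variable (B₀ τ) in
/-- The polynomials with coefficients in `B₀`. -/
noncomputable def polySub : Subring (MvPolynomial τ B) :=
  (MvPolynomial.map (σ := τ) B₀.subtype).range

instance [Finite τ] [IsNoetherianRing B₀] : IsNoetherianRing (polySub B₀ τ) :=
  isNoetherianRing_range _

lemma C_mem_polySub {b : B} (hb : b ∈ B₀) : (C b : MvPolynomial τ B) ∈ polySub B₀ τ :=
  ⟨C ⟨b, hb⟩, by simp⟩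

lemma X_mem_polySub (i : τ) : (X i : MvPolynomial τ B) ∈ polySub B₀ τ := ⟨X i, by simp⟩

lemma DI.C_polySub {c k : ℕ} {b : B} (h : DI B₀ ε c k b) :
    DI (polySub B₀ τ) ε c k (C b : MvPolynomial τ B) := by
  have := C_mem_polySub (τ := τ) h
  rwa [C_mul, map_natCast] at this

variable {K : Type*} [NormedField K] [IsUltrametricDist K]

lemma norm_eval₂Hom_polySub_le {φ : B →+* K} (hφ : ∀ b ∈ B₀, ‖φ b‖ ≤ 1) {w : τ → K}
    (hw : ∀ i, ‖w i‖ ≤ 1) {q : MvPolynomial τ B} (hq : q ∈ polySub B₀ τ) :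
    ‖eval₂Hom φ w q‖ ≤ 1 := by
  obtain ⟨q, rfl⟩ := hq
  induction q using MvPolynomial.induction_on with
  | C a => simpa using hφ a.1 a.2
  | add p q hp hq =>
    rw [map_add, map_add]
    exact (IsUltrametricDist.norm_add_le_max _ _).trans (max_le hp hq)
  | mul_X p i hp =>
    rw [map_mul, map_mul, norm_mul]
    refine mul_le_one₀ hp (norm_nonneg _) ?_
    simpa using hw i

lemma NS_of_DI {C a : ℕ} {s : K} {φ : B →+* K} (hs : Good ε C s) (hφ : ∀ b ∈ B₀, ‖φ b‖ ≤ 1)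
    {f : PowerSeries B} (hf : ∀ k, DI B₀ ε C (a + k) (PowerSeries.coeff k f)) : NS φ s f := by
  have h0 : 0 < ‖s‖ ^ a := pow_pos hs.pos a
  refine Summable.of_nonneg_of_le (fun _ => norm_nonneg _) (fun k => ?_)
    ((summable_geometric_of_lt_one (Real.sqrt_nonneg _) (sqrt_lt_one hs.lt_one)).mul_left
      ((‖s‖ ^ a)⁻¹ * √‖s‖ ^ a))
  have h1 := hs.term_le ((hf k).norm_le hφ)
  rw [pow_add, pow_add] at h1
  rw [mul_assoc, ← div_eq_inv_mul, le_div_iff₀ h0]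
  refine le_trans (le_of_eq ?_) h1
  simp only [norm_mul, norm_pow]; ring

/-- The substitution `s ↦ s ^ L` followed by a multiplication with `s ^ e`. -/
lemma DI_X_pow_mul_expand {C r e L : ℕ} (hL : L ≠ 0) (he : r ≤ e) {h : PowerSeries B}
    (hh : ∀ j, DI B₀ ε C (r + j) (PowerSeries.coeff j h)) (k : ℕ) :
    DI B₀ ε C k (PowerSeries.coeff k (PowerSeries.X ^ e * PowerSeries.expand L hL h)) ∧
      (PowerSeries.coeff k (PowerSeries.X ^ e * PowerSeries.expand L hL h) ≠ 0 → e ≤ k) := by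
  rw [PowerSeries.coeff_X_pow_mul']
  split_ifs with hk
  · refine ⟨?_, fun _ => hk⟩
    rw [PowerSeries.coeff_expand]
    split_ifs with hd
    · refine (hh _).mono le_rfl ?_
      have := Nat.div_le_self (k - e) L
      omega
    · exact DI.zero _ _
  · exact ⟨DI.zero _ _, fun h => absurd rfl h⟩

end Adjoin

/-! ### The coefficients of a monomial -/

section Coeffs

variable {B : Type*} [CommRing B] {B₀ : Subring B} {ε : ℕ} {n : ℕ}

/-- The coefficient of `X ^ ν` in `f`, divided by `s ^ |ν|`. -/
noncomputable def cof (f : PowerSeries (MvPolynomial (Fin n) B)) (ν : Fin n →₀ ℕ) :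
    PowerSeries B :=
  PowerSeries.mk fun k => coeff ν (PowerSeries.coeff (k + ν.degree) f)

lemma DI_cof {C : ℕ} {f : PowerSeries (MvPolynomial (Fin n) B)}
    (hf : ∀ k, PI B₀ ε C k k (PowerSeries.coeff k f)) (ν : Fin n →₀ ℕ) (k : ℕ) :
    DI B₀ ε C (ν.degree + k) (PowerSeries.coeff k (cof f ν)) := by
  rw [cof, PowerSeries.coeff_mk, add_comm ν.degree]
  exact (hf _ ν).1

lemma FamOK_cof {C : ℕ} {f : PowerSeries (MvPolynomial (Fin n) B)}
    (hf : ∀ k, PI B₀ ε C k k (PowerSeries.coeff k f)) :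
    FamOK B₀ ε C 0 fun ν => PowerSeries.X ^ ν.degree * cof f ν := by
  intro ν k
  have := DI_X_pow_mul_expand one_ne_zero le_rfl (DI_cof hf ν) k
  rwa [PowerSeries.expand_one_apply] at this

lemma ofFam_cof {C : ℕ} {f : PowerSeries (MvPolynomial (Fin n) B)}
    (hf : ∀ k, PI B₀ ε C k k (PowerSeries.coeff k f)) :
    ofFam 0 (fun ν => PowerSeries.X ^ ν.degree * cof f ν) = f := by
  classical
  ext1 k
  rw [ofFam, PowerSeries.coeff_mk]
  ext1 μ
  rw [coeff_sum]
  simp only [coeff_monomial]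
  rw [Finset.sum_ite_eq', PowerSeries.coeff_X_pow_mul']
  by_cases h : μ.degree ≤ k
  · rw [if_pos (mem_expFinset.mpr (by omega)), if_pos h, cof, PowerSeries.coeff_mk,
      Nat.sub_add_cancel h]
  · rw [if_neg (by rw [mem_expFinset]; omega)]
    by_contra h0
    exact h ((hf k μ).2 (Ne.symm h0))

variable {K : Type*} [NormedField K] [IsUltrametricDist K] [CompleteSpace K]

lemma pev_eq_tsum_cof {C : ℕ} {f : PowerSeries (MvPolynomial (Fin n) B)}
    (hf : ∀ k, PI B₀ ε C k k (PowerSeries.coeff k f)) {s : K} {φ : B →+* K} (hs : Good ε C s)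
    (hφ : ∀ b ∈ B₀, ‖φ b‖ ≤ 1) {v : Fin n → K} (hv : ∀ i, ‖v i‖ ≤ 1) :
    pev (eval₂Hom φ v) s f = ∑' ν, s ^ ν.degree * pev φ s (cof f ν) * ∏ i, v i ^ ν i := by
  conv_lhs => rw [← ofFam_cof hf]
  rw [pev_ofFam (FamOK_cof hf) hs hφ hv]
  simp only [pev_X_pow_mul]

end Coeffs

/-! ### The case of a dominant monomial -/

section Weights

variable {n : ℕ}

/-- The exponent of `s ^ (1 / L)` in front of `X ^ ν` after the substitution
`X i ↦ s ^ (- b i / L) X i`. -/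
noncomputable def wt (L : ℕ) (b : Fin n → ℕ) (ν : Fin n →₀ ℕ) : ℕ := L * ν.degree - ∑ i, b i * ν i

lemma sum_weight_le {b : Fin n → ℕ} {m : ℕ} (hb : ∀ i, b i ≤ m) (ν : Fin n →₀ ℕ) :
    ∑ i, b i * ν i ≤ m * ν.degree := by
  rw [Finsupp.degree_eq_sum, Finset.mul_sum]
  exact Finset.sum_le_sum fun i _ => Nat.mul_le_mul_right _ (hb i)

variable {b : Fin n → ℕ} {m d : ℕ}

lemma wt_add (hb : ∀ i, b i ≤ m) (ν : Fin n →₀ ℕ) :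
    wt ((m + 1) * (d + 1)) b ν + ∑ i, b i * ν i = (m + 1) * (d + 1) * ν.degree := by
  refine Nat.sub_add_cancel ((sum_weight_le hb ν).trans (Nat.mul_le_mul_right _ ?_))
  nlinarith

lemma degree_le_wt (hb : ∀ i, b i ≤ m) (ν : Fin n →₀ ℕ) :
    ν.degree ≤ wt ((m + 1) * (d + 1)) b ν := by
  have h1 := wt_add (d := d) hb ν
  have h2 := sum_weight_le hb ν
  nlinarith [Nat.zero_le (d * ν.degree), Nat.zero_le (m * d * ν.degree)]

lemma wt_gap (hb : ∀ i, b i ≤ m) {μ ν : Fin n →₀ ℕ} (hμ : μ.degree ≤ d) (hν : d < ν.degree) :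
    wt ((m + 1) * (d + 1)) b μ + ν.degree ≤ wt ((m + 1) * (d + 1)) b ν := by
  have h1 := wt_add (d := d) hb ν
  have h2 := sum_weight_le hb ν
  have h3 : wt ((m + 1) * (d + 1)) b μ ≤ (m + 1) * (d + 1) * d :=
    (Nat.sub_le _ _).trans (Nat.mul_le_mul_left _ hμ)
  have h4 : (m + 1) * (d * (d + 1)) ≤ (m + 1) * (d * ν.degree) := by gcongr; exact hν
  nlinarith

end Weights

section Dominant

variable {B : Type} [CommRing B] [Nontrivial B] {B₀ : Subring B} {ε : ℕ} {n : ℕ}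

/-- The generic coefficient `w` of `X ^ μ`, as an indeterminate. -/
noncomputable def cvar (B : Type) [CommRing B] (T : Finset (Fin n →₀ ℕ)) (μ : Fin n →₀ ℕ) :
    MvPolynomial T B :=
  open Classical in if h : μ ∈ T then X ⟨μ, h⟩ else 0

open Classical in
/-- Multiplication by the generic coefficient of `X ^ μ`, which is `1` for the dominant exponent
`μ₀` and divisible by `s` otherwise. -/
noncomputable def gmul (T : Finset (Fin n →₀ ℕ)) (μ₀ μ : Fin n →₀ ℕ)
    (F : PowerSeries (MvPolynomial T B)) : PowerSeries (MvPolynomial T B) :=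
  if μ = μ₀ then F else PowerSeries.X ^ 1 * (F * PowerSeries.C (cvar B T μ))

lemma DI_gmul {T : Finset (Fin n →₀ ℕ)} {μ₀ μ : Fin n →₀ ℕ} {C r : ℕ}
    {F : PowerSeries (MvPolynomial T B)}
    (hF : ∀ k, DI (polySub B₀ T) ε C k (PowerSeries.coeff k F) ∧
      (PowerSeries.coeff k F ≠ 0 → r ≤ k)) (k : ℕ) :
    DI (polySub B₀ T) ε C k (PowerSeries.coeff k (gmul T μ₀ μ F)) ∧
      (PowerSeries.coeff k (gmul T μ₀ μ F) ≠ 0 → r ≤ k) := by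
  have hc : cvar B T μ ∈ polySub B₀ T := by
    unfold cvar
    split_ifs
    · exact X_mem_polySub _
    · exact Subring.zero_mem _
  unfold gmul
  split_ifs with h
  · exact hF k
  rw [PowerSeries.coeff_X_pow_mul']
  split_ifs with hk
  · rw [PowerSeries.coeff_mul_C]
    refine ⟨((hF (k - 1)).1.mul (DI.of_mem (k := 0) hc)).mono le_rfl (by omega), fun h0 => ?_⟩
    have := (hF (k - 1)).2 (left_ne_zero_of_mul h0)
    omega
  · exact ⟨DI.zero _ _, fun h => absurd rfl h⟩

lemma pev_gmul {K : Type*} [NormedField K] {T : Finset (Fin n →₀ ℕ)} {μ₀ μ : Fin n →₀ ℕ}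
    (hμ : μ ∈ T) (F : PowerSeries (MvPolynomial T B)) (φ : B →+* K) (w : (Fin n →₀ ℕ) → K)
    (ϖ : K) (q : (Fin n →₀ ℕ) → K) (hq0 : q μ₀ = 1) (hq : μ ≠ μ₀ → q μ = ϖ * w μ) :
    pev (eval₂Hom φ fun μ : T => w μ.1) ϖ (gmul T μ₀ μ F) =
      q μ * pev (eval₂Hom φ fun μ : T => w μ.1) ϖ F := by
  unfold gmul
  split_ifs with h
  · rw [h, hq0, one_mul]
  · rw [pev_X_pow_mul, pev_mul_C, hq h, cvar, dif_pos hμ, coe_eval₂Hom, eval₂_X]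
    ring

end Dominant

section Dominant

variable {B : Type} [CommRing B] [Nontrivial B] {B₀ : Subring B} {ε : ℕ} {n : ℕ}

open Classical in
/-- The coefficients of the series obtained from `∑ g ν X ^ ν` by rescaling the variables and
dividing by the dominant coefficient, the coefficients of degree at most `d` being replaced by
indeterminates. The coefficients of higher degree are expressed through them by means of `h`. -/
noncomputable def domFam (d L : ℕ) (hL : L ≠ 0) (b : Fin n → ℕ) (μ₀ : Fin n →₀ ℕ)
    (h : (Fin n →₀ ℕ) → (Fin n →₀ ℕ) → PowerSeries B) (ν : Fin n →₀ ℕ) :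
    PowerSeries (MvPolynomial (expFinset n d) B) :=
  if ν.degree ≤ d then gmul (expFinset n d) μ₀ ν 1
  else ∑ μ ∈ expFinset n d, gmul (expFinset n d) μ₀ μ
    (PowerSeries.X ^ (wt L b ν - wt L b μ) *
      PowerSeries.expand L hL (PowerSeries.map MvPolynomial.C (h ν μ)))

variable {b : Fin n → ℕ} {m d C : ℕ} {μ₀ : Fin n →₀ ℕ}
    {h : (Fin n →₀ ℕ) → (Fin n →₀ ℕ) → PowerSeries B}

lemma DI_domFam_term (hb : ∀ i, b i ≤ m) (hL : (m + 1) * (d + 1) ≠ 0)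
    (hh : ∀ ν, d < ν.degree → ∀ μ k, DI B₀ ε C (ν.degree + k) (PowerSeries.coeff k (h ν μ)))
    {μ ν : Fin n →₀ ℕ} (hμ : μ.degree ≤ d) (hν : d < ν.degree) (k : ℕ) :
    DI (polySub B₀ (expFinset n d)) ε C k (PowerSeries.coeff k (gmul (expFinset n d) μ₀ μ
      (PowerSeries.X ^ (wt ((m + 1) * (d + 1)) b ν - wt ((m + 1) * (d + 1)) b μ) *
      PowerSeries.expand _ hL (PowerSeries.map MvPolynomial.C (h ν μ))))) ∧
    (PowerSeries.coeff k (gmul (expFinset n d) μ₀ μ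
      (PowerSeries.X ^ (wt ((m + 1) * (d + 1)) b ν - wt ((m + 1) * (d + 1)) b μ) *
      PowerSeries.expand _ hL (PowerSeries.map MvPolynomial.C (h ν μ)))) ≠ 0 → ν.degree ≤ k) := by
  have hgap := wt_gap hb hμ hν
  refine DI_gmul (fun k => ?_) k
  have := DI_X_pow_mul_expand (B₀ := polySub B₀ (expFinset n d)) (ε := ε) (C := C) hL
    (r := ν.degree) (e := wt ((m + 1) * (d + 1)) b ν - wt ((m + 1) * (d + 1)) b μ) (by omega)
    (h := PowerSeries.map MvPolynomial.C (h ν μ))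
    (fun j => by rw [PowerSeries.coeff_map]; exact (hh ν hν μ j).C_polySub) k
  exact ⟨this.1, fun h0 => le_trans (by omega) (this.2 h0)⟩

lemma DI_one_coeff {A : Type*} [CommRing A] (A₀ : Subring A) (C k : ℕ) :
    DI A₀ ε C k (PowerSeries.coeff k (1 : PowerSeries A)) := by
  rw [PowerSeries.coeff_one]
  split_ifs
  · exact DI.of_mem A₀.one_mem
  · exact DI.zero _ _

lemma DI_coeff_mul {A : Type*} [CommRing A] {A₀ : Subring A} {C a a' : ℕ} {f g : PowerSeries A}
    (hf : ∀ k, DI A₀ ε C (a + k) (PowerSeries.coeff k f))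
    (hg : ∀ k, DI A₀ ε C (a' + k) (PowerSeries.coeff k g)) (k : ℕ) :
    DI A₀ ε C (a + a' + k) (PowerSeries.coeff k (f * g)) := by
  rw [PowerSeries.coeff_mul]
  refine DI.sum fun x hx => ((hf x.1).mul (hg x.2)).mono le_rfl ?_
  rw [Finset.HasAntidiagonal.mem_antidiagonal] at hx
  omega

lemma FamOK_domFam (hb : ∀ i, b i ≤ m) (hL : (m + 1) * (d + 1) ≠ 0)
    (hh : ∀ ν, d < ν.degree → ∀ μ k, DI B₀ ε C (ν.degree + k) (PowerSeries.coeff k (h ν μ))) :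
    FamOK (polySub B₀ (expFinset n d)) ε C d (domFam d ((m + 1) * (d + 1)) hL b μ₀ h) := by
  intro ν k
  unfold domFam
  split_ifs with hν
  · have := DI_gmul (B := B) (B₀ := B₀) (ε := ε) (C := C) (μ₀ := μ₀) (μ := ν) (r := 0)
      (T := expFinset n d) (F := 1) (fun k => ⟨DI_one_coeff _ _ _, fun _ => Nat.zero_le _⟩) k
    exact ⟨this.1, fun _ => by omega⟩
  · push Not at hν
    rw [map_sum]
    refine ⟨DI.sum fun μ hμ => (DI_domFam_term hb hL hh (mem_expFinset.mp hμ) hν k).1,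
      fun h0 => ?_⟩
    obtain ⟨μ, hμ, hne⟩ := Finset.exists_ne_zero_of_sum_ne_zero h0
    have := (DI_domFam_term (B₀ := B₀) (ε := ε) hb hL hh (mem_expFinset.mp hμ) hν k).2 hne
    omega

lemma coeff_zero_domFam (L : ℕ) (hL : L ≠ 0) (hμ₀ : μ₀.degree ≤ d) :
    PowerSeries.coeff 0 (ofFam d (domFam d L hL b μ₀ h)) = monomial μ₀ 1 := by
  classical
  rw [ofFam, PowerSeries.coeff_mk, zero_add, Finset.sum_eq_single μ₀]
  · rw [domFam, if_pos hμ₀, gmul, if_pos rfl]; simp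
  · intro ν hν hne
    rw [domFam, if_pos (mem_expFinset.mp hν), gmul, if_neg hne]
    simp
  · intro h0; exact absurd (mem_expFinset.mpr hμ₀) h0

lemma pev_domFam {K : Type*} [NormedField K] [IsUltrametricDist K] [CompleteSpace K]
    (hb : ∀ i, b i ≤ m) (hL : (m + 1) * (d + 1) ≠ 0)
    (hh : ∀ ν, d < ν.degree → ∀ μ k, DI B₀ ε C (ν.degree + k) (PowerSeries.coeff k (h ν μ)))
    {s ϖ : K} (hϖ : ϖ ^ ((m + 1) * (d + 1)) = s) (hs : Good ε C s) (hs' : Good ε C ϖ)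
    {φ : B →+* K} (hφ : ∀ b ∈ B₀, ‖φ b‖ ≤ 1) {g : (Fin n →₀ ℕ) → PowerSeries B}
    (hg : ∀ ν k, DI B₀ ε C (ν.degree + k) (PowerSeries.coeff k (g ν)))
    (hgh : ∀ ν, d < ν.degree → g ν = ∑ μ ∈ expFinset n d, h ν μ * g μ)
    {w q : (Fin n →₀ ℕ) → K} (hw : ∀ μ, ‖w μ‖ ≤ 1) (hq0 : q μ₀ = 1)
    (hq : ∀ μ, μ ≠ μ₀ → q μ = ϖ * w μ) {c : K}
    (hc : ∀ μ, μ.degree ≤ d → c * q μ = ϖ ^ wt ((m + 1) * (d + 1)) b μ * pev φ s (g μ))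
    (ν : Fin n →₀ ℕ) :
    c * pev (eval₂Hom φ fun μ : expFinset n d => w μ.1) ϖ
      (domFam d ((m + 1) * (d + 1)) hL b μ₀ h ν) =
      ϖ ^ wt ((m + 1) * (d + 1)) b ν * pev φ s (g ν) := by
  have hφ' : ∀ x ∈ polySub B₀ (expFinset n d),
      ‖eval₂Hom φ (fun μ : expFinset n d => w μ.1) x‖ ≤ 1 :=
    fun x hx => norm_eval₂Hom_polySub_le (τ := expFinset n d) (w := fun μ => w μ.1) hφ
      (fun μ => hw μ.1) hx
  have hcomp : (eval₂Hom φ fun μ : expFinset n d => w μ.1).comp MvPolynomial.C = φ := by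
    ext x; simp
  unfold domFam
  split_ifs with hν
  · rw [pev_gmul (mem_expFinset.mpr hν) 1 φ w ϖ q hq0 (hq ν), pev_one, mul_one, hc ν hν]
  · push Not at hν
    rw [pev_sum, hgh ν hν, pev_sum, Finset.mul_sum, Finset.mul_sum]
    · refine Finset.sum_congr rfl fun μ hμ => ?_
      have hμd := mem_expFinset.mp hμ
      have hgap := wt_gap hb hμd hν
      rw [pev_gmul hμ _ φ w ϖ q hq0 (hq μ), pev_X_pow_mul, pev_expand, pev_map, hcomp, hϖ,
        pev_mul (NS_of_DI hs hφ (hh ν hν μ)) (NS_of_DI hs hφ (hg μ)), ← mul_assoc, hc μ hμd]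
      conv_rhs => rw [← Nat.sub_add_cancel (show wt ((m + 1) * (d + 1)) b μ ≤
        wt ((m + 1) * (d + 1)) b ν by omega), pow_add]
      ring
    · intro μ hμ
      exact NS_of_DI hs hφ (DI_coeff_mul (hh ν hν μ) (hg μ))
    · intro μ hμ
      exact NS_of_DI (a := 0) hs' hφ' fun k => by
        rw [zero_add]
        exact (DI_domFam_term hb hL hh (mem_expFinset.mp hμ) hν k).1

end Dominant

section Dominant

variable {B : Type} [CommRing B] [Nontrivial B] {B₀ : Subring B} {ε : ℕ} {n : ℕ}

lemma wt_rescale {K : Type*} [Field K] {b : Fin n → ℕ} {m d : ℕ} (hb : ∀ i, b i ≤ m) {s ϖ : K}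
    (hϖ : ϖ ^ ((m + 1) * (d + 1)) = s) (u : Fin n → K) (ν : Fin n →₀ ℕ) :
    ϖ ^ wt ((m + 1) * (d + 1)) b ν * ∏ i, (ϖ ^ b i * u i) ^ ν i =
      s ^ ν.degree * ∏ i, u i ^ ν i := by
  rw [← hϖ, ← pow_mul, ← wt_add hb ν, pow_add, ← Finset.prod_pow_eq_pow_sum]
  simp only [mul_pow, Finset.prod_mul_distrib, ← pow_mul]
  ring

set_option maxHeartbeats 1000000 in
/-- The number of isolated zeros is bounded for those specializations for which, after a rescaling
of the variables with fixed exponents, a fixed coefficient of `f i₀` is dominant. -/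
lemma hasBound_of_dominant [Algebra ℚ B] [IsNoetherianRing B₀] (H : Claim ε n) {C : ℕ} {ι : Type}
    [Fintype ι] {f : ι → PowerSeries (MvPolynomial (Fin (n + 1)) B)}
    (hf : ∀ i k, PI B₀ ε C k k (PowerSeries.coeff k (f i))) (i₀ : ι) (d : ℕ)
    (h : (Fin (n + 1) →₀ ℕ) → (Fin (n + 1) →₀ ℕ) → PowerSeries B)
    (hh : ∀ ν, d < ν.degree → ∀ μ k, DI B₀ ε C (ν.degree + k) (PowerSeries.coeff k (h ν μ)))
    (hfh : ∀ ν, d < ν.degree →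
      cof (f i₀) ν = ∑ μ ∈ expFinset (n + 1) d, h ν μ * cof (f i₀) μ)
    (b : Fin (n + 1) → ℕ) (m : ℕ) (hb : ∀ i, b i ≤ m) (μ₀ : Fin (n + 1) →₀ ℕ)
    (hμ₀ : μ₀.degree ≤ d) :
    ∃ N C' : ℕ, ∀ (K : Type) [NormedField K] [IsUltrametricDist K] [CompleteSpace K]
      [IsAlgClosed K] (s ϖ : K) (φ : B →+* K), Good ε C' s → (∀ b ∈ B₀, ‖φ b‖ ≤ 1) →
      ϖ ^ ((m + 1) * (d + 1)) = s → pev φ s (cof (f i₀) μ₀) ≠ 0 →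
      (∀ μ, μ.degree ≤ d → μ ≠ μ₀ →
        ‖ϖ ^ wt ((m + 1) * (d + 1)) b μ * pev φ s (cof (f i₀) μ)‖ ≤
        ‖ϖ‖ * ‖ϖ ^ wt ((m + 1) * (d + 1)) b μ₀ * pev φ s (cof (f i₀) μ₀)‖) →
      ∀ S : Finset (Fin (n + 1) → K), (∀ z ∈ S, Iso (Zset s φ f) z) → S.card ≤ N := by
  classical
  set L := (m + 1) * (d + 1) with hLdef
  have hL : L ≠ 0 := by positivity
  set T := expFinset (n + 1) d with hT
  -- The index `none` stands for `f i₀` divided by its dominant coefficient, with the quotients of the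
  -- other coefficients of degree at most `d` replaced by indeterminates; the index `some i` stands
  -- for `f i` in the rescaled variables.
  set G : Option ι → (Fin (n + 1) →₀ ℕ) → PowerSeries (MvPolynomial T B) := fun o =>
    o.elim (domFam d L hL b μ₀ h) fun i ν => PowerSeries.X ^ wt L b ν *
      PowerSeries.expand L hL (PowerSeries.map MvPolynomial.C (cof (f i) ν)) with hG
  have hGok : ∀ o, FamOK (polySub B₀ T) ε C d (G o) := by
    intro o
    cases o with
    | none => exact FamOK_domFam hb hL hh
    | some i =>
      intro ν k
      have h1 := degree_le_wt (d := d) hb ν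
      rw [← hLdef] at h1
      have := DI_X_pow_mul_expand (B₀ := polySub B₀ T) (ε := ε) (C := C) hL
        (r := ν.degree) (e := wt L b ν) h1
        (h := PowerSeries.map MvPolynomial.C (cof (f i) ν))
        (fun j => by rw [PowerSeries.coeff_map]; exact (DI_cof (hf i) ν j).C_polySub) k
      exact ⟨this.1, fun h0 => by have := this.2 h0; omega⟩
  obtain ⟨N, C', hN⟩ := hasBound_of_monomial (B₀ := polySub B₀ T) (ε := ε) H
    (f := fun o => ofFam d (G o)) (fun o => ofFam_mem_Lat (hGok o)) none μ₀
    (coeff_zero_domFam L hL hμ₀)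
  refine ⟨N, (C' + C) * L, fun K _ _ _ _ s ϖ φ hs hφ hϖ hne hdom S hS => ?_⟩
  have hL1 : 1 ≤ L := Nat.one_le_iff_ne_zero.mpr hL
  have hsC : Good ε C s := hs.mono (by nlinarith)
  have hϖg : Good ε (C' + C) ϖ := hs.root hL hϖ
  have hϖ0 : ϖ ≠ 0 := norm_pos_iff.mp hϖg.pos
  set c := ϖ ^ wt L b μ₀ * pev φ s (cof (f i₀) μ₀) with hc
  have hc0 : c ≠ 0 := mul_ne_zero (pow_ne_zero _ hϖ0) hne
  set q : (Fin (n + 1) →₀ ℕ) → K := fun μ => ϖ ^ wt L b μ * pev φ s (cof (f i₀) μ) / c with hq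
  set w : (Fin (n + 1) →₀ ℕ) → K :=
    fun μ => if μ.degree ≤ d ∧ μ ≠ μ₀ then ϖ⁻¹ * q μ else 0 with hw
  have hw1 : ∀ μ, ‖w μ‖ ≤ 1 := by
    intro μ
    simp only [hw]
    split_ifs with h1
    · have h2 := hdom μ h1.1 h1.2
      rw [hq, norm_mul, norm_inv, norm_div, ← div_eq_inv_mul, div_div,
        div_le_one (mul_pos (norm_pos_iff.mpr hc0) hϖg.pos), mul_comm ‖c‖]
      exact h2
    · simp
  set q' : (Fin (n + 1) →₀ ℕ) → K := fun μ => if μ = μ₀ then 1 else ϖ * w μ with hq'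
  have hcq : ∀ μ : Fin (n + 1) →₀ ℕ, μ.degree ≤ d →
      c * q' μ = ϖ ^ wt L b μ * pev φ s (cof (f i₀) μ) := by
    intro μ hμ
    simp only [hq']
    split_ifs with h1
    · rw [h1, mul_one]
    · simp only [hw]
      rw [if_pos ⟨hμ, h1⟩, hq]
      field_simp
  set φ' := eval₂Hom φ fun μ : T => w μ.1 with hφ'def
  have hφ' : ∀ x ∈ polySub B₀ T, ‖φ' x‖ ≤ 1 :=
    fun x hx => norm_eval₂Hom_polySub_le (τ := T) (w := fun μ => w μ.1) hφ
      (fun μ => hw1 μ.1) hx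
  have hcomp : φ'.comp MvPolynomial.C = φ := by ext x; simp [hφ'def]
  have hnone : ∀ ν, c * pev φ' ϖ (G none ν) = ϖ ^ wt L b ν * pev φ s (cof (f i₀) ν) :=
    fun ν => pev_domFam hb hL hh hϖ hsC (hϖg.mono (by omega)) hφ (DI_cof (hf i₀)) hfh
      hw1 (q := q') (by simp [hq']) (fun μ hμ => by simp [hq', hμ]) hcq ν
  have hsome : ∀ i ν, pev φ' ϖ (G (some i) ν) = ϖ ^ wt L b ν * pev φ s (cof (f i) ν) := by
    intro i ν
    simp only [hG, Option.elim]
    rw [pev_X_pow_mul, pev_expand, pev_map, hcomp, hϖ]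
  -- the rescaling of the variables
  have hval : ∀ (u : Fin (n + 1) → K) i, (∀ j, ‖u j‖ ≤ 1) → pev (eval₂Hom φ u) s (f i) =
      ∑' ν, ϖ ^ wt L b ν * pev φ s (cof (f i) ν) * ∏ j, (ϖ ^ b j * u j) ^ ν j := by
    intro u i hu
    rw [pev_eq_tsum_cof (hf i) hsC hφ hu]
    refine tsum_congr fun ν => ?_
    have := wt_rescale (d := d) hb hϖ u ν
    rw [mul_right_comm, ← this]; ring
  have hscale : ∀ u : Fin (n + 1) → K, (∀ j, ‖u j‖ ≤ 1) → ∀ j, ‖ϖ ^ b j * u j‖ ≤ 1 := by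
    intro u hu j
    rw [norm_mul, norm_pow]
    exact mul_le_one₀ (pow_le_one₀ (norm_nonneg _) hϖg.lt_one.le) (norm_nonneg _) (hu j)
  have hGev : ∀ (v : Fin (n + 1) → K) o, (∀ j, ‖v j‖ ≤ 1) →
      pev (eval₂Hom φ' v) ϖ (ofFam d (G o)) = ∑' ν, pev φ' ϖ (G o ν) * ∏ j, v j ^ ν j :=
    fun v o hv => pev_ofFam (hGok o) (hϖg.mono (by omega)) hφ' hv
  have hzero : ∀ u : Fin (n + 1) → K, (∀ j, ‖u j‖ ≤ 1) →
      ((fun j => ϖ ^ b j * u j) ∈ Zset ϖ φ' (fun o => ofFam d (G o)) ↔ u ∈ Zset s φ f) := by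
    intro u hu
    have e1 : ∀ i, pev (eval₂Hom φ' fun j => ϖ ^ b j * u j) ϖ (ofFam d (G (some i))) =
        pev (eval₂Hom φ u) s (f i) := fun i => by
      rw [hGev _ _ (hscale u hu), hval u i hu]
      simp only [hsome]
    have e2 : c * pev (eval₂Hom φ' fun j => ϖ ^ b j * u j) ϖ (ofFam d (G none)) =
        pev (eval₂Hom φ u) s (f i₀) := by
      rw [hGev _ _ (hscale u hu), hval u i₀ hu, ← tsum_mul_left]
      simp only [← mul_assoc, hnone]
    constructor
    · rintro ⟨-, h2⟩
      exact ⟨hu, fun i => by rw [← e1]; exact h2 (some i)⟩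
    · rintro ⟨-, h2⟩
      refine ⟨hscale u hu, fun o => ?_⟩
      cases o with
      | none => exact (mul_eq_zero.mp (e2.trans (h2 i₀))).resolve_left hc0
      | some i => exact (e1 i).trans (h2 i)
  set θ : (Fin (n + 1) → K) → (Fin (n + 1) → K) := fun u j => ϖ ^ b j * u j with hθ
  set ψ : (Fin (n + 1) → K) → (Fin (n + 1) → K) := fun v j => (ϖ ^ b j)⁻¹ * v j with hψ
  have hψθ : ∀ u, ψ (θ u) = u := fun u => by
    funext j; simp only [hψ, hθ]; rw [inv_mul_cancel_left₀ (pow_ne_zero _ hϖ0)]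
  have hθψ : ∀ u, θ (ψ u) = u := fun u => by
    funext j; simp only [hψ, hθ]; rw [mul_inv_cancel_left₀ (pow_ne_zero _ hϖ0)]
  have hψc : Continuous ψ := by fun_prop
  have h1 := hN K ϖ φ' (hϖg.mono (by omega)) hφ' (S.image θ) (by
    intro z hz
    obtain ⟨u, hu, rfl⟩ := Finset.mem_image.mp hz
    have hui := hS u hu
    refine Iso.transfer (ψ := ψ) (Z := Zset s φ f) (Function.LeftInverse.injective hθψ)
      hψc.continuousAt ((hzero u hui.1.1).mpr hui.1) ?_ (by rwa [hψθ])
    have hev := hψc.continuousAt.eventually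
      (eventually_polydisc (u := ψ (θ u)) (by rw [hψθ]; exact hui.1.1))
    filter_upwards [hev] with v hv hvZ
    refine (hzero _ hv).mp ?_
    have := hθψ v
    simp only [hθ] at this
    rwa [this])
  rwa [Finset.card_image_of_injective _ (Function.LeftInverse.injective hψθ)] at h1

end Dominant

/-! ### Uniform finiteness -/

section Main

variable {B : Type} [CommRing B] {B₀ : Subring B} {ε : ℕ} {n : ℕ}

/-- After the substitution `s ↦ s ^ E` and a multiplication by `s ^ E` the degree of the
coefficient of `s ^ k` is at most `k`. -/
lemma hasBound_of_normalized {C : ℕ} {ι : Type} [Fintype ι]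
    {f : ι → PowerSeries (MvPolynomial (Fin n) B)} (hf : ∀ i, f i ∈ Lat B₀ ε C (Fin n))
    (H : ∀ f' : ι → PowerSeries (MvPolynomial (Fin n) B),
      (∀ i k, PI B₀ ε C k k (PowerSeries.coeff k (f' i))) → HasBound B₀ ε f') :
    HasBound B₀ ε f := by
  choose E₁ hE₁ using hf
  set E := 1 + ∑ i, E₁ i with hEdef
  have hE : E ≠ 0 := by omega
  have hle : ∀ i, E₁ i ≤ E := fun i => by
    have := Finset.single_le_sum (f := E₁) (fun _ _ => Nat.zero_le _) (Finset.mem_univ i)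
    omega
  obtain ⟨N, C', hN⟩ := H (fun i => PowerSeries.X ^ E * PowerSeries.expand E hE (f i)) (by
    intro i k
    rw [PowerSeries.coeff_X_pow_mul']
    split_ifs with hk
    · rw [PowerSeries.coeff_expand]
      split_ifs with hd
      · obtain ⟨j, hj⟩ := hd
        rw [hj, Nat.mul_div_cancel_left _ (by omega)]
        have hk' : k = E * (j + 1) := by rw [mul_add, mul_one, ← hj]; omega
        rw [hk']
        refine (hE₁ i j).mono le_rfl ?_ (Nat.mul_le_mul_right _ (hle i))
        nlinarith [Nat.one_le_iff_ne_zero.mpr hE]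
      · exact PI.zero _ _ _
    · exact PI.zero _ _ _)
  refine ⟨N, C' * E, fun K _ _ _ _ s φ hs hφ S hS => ?_⟩
  obtain ⟨ϖ, hϖ⟩ := IsAlgClosed.exists_pow_nat_eq s (Nat.pos_of_ne_zero hE)
  have hg : Good ε C' ϖ := hs.root hE hϖ
  refine hN K ϖ φ hg hφ S fun z hz => ?_
  have : Zset ϖ φ (fun i => PowerSeries.X ^ E * PowerSeries.expand E hE (f i)) = Zset s φ f := by
    ext u
    unfold Zset
    simp only [pev_X_pow_mul, pev_expand, hϖ, mul_eq_zero, norm_pos_iff.mp hs.pos, false_or]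
  rw [this]
  exact hS z hz

/-- There are no isolated zeros if all functions vanish identically. -/
lemma not_iso_of_zero {K : Type*} [NormedField K] [IsUltrametricDist K] {s : K} {φ : B →+* K}
    {ι : Type*} {f : ι → PowerSeries (MvPolynomial (Fin (n + 1)) B)} (h0 : 0 < ‖s‖)
    (h1 : ‖s‖ < 1)
    (h : ∀ u : Fin (n + 1) → K, (∀ i, ‖u i‖ ≤ 1) → ∀ i, pev (eval₂Hom φ u) s (f i) = 0)
    (z : Fin (n + 1) → K) : ¬ Iso (Zset s φ f) z := by
  rintro ⟨hz, hev⟩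
  have ht : Tendsto (fun k : ℕ => fun i => z i + s ^ k) atTop (𝓝 z) := by
    rw [tendsto_pi_nhds]
    intro i
    have := (tendsto_pow_atTop_nhds_zero_of_norm_lt_one h1).const_add (z i)
    rwa [add_zero] at this
  obtain ⟨k, hk1, hk2⟩ := ((ht.eventually hev).and (ht.eventually (eventually_polydisc hz.1))).exists
  have := congrFun (hk1 ⟨hk2, h _ hk2⟩) 0
  have h3 : s ^ k = 0 := by simpa using this
  exact pow_ne_zero k (norm_pos_iff.mp h0) h3

variable [Nontrivial B]

set_option maxHeartbeats 1000000 in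
/-- The induction step. The specializations fall into finitely many cases, according to the `f i`, the
weights and the monomial of degree at most `d` which is dominant after rescaling; in the remaining
case all the `f i` vanish identically. -/
lemma hasBound_normalized [Algebra ℚ B] [IsNoetherianRing B₀] (H : Claim ε n) {C : ℕ} {ι : Type}
    [Fintype ι] {f : ι → PowerSeries (MvPolynomial (Fin (n + 1)) B)}
    (hf : ∀ i k, PI B₀ ε C k k (PowerSeries.coeff k (f i))) : HasBound B₀ ε f := by
  classical
  -- The coefficients of the monomials of degree `> d` are combinations of the others.
  choose S₁ C₁ h₁ hC₁ hh₁ using fun i => exists_div (B₀ := B₀) (ε := ε)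
    (fun ν : Fin (n + 1) →₀ ℕ => ν.degree) (cof (f i)) (DI_cof (hf i))
  set D := C + ∑ i, C₁ i with hD
  have hDle : ∀ i, C₁ i ≤ D := fun i => by
    have := Finset.single_le_sum (f := C₁) (fun _ _ => Nat.zero_le _) (Finset.mem_univ i)
    omega
  set d := Finset.univ.sup fun i => (S₁ i).sup fun ν => ν.degree with hd
  have hdle : ∀ i, ∀ ν ∈ S₁ i, ν.degree ≤ d := fun i ν hν =>
    (Finset.le_sup (f := fun ν : Fin (n + 1) →₀ ℕ => ν.degree) hν).trans
      (Finset.le_sup (f := fun i => (S₁ i).sup fun ν => ν.degree) (Finset.mem_univ i))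
  set h : ι → (Fin (n + 1) →₀ ℕ) → (Fin (n + 1) →₀ ℕ) → PowerSeries B :=
    fun i ν μ => if μ ∈ S₁ i then h₁ i ν μ else 0 with hh
  have hhD : ∀ i ν, d < ν.degree → ∀ μ k,
      DI B₀ ε D (ν.degree + k) (PowerSeries.coeff k (h i ν μ)) := by
    intro i ν hν μ k
    simp only [hh]
    split_ifs
    · exact ((hh₁ i ν (by omega)).2 μ k).mono (hDle i) le_rfl
    · rw [map_zero]; exact DI.zero _ _
  have hhf : ∀ i ν, d < ν.degree →
      cof (f i) ν = ∑ μ ∈ expFinset (n + 1) d, h i ν μ * cof (f i) μ := by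
    intro i ν hν
    rw [(hh₁ i ν (by omega)).1]
    rw [← Finset.sum_subset (s₁ := S₁ i) (fun μ hμ => mem_expFinset.mpr (hdle i μ hμ))]
    · exact Finset.sum_congr rfl fun μ hμ => by simp only [hh, if_pos hμ]
    · intro μ _ hμ
      simp only [hh, if_neg hμ, zero_mul]
  set T := expFinset (n + 1) d with hT
  -- With the weights `b j = x (d + 1) ^ j`, the weighted degree of the monomial with exponent `μ` is
  -- `x * Nm μ`, and `Nm` is injective on exponents of degree at most `d`.
  set Nm : (Fin (n + 1) →₀ ℕ) → ℕ := fun μ => ∑ j, μ j * (d + 1) ^ (j : ℕ) with hNm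
  set M := T.sup Nm with hM
  set m := (2 * M + 3) * (d + 1) ^ n with hm
  have hb : ∀ (x : Fin (2 * M + 4)) (j : Fin (n + 1)), x.1 * (d + 1) ^ j.1 ≤ m := by
    intro x j
    exact Nat.mul_le_mul (by omega) (Nat.pow_le_pow_right (by omega) (by omega))
  have hfD : ∀ i k, PI B₀ ε D k k (PowerSeries.coeff k (f i)) :=
    fun i k => (hf i k).mono (by omega) le_rfl le_rfl
  choose N C' hN using fun (i : ι) (x : Fin (2 * M + 4)) (μ : T) =>
    hasBound_of_dominant H hfD i d (h i) (hhD i) (hhf i) (fun j => x.1 * (d + 1) ^ j.1) m (hb x)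
      μ.1 (mem_expFinset.mp μ.2)
  refine ⟨∑ i, ∑ x, ∑ μ, N i x μ, D + ∑ i, ∑ x, ∑ μ, C' i x μ,
    fun K _ _ _ _ s φ hs hφ S hS => ?_⟩
  have hsD : Good ε D s := hs.mono (by omega)
  have hle3 : ∀ (F : ι → Fin (2 * M + 4) → T → ℕ) i x μ, F i x μ ≤ ∑ i, ∑ x, ∑ μ, F i x μ := by
    intro F i x μ
    exact (Finset.single_le_sum (f := F i x) (fun _ _ => Nat.zero_le _) (Finset.mem_univ μ)).trans
      ((Finset.single_le_sum (f := fun x => ∑ μ, F i x μ) (fun _ _ => Nat.zero_le _)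
        (Finset.mem_univ x)).trans
      (Finset.single_le_sum (f := fun i => ∑ x, ∑ μ, F i x μ) (fun _ _ => Nat.zero_le _)
        (Finset.mem_univ i)))
  by_cases hall : ∀ i, ∀ μ ∈ T, pev φ s (cof (f i) μ) = 0
  · have hz : ∀ i ν, pev φ s (cof (f i) ν) = 0 := by
      intro i ν
      by_cases hν : ν.degree ≤ d
      · exact hall i ν (mem_expFinset.mpr hν)
      · push Not at hν
        rw [hhf i ν hν, pev_sum]
        · refine Finset.sum_eq_zero fun μ hμ => ?_
          rw [pev_mul (NS_of_DI hsD hφ (hhD i ν hν μ)) (NS_of_DI hsD hφ (DI_cof (hfD i) μ)),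
            hall i μ hμ, mul_zero]
        · intro μ _
          exact NS_of_DI hsD hφ (DI_coeff_mul (hhD i ν hν μ) (DI_cof (hfD i) μ))
    have hSe : S = ∅ := by
      refine Finset.eq_empty_of_forall_notMem fun z hz' => ?_
      refine not_iso_of_zero hs.pos hs.lt_one (fun u hu i => ?_) z (hS z hz')
      rw [pev_eq_tsum_cof (hfD i) hsD hφ hu]
      simp [hz]
    simp [hSe]
  · push Not at hall
    obtain ⟨i, μ₁, hμ₁, hne⟩ := hall
    obtain ⟨ϖ, hϖ⟩ := IsAlgClosed.exists_pow_nat_eq s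
      (show 0 < (m + 1) * (d + 1) by positivity)
    have hϖg : Good ε 0 ϖ := Good.root (L := (m + 1) * (d + 1)) (by positivity) hϖ
      (hs.mono (by omega))
    have hQ : 1 < ‖ϖ‖⁻¹ := (one_lt_inv₀ hϖg.pos).mpr hϖg.lt_one
    have hϖ0 : ‖ϖ‖ ≠ 0 := hϖg.pos.ne'
    obtain ⟨x, hx, μ₀, hpos, hgap⟩ := exists_gap (fun μ : T => Nm μ.1)
      (fun μ ν hμν => Subtype.ext (base_injective (mem_expFinset.mp μ.2) (mem_expFinset.mp ν.2)
        hμν)) M (fun μ => Finset.le_sup (f := Nm) μ.2)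
      (fun μ => ‖ϖ‖ ^ ((m + 1) * (d + 1) * μ.1.degree) * ‖pev φ s (cof (f i) μ.1)‖)
      (fun μ => by positivity) ⟨⟨μ₁, hμ₁⟩, by
        simp only [ne_eq, mul_eq_zero, norm_eq_zero, not_or]
        exact ⟨pow_ne_zero _ hϖ0, hne⟩⟩ hQ
    have hconv : ∀ μ : T, ‖ϖ‖ ^ ((m + 1) * (d + 1) * μ.1.degree) * ‖pev φ s (cof (f i) μ.1)‖ *
        ‖ϖ‖⁻¹ ^ (x * Nm μ.1) = ‖ϖ ^ wt ((m + 1) * (d + 1)) (fun j => x * (d + 1) ^ j.1) μ.1 *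
          pev φ s (cof (f i) μ.1)‖ := by
      intro μ
      have h1 := wt_add (d := d) (hb ⟨x, by omega⟩) μ.1
      have h2 : ∑ j, x * (d + 1) ^ j.1 * μ.1 j = x * Nm μ.1 := by
        rw [hNm, Finset.mul_sum]
        exact Finset.sum_congr rfl fun j _ => by ring
      simp only at h1
      rw [h2] at h1
      rw [← h1, pow_add, norm_mul, norm_pow, inv_pow]
      field_simp
    refine (hN i ⟨x, by omega⟩ μ₀ K s ϖ φ (hs.mono ?_) hφ hϖ ?_ ?_ S hS).trans
      (hle3 N i ⟨x, by omega⟩ μ₀)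
    · exact (hle3 C' i ⟨x, by omega⟩ μ₀).trans (by omega)
    · intro h0
      simp [h0] at hpos
    · intro μ hμ hμne
      have h1 := hgap ⟨μ, mem_expFinset.mpr hμ⟩ (fun h => hμne (congrArg Subtype.val h))
      rw [hconv, hconv, inv_mul_le_iff₀ hϖg.pos] at h1
      exact h1

lemma claim_succ (H : Claim ε n) : Claim ε (n + 1) := by
  intro B _ _ _ B₀ _ C ι _ f hf
  exact hasBound_of_normalized hf fun f' hf' => hasBound_normalized H hf'

theorem claim (ε n : ℕ) : Claim ε n := by
  induction n with
  | zero => exact claim_zero ε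
  | succ n ih => exact claim_succ ih

end Main

/-! ### Sparse systems as specializations of a power series family -/

/-- The falling factorial `b (b - 1) ⋯ (b - j + 1)`. -/
def desc {A : Type*} [CommRing A] (j : ℕ) (b : A) : A := ∏ i ∈ Finset.range j, (b - (i : A))

lemma desc_natCast {A : Type*} [CommRing A] (j a : ℕ) :
    desc j (a : A) = (a.descFactorial j : A) := by
  induction j with
  | zero => simp [desc]
  | succ j ih =>
    rw [desc, Finset.prod_range_succ, ← desc, ih, Nat.descFactorial_succ, Nat.cast_mul, mul_comm]
    by_cases h : j ≤ a
    · rw [Nat.cast_sub h]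
    · rw [Nat.descFactorial_of_lt (by omega)]; simp

lemma map_desc {A A' : Type*} [CommRing A] [CommRing A'] (φ : A →+* A') (j : ℕ) (b : A) :
    φ (desc j b) = desc j (φ b) := by
  simp [desc, map_prod]

section Sparse

variable {R : Type} [CommRing R] [Nontrivial R] [Algebra ℚ R] {R₀ : Subring R} {ε : ℕ}

/-- The indeterminates for the coefficients and the exponents of a sparse system. -/
abbrev Par (n m : ℕ) : Type := (Fin n × Fin m) ⊕ (Fin m × Fin n)

/-- The number `t ^ j / j!`. -/
noncomputable def kap (R : Type) [CommRing R] [Algebra ℚ R] (t j : ℕ) : R :=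
  algebraMap ℚ R ((t : ℚ) ^ j / j.factorial)

lemma PI_aeval_X {B : Type*} [CommRing B] {B₀ : Subring B} {σ : Type*} (C : ℕ) (Y : Polynomial ℤ)
    (l : σ) : PI B₀ ε C 0 Y.natDegree (Polynomial.aeval (X l : MvPolynomial σ B) Y) := by
  rw [Polynomial.aeval_eq_sum_range]
  refine PI.sum fun j hj => ?_
  have h1 : (Y.coeff j) • (X l : MvPolynomial σ B) ^ j =
      MvPolynomial.C ((Y.coeff j : ℤ) : B) * X l ^ j := by
    rw [zsmul_eq_mul, map_intCast]
  rw [h1]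
  have h2 := (PI.C (σ := σ) (ε := ε) (C := C) (m := 0)
    (DI.of_mem (k := 0) (intCast_mem B₀ (Y.coeff j)))).mul
    ((PI.X (B₀ := B₀) (ε := ε) C 0 l).pow j)
  refine h2.mono le_rfl le_rfl ?_
  have := Finset.mem_range.mp hj
  omega

/-- The series `∑ (t ^ j / j!) α (α - 1) ⋯ (α - j + 1) Y(X l) ^ j s ^ j` with an indeterminate
exponent `α`; its value is `(1 + t s Y(X l)) ^ α`. -/
noncomputable def powSeries (R : Type) [CommRing R] [Algebra ℚ R] {n m : ℕ} (t : ℕ)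
    (Y : Polynomial ℤ) (k : Fin m) (l : Fin n) :
    PowerSeries (MvPolynomial (Fin n) (MvPolynomial (Par n m) R)) :=
  PowerSeries.mk fun j =>
    C (C (kap R t j) * desc j (X (Sum.inr (k, l)))) * (Polynomial.aeval (X l) Y) ^ j

lemma powSeries_mem {n m : ℕ} {t : ℕ} (ht : ∀ j, DI R₀ ε 1 j (kap R t j)) (Y : Polynomial ℤ)
    (k : Fin m) (l : Fin n) :
    powSeries R t Y k l ∈ Lat (polySub R₀ (Par n m)) ε 1 (Fin n) := by
  refine ⟨Y.natDegree, fun j => ?_⟩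
  rw [powSeries, PowerSeries.coeff_mk]
  have h1 : DI (polySub R₀ (Par n m)) ε 1 (j + 0)
      (C (kap R t j) * desc j (X (Sum.inr (k, l))) : MvPolynomial (Par n m) R) :=
    (ht j).C_polySub.mul (DI.of_mem (Subring.prod_mem _ fun i _ =>
      Subring.sub_mem _ (X_mem_polySub _) (natCast_mem _ _)))
  refine ((PI.C (m := 0) h1).mul ((PI_aeval_X 1 Y l).pow j)).mono le_rfl (by omega) ?_
  nlinarith

lemma linSeries_mem {B : Type*} [CommRing B] {B₀ : Subring B} {n : ℕ} (C : ℕ) (l : Fin n) :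
    (1 + PowerSeries.X ^ 1 * PowerSeries.C (X l) : PowerSeries (MvPolynomial (Fin n) B)) ∈
      Lat B₀ ε C (Fin n) := by
  refine Subring.add_mem _ (Subring.one_mem _) ⟨1, fun k => ?_⟩
  rw [PowerSeries.coeff_X_pow_mul']
  split_ifs with hk
  · rw [PowerSeries.coeff_C]
    split_ifs
    · exact (PI.X C k l).mono le_rfl le_rfl (by omega)
    · exact PI.zero _ _ _
  · exact PI.zero _ _ _

lemma coefSeries_mem {n m : ℕ} (C : ℕ) (i : Fin n) (k : Fin m) :
    (PowerSeries.C (MvPolynomial.C (X (Sum.inl (i, k)))) :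
      PowerSeries (MvPolynomial (Fin n) (MvPolynomial (Par n m) R))) ∈
      Lat (polySub R₀ (Par n m)) ε C (Fin n) :=
  C_mem_Lat (m := 0) (PI.C (DI.of_mem (X_mem_polySub _)))

variable {K : Type} [NormedField K]

lemma pev_powSeries {n m : ℕ} {t : ℕ} {Y : Polynomial ℤ} {k : Fin m} {l : Fin n} {s : K}
    {ρ : R →+* K} {w : Par n m → K} {a : ℕ} (hw : w (Sum.inr (k, l)) = a) (u : Fin n → K) :
    pev (eval₂Hom (eval₂Hom ρ w) u) s (powSeries R t Y k l) =
      (1 + t * s * Polynomial.aeval (u l) Y) ^ a := by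
  have hκ : ∀ j, ρ (kap R t j) * (j.factorial : K) = (t : K) ^ j := by
    intro j
    have h1 : kap R t j * (j.factorial : R) = (t : R) ^ j := by
      rw [kap, ← map_natCast (algebraMap ℚ R), ← map_mul,
        div_mul_cancel₀ _ (by exact_mod_cast Nat.factorial_ne_zero j)]
      simp
    have := congrArg ρ h1
    simpa using this
  have haev : eval₂Hom (eval₂Hom ρ w) u (Polynomial.aeval (X l) Y) = Polynomial.aeval (u l) Y := by
    rw [Polynomial.aeval_def, Polynomial.hom_eval₂, Polynomial.aeval_def]
    congr 1
    · exact RingHom.ext_int _ _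
    · simp
  have hterm : ∀ j, eval₂Hom (eval₂Hom ρ w) u (PowerSeries.coeff j (powSeries R t Y k l)) * s ^ j =
      (t * s * Polynomial.aeval (u l) Y) ^ j * (a.choose j : K) := by
    intro j
    rw [powSeries, PowerSeries.coeff_mk, map_mul, map_pow, haev, coe_eval₂Hom, eval₂_C, map_mul,
      map_desc, coe_eval₂Hom, eval₂_C, eval₂_X, hw, desc_natCast,
      Nat.descFactorial_eq_factorial_mul_choose, Nat.cast_mul, ← mul_assoc, hκ]
    ring
  unfold pev
  simp only [hterm]
  rw [tsum_eq_sum (s := Finset.range (a + 1)), add_comm (1 : K), add_pow]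
  · simp
  · intro j hj
    rw [Nat.choose_eq_zero_of_lt (by simpa using hj)]
    simp

/-- Uniform finiteness for the sparse systems of a given shape. The hypothesis on `Y` reduces the
powers with arbitrary exponents to those of elements close enough to `1`. -/
theorem sparse_bound [IsNoetherianRing R₀] {t P : ℕ} (hP : 0 < P)
    (ht : ∀ j, DI R₀ ε 1 j (kap R t j)) (Y : Polynomial ℤ) (n m : ℕ) :
    ∃ N C' : ℕ, ∀ (K : Type) [NormedField K] [IsUltrametricDist K] [CompleteSpace K]
      [IsAlgClosed K] (s : K) (ρ : R →+* K), Good ε C' s → (∀ b ∈ R₀, ‖ρ b‖ ≤ 1) →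
      (∀ u : K, (1 + s * u) ^ P = 1 + t * s * Polynomial.aeval u Y) →
      ∀ (c : Fin n → Fin m → K), (∀ i k, ‖c i k‖ ≤ 1) → ∀ (a : Fin m → Fin n → ℕ)
      (S : Finset (Fin n → K)), (∀ z ∈ S, Iso {u | (∀ i, ‖u i‖ ≤ 1) ∧
        ∀ i, ∑ k, c i k * ∏ l, (1 + s * u l) ^ a k l = 0} z) → S.card ≤ N := by
  classical
  set B := MvPolynomial (Par n m) R with hB
  set B₀ := polySub R₀ (Par n m) with hB₀
  -- The exponents are written as `a = a % P + P * (a / P)`; the family depends on the remainders `r`,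
  -- and the quotients are specializations of indeterminates.
  set F : (Fin m → Fin n → Fin P) → Fin n → Lat B₀ ε 1 (Fin n) := fun r i =>
    ∑ k, ⟨_, coefSeries_mem 1 i k⟩ * ∏ l, ((⟨_, linSeries_mem 1 l⟩ : Lat B₀ ε 1 (Fin n)) ^
      (r k l).1 * ⟨_, powSeries_mem ht Y k l⟩) with hF
  choose N C' hN using fun r => claim ε n B B₀ 1 (Fin n) (fun i => (F r i).1) (fun i => (F r i).2)
  refine ⟨∑ r, N r, 1 + ∑ r, C' r, fun K _ _ _ _ s ρ hs hρ hY c hc a S hS => ?_⟩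
  set r : Fin m → Fin n → Fin P := fun k l => ⟨a k l % P, Nat.mod_lt _ hP⟩ with hr
  set w : Par n m → K := Sum.elim (fun x => c x.1 x.2) fun x => ((a x.1 x.2 / P : ℕ) : K) with hw
  have hw1 : ∀ x, ‖w x‖ ≤ 1 := by
    rintro (x | x)
    · exact hc _ _
    · exact IsUltrametricDist.norm_natCast_le_one K _
  have hφ : ∀ b ∈ B₀, ‖eval₂Hom ρ w b‖ ≤ 1 := fun b hb => norm_eval₂Hom_polySub_le hρ hw1 hb
  have hs1 : Good ε 1 s := hs.mono (by omega)
  have hval : ∀ u : Fin n → K, (∀ i, ‖u i‖ ≤ 1) → ∀ i,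
      pev (eval₂Hom (eval₂Hom ρ w) u) s (F r i).1 = ∑ k, c i k * ∏ l, (1 + s * u l) ^ a k l := by
    intro u hu i
    change evHom hs1 hφ hu (F r i) = _
    simp only [hF, map_sum, map_mul, map_prod, map_pow]
    refine Finset.sum_congr rfl fun k _ => ?_
    congr 1
    · change pev _ _ _ = _
      rw [pev_C]; simp [hw]
    · refine Finset.prod_congr rfl fun l _ => ?_
      have h1 : evHom hs1 hφ hu (⟨_, linSeries_mem 1 l⟩ : Lat B₀ ε 1 (Fin n)) = 1 + s * u l := by
        have e : (⟨_, linSeries_mem 1 l⟩ : Lat B₀ ε 1 (Fin n)) = 1 + ⟨_, Subring.sub_mem _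
            (linSeries_mem (B₀ := B₀) (ε := ε) 1 l) (Subring.one_mem _)⟩ := by
          ext1; simp
        rw [e, map_add, map_one]
        congr 1
        change pev _ _ (1 + PowerSeries.X ^ 1 * PowerSeries.C (X l) - 1) = _
        rw [add_sub_cancel_left, pev_X_pow_mul, pev_C]
        simp
      have h2 : evHom hs1 hφ hu (⟨_, powSeries_mem ht Y k l⟩ : Lat B₀ ε 1 (Fin n)) =
          (1 + t * s * Polynomial.aeval (u l) Y) ^ (a k l / P) :=
        pev_powSeries (by simp [hw]) u
      rw [h1, h2, ← hY, ← pow_mul, ← pow_add, Nat.mod_add_div]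
  have hle : ∀ (f : (Fin m → Fin n → Fin P) → ℕ), f r ≤ ∑ r, f r := fun f =>
    Finset.single_le_sum (f := f) (fun _ _ => Nat.zero_le _) (Finset.mem_univ r)
  refine (hN r K s (eval₂Hom ρ w) (hs.mono ((hle C').trans (by omega))) hφ S
    fun z hz => ?_).trans (hle N)
  have hZ : Zset s (eval₂Hom ρ w) (fun i => (F r i).1) = {u | (∀ i, ‖u i‖ ≤ 1) ∧
        ∀ i, ∑ k, c i k * ∏ l, (1 + s * u l) ^ a k l = 0} := by
    ext u
    refine and_congr_right fun hu => forall_congr' fun i => ?_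
    rw [hval u hu i]
  rw [hZ]
  exact hS z hz

end Sparse

/-! ### The `p`-adic estimates -/

section Padic

variable {p : ℕ} [hp : Fact p.Prime]

lemma norm_factorial (N : ℕ) :
    ‖(N.factorial : ℚ_[p])‖ = ‖(p : ℚ_[p])‖ ^ padicValNat p N.factorial := by
  have h0 : (N.factorial : ℚ_[p]) ≠ 0 := by exact_mod_cast Nat.factorial_ne_zero N
  rw [Padic.norm_eq_zpow_neg_valuation h0, Padic.valuation_natCast, Padic.norm_p, zpow_neg,
    zpow_natCast, inv_pow]

/-- Legendre's bound `(p - 1) v_p(N!) ≤ N`. -/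
lemma legendre_le (N : ℕ) : (p - 1) * padicValNat p N.factorial ≤ N := by
  have h2 := sub_one_mul_padicValNat_factorial (p := p) N
  omega

lemma norm_p_pow_le {v w : ℕ} (h : v ≤ w) : ‖(p : ℚ_[p])‖ ^ w ≤ ‖(p : ℚ_[p])‖ ^ v :=
  pow_le_pow_of_le_one (norm_nonneg _) Padic.norm_p_lt_one.le h

/-- For `p > 2 C`, Legendre's bound shows that `p ^ k` absorbs the square of `(C k)!`. -/
lemma good_of_large {Cp : Type} [NormedField Cp] [Algebra ℚ_[p] Cp]
    (hi : Isometry (algebraMap ℚ_[p] Cp)) {C : ℕ} (hC : 2 * C + 1 ≤ p) :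
    Good 1 C (p : Cp) := by
  have hnorm : ∀ k : ℕ, ‖(k : Cp)‖ = ‖(k : ℚ_[p])‖ := fun k => by
    rw [← map_natCast (algebraMap ℚ_[p] Cp), hi.norm_map_of_map_zero (map_zero _)]
  refine ⟨?_, ?_, fun k => ?_⟩
  · rw [hnorm, norm_pos_iff]; exact_mod_cast hp.out.ne_zero
  · rw [hnorm]; exact Padic.norm_p_lt_one
  · rw [hnorm, hnorm, den, pow_one]
    rw [norm_factorial, ← pow_mul]
    refine norm_p_pow_le ?_
    have h1 := legendre_le (p := p) (C * k)
    rcases Nat.eq_zero_or_pos C with rfl | hC0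
    · simp
    have h2 : 2 * C ≤ p - 1 := by omega
    have h3 : C * (padicValNat p (C * k).factorial * 2) ≤ C * k := by
      calc C * (padicValNat p (C * k).factorial * 2)
          = 2 * C * padicValNat p (C * k).factorial := by ring
        _ ≤ (p - 1) * padicValNat p (C * k).factorial := Nat.mul_le_mul_right _ h2
        _ ≤ C * k := h1
    exact Nat.le_of_mul_le_mul_left h3 hC0

lemma good_single {Cp : Type} [NormedField Cp] [Algebra ℚ_[p] Cp]
    (hi : Isometry (algebraMap ℚ_[p] Cp)) (C : ℕ) : Good 0 C (p : Cp) := by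
  have hnorm : ∀ k : ℕ, ‖(k : Cp)‖ = ‖(k : ℚ_[p])‖ := fun k => by
    rw [← map_natCast (algebraMap ℚ_[p] Cp), hi.norm_map_of_map_zero (map_zero _)]
  refine ⟨?_, ?_, fun k => ?_⟩
  · rw [hnorm, norm_pos_iff]; exact_mod_cast hp.out.ne_zero
  · rw [hnorm]; exact Padic.norm_p_lt_one
  · rw [hnorm, hnorm, den, pow_zero]
    simpa using pow_le_one₀ (n := k) (norm_nonneg (p : ℚ_[p])) Padic.norm_p_lt_one.le

/-- `(1 + pX)^p = 1 + p² Y` for an integer polynomial `Y`. -/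
lemma exists_pow_eq (p : ℕ) : ∃ Y : Polynomial ℤ,
    (1 + (p : Polynomial ℤ) * Polynomial.X) ^ p = 1 + (p : Polynomial ℤ) * (p : Polynomial ℤ) * Y := by
  have h := dvd_sub_pow_of_dvd_sub (p := p) (a := 1 + (p : Polynomial ℤ) * Polynomial.X) (b := 1)
    ⟨Polynomial.X, by ring⟩ 1
  obtain ⟨Y, hY⟩ := h
  refine ⟨Y, ?_⟩
  simp only [pow_one, one_pow] at hY
  rw [sub_eq_iff_eq_add] at hY
  rw [hY]; ring

lemma DI_kap_padic (j : ℕ) : DI (PadicInt.subring p) 0 1 j (kap ℚ_[p] p j) := by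
  rw [DI, PadicInt.mem_subring_iff, den, pow_zero, Nat.cast_one, one_mul, kap]
  simp only [map_div₀, map_pow, map_natCast, norm_div, norm_pow]
  refine div_le_one_of_le₀ ?_ (norm_nonneg _)
  rw [norm_factorial]
  refine norm_p_pow_le ?_
  have h1 := legendre_le (p := p) j
  have h2 := hp.out.two_le
  have h3 : 1 ≤ p - 1 := by omega
  nlinarith

lemma DI_kap_rat (j : ℕ) : DI (Int.castRingHom ℚ).range 1 1 j (kap ℚ 1 j) := by
  refine ⟨1, ?_⟩
  have : (j.factorial : ℚ) ≠ 0 := by exact_mod_cast Nat.factorial_ne_zero j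
  simp [den, kap, this]

end Padic

/-- The bound on all systems of `n` sums of `m` powers in the coordinates `x = 1 + s u`. -/
def SparseBoundAt (K : Type) [NormedField K] (s : K) (n m N : ℕ) : Prop :=
  ∀ (c : Fin n → Fin m → K), (∀ i k, ‖c i k‖ ≤ 1) →
    ∀ (a : Fin m → Fin n → ℕ) (S : Finset (Fin n → K)),
      (∀ z ∈ S, Iso {u | (∀ i, ‖u i‖ ≤ 1) ∧
        ∀ i, ∑ k, c i k * ∏ l, (1 + s * u l) ^ a k l = 0} z) → S.card ≤ N

/-- One bound valid for all sufficiently large primes. -/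
lemma sparseBoundAt_large (n m : ℕ) : ∃ N C : ℕ, ∀ (p : ℕ) [Fact p.Prime], 2 * C + 1 ≤ p →
    ∀ (K : Type) [NormedField K] [IsUltrametricDist K] [CompleteSpace K] [IsAlgClosed K]
      [Algebra ℚ_[p] K], Isometry (algebraMap ℚ_[p] K) → SparseBoundAt K (p : K) n m N := by
  obtain ⟨N, C, h⟩ := sparse_bound (R := ℚ) (R₀ := (Int.castRingHom ℚ).range) (ε := 1) (t := 1)
    (P := 1) one_pos DI_kap_rat Polynomial.X n m
  refine ⟨N, C, fun p _ hC K _ _ _ _ _ hi => ?_⟩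
  refine h K p ((algebraMap ℚ_[p] K).comp (algebraMap ℚ ℚ_[p])) (good_of_large hi hC) ?_ ?_
  · rintro _ ⟨b, rfl⟩
    simpa using IsUltrametricDist.norm_intCast_le_one K b
  · intro u
    simp

/-- A bound for a single prime. -/
lemma sparseBoundAt_single (p : ℕ) [Fact p.Prime] (n m : ℕ) : ∃ N : ℕ,
    ∀ (K : Type) [NormedField K] [IsUltrametricDist K] [CompleteSpace K] [IsAlgClosed K]
      [Algebra ℚ_[p] K], Isometry (algebraMap ℚ_[p] K) → SparseBoundAt K (p : K) n m N := by
  obtain ⟨Y, hY⟩ := exists_pow_eq p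
  haveI : IsNoetherianRing (PadicInt.subring p) := inferInstanceAs (IsNoetherianRing ℤ_[p])
  obtain ⟨N, C, h⟩ := sparse_bound (R := ℚ_[p]) (R₀ := PadicInt.subring p) (ε := 0) (t := p)
    (P := p) (Fact.out : p.Prime).pos DI_kap_padic Y n m
  refine ⟨N, fun K _ _ _ _ _ hi => ?_⟩
  refine h K p (algebraMap ℚ_[p] K) (good_single hi C) ?_ ?_
  · intro b hb
    rw [hi.norm_map_of_map_zero (map_zero _)]
    exact (PadicInt.mem_subring_iff p).mp hb
  · intro u
    have := congrArg (Polynomial.aeval u) hY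
    simpa using this

lemma iso_of_isIsolatedRoot {F : Type*} [NormedField F] {k n : ℕ}
    {G : Fin k → MvPolynomial (Fin n) F} {ζ : Fin n → F} (h : IsIsolatedRoot G ζ) :
    Iso (zeroSet G) ζ := by
  refine ⟨h.1, ?_⟩
  have h1 : ∀ᶠ w in 𝓝[zeroSet G \ {ζ}] ζ, False := by rw [h.2]; exact Filter.eventually_bot
  rw [eventually_nhdsWithin_iff] at h1
  filter_upwards [h1] with w hw hwZ
  by_contra hne
  exact hw ⟨hwZ, hne⟩

/-- Dividing a nonzero polynomial by a coefficient of maximal norm. -/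
lemma exists_max_coeff {K : Type*} [NormedField K] {σ : Type*} {g : MvPolynomial σ K}
    (hg : g ≠ 0) : ∃ D : K, D ≠ 0 ∧ ∀ a, ‖g.coeff a / D‖ ≤ 1 := by
  obtain ⟨b, hb, hmax⟩ := Finset.exists_max_image g.support (fun a => ‖g.coeff a‖)
    (MvPolynomial.support_nonempty.mpr hg)
  have hb0 := MvPolynomial.mem_support_iff.mp hb
  refine ⟨g.coeff b, hb0, fun a => ?_⟩
  rw [norm_div]
  refine div_le_one_of_le₀ ?_ (norm_nonneg _)
  by_cases ha : a ∈ g.support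
  · exact hmax a ha
  · rw [MvPolynomial.notMem_support_iff.mp ha, norm_zero]; exact norm_nonneg _

/-- The number of isolated roots near `(1, …, 1)` of a sparse system, from the bound in the
coordinates `x = 1 + s u`. -/
lemma finite_of_sparseBoundAt {K : Type} [NormedField K] {s : K} (hs : s ≠ 0) {n m N : ℕ}
    (hN : SparseBoundAt K s n m N) {G : Fin n → MvPolynomial (Fin n) K}
    (hG : IsSparseSystem G m) :
    {x : Fin n → K | IsIsolatedRoot G x ∧ ∀ i, ‖x i - 1‖ ≤ ‖s‖}.Finite ∧
    {x : Fin n → K | IsIsolatedRoot G x ∧ ∀ i, ‖x i - 1‖ ≤ ‖s‖}.ncard ≤ N := by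
  classical
  obtain ⟨hG0, hm⟩ := hG
  set U := Finset.univ.biUnion fun i => (G i).support with hU
  set A := {x : Fin n → K | IsIsolatedRoot G x ∧ ∀ i, ‖x i - 1‖ ≤ ‖s‖} with hA
  let e : U ≃ Fin m := Finset.equivFinOfCardEq hm
  choose D hD0 hD using fun i => exists_max_coeff (hG0 i)
  have heval : ∀ i (x : Fin n → K),
      ∑ k, (G i).coeff (e.symm k).1 / D i * ∏ l, x l ^ (e.symm k).1 l = eval x (G i) / D i := by
    intro i x
    rw [MvPolynomial.eval_eq', Finset.sum_div,
      Finset.sum_subset (Finset.subset_biUnion_of_mem (fun i => (G i).support)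
        (Finset.mem_univ i)) (fun a _ ha => by
          rw [MvPolynomial.notMem_support_iff.mp ha, zero_mul, zero_div]),
      ← Finset.sum_coe_sort (Finset.univ.biUnion fun i => (G i).support), e.symm.sum_comp
        (fun a : U => (G i).coeff a.1 / D i * ∏ l, x l ^ a.1 l)]
    exact Finset.sum_congr rfl fun a _ => by ring
  let ψ : (Fin n → K) → Fin n → K := fun u l => 1 + s * u l
  let θ : (Fin n → K) → Fin n → K := fun x l => (x l - 1) / s
  have hψθ : ∀ x, ψ (θ x) = x := fun x => by
    funext l; simp only [ψ, θ]; field_simp; ring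
  have hθψ : ∀ u, θ (ψ u) = u := fun u => by
    funext l; simp only [ψ, θ]; field_simp; ring
  have hψc : Continuous ψ := by fun_prop
  have key : ∀ S : Finset (Fin n → K), (∀ x ∈ S, x ∈ A) → S.card ≤ N := by
    intro S hS
    have h1 := hN (fun i k => (G i).coeff (e.symm k).1 / D i) (fun i k => hD i _)
      (fun k l => (e.symm k).1 l) (S.image θ) (fun z hz => by
        obtain ⟨x, hx, rfl⟩ := Finset.mem_image.mp hz
        obtain ⟨hx1, hx2⟩ := hS x hx
        refine Iso.transfer (ψ := ψ) (Z := zeroSet G) (Function.LeftInverse.injective hθψ)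
          hψc.continuousAt ⟨fun i => ?_, fun i => ?_⟩ (Filter.Eventually.of_forall fun u hu i => ?_)
          (by rw [hψθ]; exact iso_of_isIsolatedRoot hx1)
        · simp only [θ, norm_div]
          exact div_le_one_of_le₀ (hx2 i) (norm_nonneg _)
        · have h2 := heval i (ψ (θ x))
          rw [hψθ x, hx1.1 i, zero_div, ← hψθ x] at h2
          exact h2
        · have h2 := (heval i (ψ u)).symm.trans (hu.2 i)
          exact (div_eq_zero_iff.mp h2).resolve_right (hD0 i))
    rwa [Finset.card_image_of_injective _ (Function.LeftInverse.injective hψθ)] at h1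
  have hfin : A.Finite := by
    by_contra hinf
    obtain ⟨S, hSA, hc⟩ := Set.Infinite.exists_subset_card_eq hinf (N + 1)
    have := key S (fun x hx => hSA hx)
    omega
  refine ⟨hfin, ?_⟩
  rw [Set.ncard_eq_toFinset_card A hfin]
  exact key _ fun x hx => hfin.mem_toFinset.mp hx

end Lipshitz

/-- **Lipshitz's Theorem.** There is a constant `β'(n,m)`, independent of the prime `p`, such
that any `n × n` `m`-sparse polynomial system over `ℂ_p` has at most `β'(n,m)` isolated roots
`x ∈ ℂ_pⁿ` with `|xᵢ - 1|_p ≤ 1/p` for all `i`. -/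
theorem lipshitz_sparse_bound : ∃ β' : ℕ × ℕ → ℕ, LipshitzBound β' := by
  classical
  choose N0 C0 h0 using Lipshitz.sparseBoundAt_large
  choose N1 h1 using Lipshitz.sparseBoundAt_single
  -- Primes `p > 2 C0` share the bound `N0`; each of the finitely many others has its own.
  let β (n m p : ℕ) : ℕ := if h : p.Prime then @N1 p ⟨h⟩ n m else 0
  refine ⟨fun nm => N0 nm.1 nm.2 + ∑ p ∈ Finset.range (2 * C0 nm.1 nm.2 + 1), β nm.1 nm.2 p, ?_⟩
  intro p hp Cp _ _ _ _ _ hi _ n m G hG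
  have hnorm : ‖(p : Cp)‖ = 1 / (p : ℝ) := by
    rw [← map_natCast (algebraMap ℚ_[p] Cp), hi.norm_map_of_map_zero (map_zero _), Padic.norm_p,
      one_div]
  have hs : (p : Cp) ≠ 0 := by
    rw [← norm_pos_iff, hnorm]
    have := hp.out.pos
    positivity
  rw [← hnorm]
  rcases le_or_gt (2 * C0 n m + 1) p with hlarge | hsmall
  · obtain ⟨hf, hc⟩ := Lipshitz.finite_of_sparseBoundAt hs (h0 n m p hlarge Cp hi) hG
    refine ⟨hf, ?_⟩
    exact_mod_cast hc.trans (Nat.le_add_right _ _)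
  · obtain ⟨hf, hc⟩ := Lipshitz.finite_of_sparseBoundAt hs (h1 p n m Cp hi) hG
    refine ⟨hf, ?_⟩
    have h2 : β n m p ≤ ∑ q ∈ Finset.range (2 * C0 n m + 1), β n m q :=
      Finset.single_le_sum (f := β n m) (fun _ _ => Nat.zero_le _) (Finset.mem_range.mpr hsmall)
    have h3 : β n m p = N1 p n m := dif_pos hp.out
    rw [h3] at h2
    exact_mod_cast (hc.trans h2).trans (Nat.le_add_left _ _)
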